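/- arXiv:1506.06304 — 3 statements merged into one kernel-verified Lean document; each statement's English description precedes it below -/
import Mathlib

section
/- For any constants v_+ > v_− > 0, u_− > u_+ and s > 0 satisfying the Rankine–Hugoniot conditions and the entropy condition u_+ < u_−, there exists a 2-viscous shock wave (V, U) connecting (v_−, u_−) to (v_+, u_+), unique up to translation of the argument, and it satisfies for all ξ ∈ ℝ: v_− < V(ξ) < v_+, u_+ < U(ξ) < u_−, h(V(ξ)) > 0 and V′(ξ) = V(ξ)h(V(ξ))/(sμ) > 0. Moreover there is a constant C > 0 such that |V(ξ) − v_+| + |U(ξ) − u_+| ≤ Cδe^{−c_+ξ} and |V′(ξ)| + |U′(ξ)| + |V″(ξ)| + |U″(ξ)| ≤ Cδ²e^{−c_+ξ} for all ξ ≥ 0, and |V(ξ) − v_−| + |U(ξ) − u_−| ≤ Cδe^{c_−ξ} and |V′(ξ)| + |U′(ξ)| + |V″(ξ)| + |U″(ξ)| ≤ Cδ²e^{c_−ξ} for all ξ ≤ 0, where c_± = v_±|p′(v_±) + s²|/(sμ) > 0. If v_− and v_+ are regarded as fixed, C can be chosen depending only on γ, μ, v_±, and both c_±/δ and δ/c_±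 are bounded above by constants depending only on γ, μ, v_±. -/
open Real Filter

/-- A 2-viscous shock wave profile connecting `(vm, um)` to `(vp, up)` with speed `s`,
for the pressure `p(v) = v^(−γ)` and viscosity `μ`. -/
def IsShockProfile (γ μ vm vp um up s : ℝ) (V U : ℝ → ℝ) : Prop :=
  ContDiff ℝ 2 V ∧ ContDiff ℝ 2 U ∧
  (∀ ξ, 0 < V ξ) ∧
  (∀ ξ, U ξ - up = -(s * (V ξ - vp))) ∧
  (∀ ξ, U ξ - um = -(s * (V ξ - vm))) ∧
  (∀ ξ, s * μ * deriv V ξ / V ξ =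
    -(s ^ 2 * (V ξ - vm)) - (V ξ ^ (-γ) - vm ^ (-γ))) ∧
  Tendsto V atBot (nhds vm) ∧ Tendsto V atTop (nhds vp)

lemma vsw_exists_sol {a b m M : ℝ} {f : ℝ → ℝ} (hab : a < b) (hf : ContinuousOn f (Set.Ioo a b))
    (hm : 0 < m) (h1 : ∀ v ∈ Set.Ioo a b, m * ((v - a) * (b - v)) ≤ f v)
    (h2 : ∀ v ∈ Set.Ioo a b, f v ≤ M * ((v - a) * (b - v))) :
    ∃ V : ℝ → ℝ, ∀ ξ, V ξ ∈ Set.Ioo a b ∧ HasDerivAt V (f (V ξ)) ξ := by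
  set φ : ℝ → ℝ := fun t => a + (b - a) * sigmoid t with hφ
  have hd : 0 < b - a := sub_pos.2 hab
  have hφm : ∀ t, φ t ∈ Set.Ioo a b := by
    intro t
    have h0 := sigmoid_pos t
    have h1 := sigmoid_lt_one t
    constructor
    · simp only [hφ]; nlinarith
    · simp only [hφ]; nlinarith
  have hφd : ∀ t, HasDerivAt φ ((b - a) * (sigmoid t * (1 - sigmoid t))) t := fun t =>
    ((hasDerivAt_sigmoid t).const_mul _).const_add _
  have hφc : Continuous φ := by
    have := continuous_sigmoid
    simp only [hφ]; fun_prop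
  have hfp : ∀ t, 0 < f (φ t) := fun t => by
    have h := hφm t
    have := h1 _ h
    have : 0 < m * ((φ t - a) * (b - φ t)) :=
      mul_pos hm (mul_pos (sub_pos.2 h.1) (sub_pos.2 h.2))
    linarith
  have hfc : Continuous fun t => f (φ t) := hf.comp_continuous hφc hφm
  set g : ℝ → ℝ := fun t => (b - a) * (sigmoid t * (1 - sigmoid t)) with hg
  have hgp : ∀ t, 0 < g t := fun t =>
    mul_pos hd (mul_pos (sigmoid_pos t) (sub_pos.2 (sigmoid_lt_one t)))
  have hgc : Continuous g := by
    have := continuous_sigmoid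
    simp only [hg]; fun_prop
  have hgφ : ∀ t, (φ t - a) * (b - φ t) = (b - a) * g t := fun t => by simp only [hg, hφ]; ring
  set w : ℝ → ℝ := fun t => g t / f (φ t) with hw
  have hwc : Continuous w := hgc.div hfc fun t => (hfp t).ne'
  have hwp : ∀ t, 0 < w t := fun t => div_pos (hgp t) (hfp t)
  have hM : 0 < M := by
    have h := h2 _ (hφm 0)
    rw [hgφ] at h
    have h3 := hfp 0
    have h4 : 0 < (b - a) * g 0 := mul_pos hd (hgp 0)
    by_contra hM
    nlinarith
  set w0 := 1 / (M * (b - a)) with hw0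
  have hw0p : 0 < w0 := by positivity
  have hww : ∀ t, w0 ≤ w t := fun t => by
    have h := h2 _ (hφm t)
    rw [hgφ] at h
    rw [hw0, hw, div_le_div_iff₀ (by positivity) (hfp t)]
    nlinarith
  set W : ℝ → ℝ := fun t => ∫ x in (0:ℝ)..t, w x with hW
  have hWd : ∀ t, HasDerivAt W (w t) t := fun t => hwc.integral_hasStrictDerivAt 0 t |>.hasDerivAt
  have hWm : StrictMono W := strictMono_of_deriv_pos fun t => by rw [(hWd t).deriv]; exact hwp t
  have hWc : Continuous W := continuous_iff_continuousAt.2 fun t => (hWd t).continuousAt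
  have hW0 : W 0 = 0 := by simp [hW]
  have hmono : Monotone fun t => W t - w0 * t := by
    have hd' : ∀ t, HasDerivAt (fun t => W t - w0 * t) (w t - w0) t := fun t => by
      exact ((hWd t).sub ((hasDerivAt_id t).const_mul w0)).congr_deriv (by simp)
    refine monotone_of_deriv_nonneg (fun t => (hd' t).differentiableAt) fun t => ?_
    rw [(hd' t).deriv]; linarith [hww t]
  have hsurj : Function.Surjective W := by
    refine hWc.surjective ?_ ?_
    · refine tendsto_atTop_mono' _ ?_ (tendsto_id.const_mul_atTop hw0p)
      filter_upwards [eventually_ge_atTop 0] with t ht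
      have := hmono ht
      simp only [hW0] at this
      simp only [id]; linarith
    · refine tendsto_atBot_mono' _ ?_ (tendsto_id.const_mul_atBot hw0p)
      filter_upwards [eventually_le_atBot 0] with t ht
      have := hmono ht
      simp only [hW0] at this
      simp only [id]; linarith
  let e := hWm.orderIsoOfSurjective W hsurj
  have he : ∀ x, W (e.symm x) = x := fun x => e.apply_symm_apply x
  have hT : ∀ x, HasDerivAt e.symm (w (e.symm x))⁻¹ x := fun x =>
    HasDerivAt.of_local_left_inverse e.symm.continuous.continuousAt (hWd _) (hwp _).ne'
      (Eventually.of_forall he)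
  refine ⟨fun x => φ (e.symm x), fun x => ⟨hφm _, ?_⟩⟩
  have := (hφd (e.symm x)).comp x (hT x)
  refine this.congr_deriv ?_
  have h5 := (hgp (e.symm x)).ne'
  have h6 := (hfp (e.symm x)).ne'
  change g (e.symm x) * (g (e.symm x) / f (φ (e.symm x)))⁻¹ = _
  field_simp

lemma vsw_decay {a b m K c : ℝ} {V V' : ℝ → ℝ} (hm : 0 < m) (hK : 0 ≤ K)
    (hV : ∀ ξ, V ξ ∈ Set.Ioo a b) (hd : ∀ ξ, HasDerivAt V (V' ξ) ξ)
    (h1 : ∀ ξ, m * ((V ξ - a) * (b - V ξ)) ≤ V' ξ)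
    (h2 : ∀ ξ, c * (b - V ξ) - K * (b - V ξ) ^ 2 ≤ V' ξ) :
    ∃ A > 0, ∀ ξ, 0 ≤ ξ → b - V ξ ≤ A * exp (-(c * ξ)) := by
  have hp : ∀ ξ, 0 ≤ V' ξ := fun ξ => by
    have h := hV ξ
    have : 0 < m * ((V ξ - a) * (b - V ξ)) :=
      mul_pos hm (mul_pos (sub_pos.2 h.1) (sub_pos.2 h.2))
    linarith [h1 ξ]
  have hmono : Monotone V := monotone_of_deriv_nonneg (fun t => (hd t).differentiableAt)
    fun t => by rw [(hd t).deriv]; exact hp t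
  set k := m * (V 0 - a) with hk
  have hkp : 0 < k := mul_pos hm (sub_pos.2 (hV 0).1)
  have hE : ∀ ξ, HasDerivAt (fun ξ => log (b - V ξ) + c * ξ - K / k * V ξ)
      (-V' ξ / (b - V ξ) + c - K / k * V' ξ) ξ := fun ξ => by
    have h3 := ((hd ξ).const_sub b).log (sub_pos.2 (hV ξ).2).ne'
    have h4 := (hasDerivAt_id ξ).const_mul c
    have := (h3.add h4).sub ((hd ξ).const_mul (K / k))
    exact this.congr_deriv (by simp)
  have hanti : AntitoneOn (fun ξ => log (b - V ξ) + c * ξ - K / k * V ξ) (Set.Ici 0) := by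
    refine antitoneOn_of_hasDerivWithinAt_nonpos (convex_Ici 0)
      (fun ξ _ => (hE ξ).continuousAt.continuousWithinAt)
      (fun ξ _ => (hE ξ).hasDerivWithinAt) fun ξ hξ => ?_
    rw [interior_Ici] at hξ
    have hy : 0 < b - V ξ := sub_pos.2 (hV ξ).2
    have hv0 : V 0 ≤ V ξ := hmono (le_of_lt hξ)
    have h5 : c - K * (b - V ξ) ≤ V' ξ / (b - V ξ) := by
      rw [le_div_iff₀ hy]; nlinarith [h2 ξ]
    have h6 : k * (b - V ξ) ≤ V' ξ := by
      refine le_trans ?_ (h1 ξ)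
      rw [hk, mul_assoc]
      gcongr
    have h7 : K * (b - V ξ) ≤ K / k * V' ξ := by
      rw [div_mul_eq_mul_div, le_div_iff₀ hkp]
      nlinarith
    rw [neg_div]; linarith
  refine ⟨exp (log (b - V 0) - K / k * V 0 + K / k * b), exp_pos _, fun ξ hξ => ?_⟩
  have h8 := hanti (Set.mem_Ici.2 le_rfl) (Set.mem_Ici.2 hξ) hξ
  simp only [mul_zero, add_zero] at h8
  have hy : 0 < b - V ξ := sub_pos.2 (hV ξ).2
  rw [← exp_add, ← log_le_iff_le_exp hy]
  have : K / k * V ξ ≤ K / k * b := by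
    have := (hV ξ).2.le
    gcongr
  linarith

lemma vsw_taylor {g g' g'' : ℝ → ℝ} {a b : ℝ} (h1 : ∀ x ∈ Set.Icc a b, HasDerivAt g (g' x) x)
    (h2 : ∀ x ∈ Set.Icc a b, HasDerivAt g' (g'' x) x) (h3 : ∀ x ∈ Set.Icc a b, 0 ≤ g'' x)
    {x y : ℝ} (hx : x ∈ Set.Icc a b) (hy : y ∈ Set.Icc a b) :
    g x + g' x * (y - x) ≤ g y := by
  have hc : ConvexOn ℝ (Set.Icc a b) g :=
    convexOn_of_hasDerivWithinAt2_nonneg (convex_Icc a b)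
      (fun x hx => (h1 x hx).continuousAt.continuousWithinAt)
      (fun x hx => (h1 x (interior_subset hx)).hasDerivWithinAt)
      (fun x hx => (h2 x (interior_subset hx)).hasDerivWithinAt)
      (fun x hx => h3 x (interior_subset hx))
  rcases lt_trichotomy x y with h | h | h
  · have := hc.le_slope_of_hasDerivAt hx hy h (h1 x hx)
    rw [slope_def_field, le_div_iff₀ (sub_pos.2 h)] at this
    linarith
  · subst h; simp
  · have := hc.slope_le_of_hasDerivAt hy hx h (h1 x hx)
    rw [slope_def_field, div_le_iff₀ (sub_pos.2 h)] at this
    linarith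

lemma vsw_pow {γ a b : ℝ} (hγ : 1 < γ) (ha : 0 < a) (hab : a < b) :
    ∃ κ > 0, ∃ K > 0, ∀ x ∈ Set.Icc a b, ∀ y ∈ Set.Icc a b,
      x ^ (-γ) + -(γ * x ^ (-γ - 1)) * (y - x) + κ * (y - x) ^ 2 ≤ y ^ (-γ) ∧
      y ^ (-γ) ≤ x ^ (-γ) + -(γ * x ^ (-γ - 1)) * (y - x) + K * (y - x) ^ 2 := by
  have hb : 0 < b := ha.trans hab
  have hb' := rpow_pos_of_pos hb (-γ - 1 - 1)
  have ha' := rpow_pos_of_pos ha (-γ - 1 - 1)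
  have d1 : ∀ x ∈ Set.Icc a b, HasDerivAt (fun x : ℝ => x ^ (-γ)) (-γ * x ^ (-γ - 1)) x :=
    fun x hx => hasDerivAt_rpow_const (Or.inl (ha.trans_le hx.1).ne')
  have d2 : ∀ x ∈ Set.Icc a b, HasDerivAt (fun x : ℝ => -γ * x ^ (-γ - 1))
      (-γ * ((-γ - 1) * x ^ (-γ - 1 - 1))) x :=
    fun x hx => (hasDerivAt_rpow_const (Or.inl (ha.trans_le hx.1).ne')).const_mul _
  have q1 : ∀ (k x : ℝ), HasDerivAt (fun x : ℝ => k * x ^ 2) (k * (2 * x)) x := fun k x => by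
    simpa using (hasDerivAt_pow 2 x).const_mul k
  have q2 : ∀ (k x : ℝ), HasDerivAt (fun x : ℝ => k * (2 * x)) (k * 2) x := fun k x => by
    simpa using ((hasDerivAt_id x).const_mul 2).const_mul k
  have hgg : 0 < γ * (γ + 1) := by positivity
  refine ⟨γ * (γ + 1) * b ^ (-γ - 1 - 1) / 2, by positivity,
    γ * (γ + 1) * a ^ (-γ - 1 - 1) / 2, by positivity, fun x hx y hy => ⟨?_, ?_⟩⟩
  · set κ := γ * (γ + 1) * b ^ (-γ - 1 - 1) / 2 with hκ
    have := vsw_taylor (a := a) (b := b) (fun x hx => (d1 x hx).sub (q1 κ x))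
      (fun x hx => (d2 x hx).sub (q2 κ x)) (fun x hx => by
        have : b ^ (-γ - 1 - 1) ≤ x ^ (-γ - 1 - 1) :=
          rpow_le_rpow_of_nonpos (ha.trans_le hx.1) hx.2 (by linarith)
        rw [hκ]
        nlinarith) hx hy
    simp only [Pi.sub_apply] at this
    linarith
  · set κ := γ * (γ + 1) * a ^ (-γ - 1 - 1) / 2 with hκ
    have := vsw_taylor (a := a) (b := b) (fun x hx => (q1 κ x).sub (d1 x hx))
      (fun x hx => (q2 κ x).sub (d2 x hx)) (fun x hx => by
        have : x ^ (-γ - 1 - 1) ≤ a ^ (-γ - 1 - 1) :=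
          rpow_le_rpow_of_nonpos ha hx.1 (by linarith)
        rw [hκ]
        nlinarith) hx hy
    simp only [Pi.sub_apply] at this
    linarith

lemma vsw_unique {f X Y : ℝ → ℝ} {t₀ : ℝ} (hf : ContDiffOn ℝ 1 f (Set.Ioi 0))
    (hX : ∀ t, HasDerivAt X (f (X t)) t) (hY : ∀ t, HasDerivAt Y (f (Y t)) t)
    (hXp : ∀ t, 0 < X t) (hYp : ∀ t, 0 < Y t) (h0 : X t₀ = Y t₀) (t : ℝ) : X t = Y t := by
  set α := min t t₀ - 1 with hα
  set β := max t t₀ + 1 with hβ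
  set S := X '' Set.Icc α β ∪ Y '' Set.Icc α β with hS
  have hXc : Continuous X := continuous_iff_continuousAt.2 fun t => (hX t).continuousAt
  have hYc : Continuous Y := continuous_iff_continuousAt.2 fun t => (hY t).continuousAt
  have hSc : IsCompact S := (isCompact_Icc.image hXc).union (isCompact_Icc.image hYc)
  have hSp : S ⊆ Set.Ioi 0 := by
    rintro x (⟨y, -, rfl⟩ | ⟨y, -, rfl⟩)
    · exact hXp y
    · exact hYp y
  have hL : LocallyLipschitzOn S f := fun x hx => by
    obtain ⟨K, u, hu, hK⟩ := (hf.contDiffAt (Ioi_mem_nhds (hSp hx))).exists_lipschitzOnWith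
    exact ⟨K, u, mem_nhdsWithin_of_mem_nhds hu, hK⟩
  obtain ⟨K, hK⟩ := hL.exists_lipschitzOnWith_of_compact hSc
  have h1 : min t t₀ ≤ t := min_le_left _ _
  have h2 : min t t₀ ≤ t₀ := min_le_right _ _
  have h3 : t ≤ max t t₀ := le_max_left _ _
  have h4 : t₀ ≤ max t t₀ := le_max_right _ _
  exact ODE_solution_unique_of_mem_Ioo (v := fun _ => f) (s := fun _ => S) (a := α) (b := β)
    (t₀ := t₀) (K := K) (fun _ _ => hK) ⟨by linarith, by linarith⟩
    (fun t ht => ⟨hX t, Or.inl ⟨t, Set.Ioo_subset_Icc_self ht, rfl⟩⟩)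
    (fun t ht => ⟨hY t, Or.inr ⟨t, Set.Ioo_subset_Icc_self ht, rfl⟩⟩) h0
    ⟨by linarith, by linarith⟩

/-- the function `h` of the profile equation -/
noncomputable def vswH (γ a s v : ℝ) : ℝ := -(s ^ 2 * (v - a)) - (v ^ (-γ) - a ^ (-γ))

/-- the right-hand side of the profile equation -/
noncomputable def vswF (γ μ a s v : ℝ) : ℝ := v * vswH γ a s v / (s * μ)

lemma vsw_contDiffOn (γ μ a s : ℝ) : ContDiffOn ℝ 1 (vswF γ μ a s) (Set.Ioi 0) := by
  have h : ContDiffOn ℝ 1 (fun v : ℝ => v ^ (-γ)) (Set.Ioi 0) := fun x hx =>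
    (contDiffAt_rpow_const_of_ne (ne_of_gt hx)).contDiffWithinAt
  unfold vswF vswH
  fun_prop

lemma vsw_bounds {γ a b s : ℝ} (hγ : 1 < γ) (ha : 0 < a) (hab : a < b)
    (hRH : s ^ 2 * (b - a) = a ^ (-γ) - b ^ (-γ)) :
    ∃ κ > 0, ∃ K > 0, 0 < γ * a ^ (-γ - 1) - s ^ 2 ∧ 0 < s ^ 2 - γ * b ^ (-γ - 1) ∧
      ∀ v ∈ Set.Icc a b, κ * ((v - a) * (b - v)) ≤ vswH γ a s v ∧
        vswH γ a s v ≤ (γ * a ^ (-γ - 1) - s ^ 2) * (v - a) ∧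
        vswH γ a s v ≤ (s ^ 2 - γ * b ^ (-γ - 1)) * (b - v) ∧
        (γ * a ^ (-γ - 1) - s ^ 2) * (v - a) - K * (v - a) ^ 2 ≤ vswH γ a s v ∧
        (s ^ 2 - γ * b ^ (-γ - 1)) * (b - v) - K * (b - v) ^ 2 ≤ vswH γ a s v := by
  obtain ⟨κ, hκ, K, hK, H⟩ := vsw_pow hγ ha hab
  have hd : 0 < b - a := sub_pos.2 hab
  have ham : a ∈ Set.Icc a b := ⟨le_rfl, hab.le⟩
  have hbm : b ∈ Set.Icc a b := ⟨hab.le, le_rfl⟩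
  have hA : 0 < γ * a ^ (-γ - 1) - s ^ 2 := by
    have h := (H a ham b hbm).1
    have h2 : κ * (b - a) ^ 2 ≤ (γ * a ^ (-γ - 1) - s ^ 2) * (b - a) := by linarith
    have h3 : 0 < κ * (b - a) ^ 2 := by positivity
    exact pos_of_mul_pos_left (h3.trans_le h2) hd.le
  have hB : 0 < s ^ 2 - γ * b ^ (-γ - 1) := by
    have h := (H b hbm a ham).1
    have h2 : κ * (b - a) ^ 2 ≤ (s ^ 2 - γ * b ^ (-γ - 1)) * (b - a) := by linarith
    have h3 : 0 < κ * (b - a) ^ 2 := by positivity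
    exact pos_of_mul_pos_left (h3.trans_le h2) hd.le
  refine ⟨κ, hκ, K, hK, hA, hB, fun v hv => ?_⟩
  have p1 := H a ham v hv
  have p2 := H b hbm v hv
  have p3 := (H v hv a ham).1
  have p4 := (H v hv b hbm).1
  have q1 : 0 ≤ κ * (v - a) ^ 2 := by positivity
  have q2 : 0 ≤ κ * (b - v) ^ 2 := by positivity
  unfold vswH
  refine ⟨?_, by linarith [p1.1], by linarith [p2.1], by linarith [p1.2], by linarith [p2.2]⟩
  have r1 := mul_le_mul_of_nonneg_left p3 (sub_nonneg.2 hv.2)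
  have r2 := mul_le_mul_of_nonneg_left p4 (sub_nonneg.2 hv.1)
  refine le_of_mul_le_mul_left ?_ hd
  have hb : b ^ (-γ) = a ^ (-γ) - s ^ 2 * (b - a) := by linarith
  rw [hb] at r2
  linarith

lemma vsw_core {γ μ a b s : ℝ} (hγ : 1 < γ) (hμ : 0 < μ) (ha : 0 < a) (hab : a < b) (hs : 0 < s)
    (hRH : s ^ 2 * (b - a) = a ^ (-γ) - b ^ (-γ)) :
    0 < b * |(-(γ * b ^ (-γ - 1))) + s ^ 2| / (s * μ) ∧
    0 < a * |(-(γ * a ^ (-γ - 1))) + s ^ 2| / (s * μ) ∧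
    ∃ V : ℝ → ℝ, ContDiff ℝ 2 V ∧
      (∀ ξ, a < V ξ ∧ V ξ < b ∧ 0 < vswH γ a s (V ξ) ∧
        HasDerivAt V (vswF γ μ a s (V ξ)) ξ) ∧
      Tendsto V atBot (nhds a) ∧ Tendsto V atTop (nhds b) ∧
      ∃ C > 0,
        (∀ ξ, 0 ≤ ξ →
          b - V ξ ≤ C * exp (-(b * |(-(γ * b ^ (-γ - 1))) + s ^ 2| / (s * μ) * ξ)) ∧
          |deriv V ξ| ≤ C * exp (-(b * |(-(γ * b ^ (-γ - 1))) + s ^ 2| / (s * μ) * ξ)) ∧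
          |deriv (deriv V) ξ| ≤
            C * exp (-(b * |(-(γ * b ^ (-γ - 1))) + s ^ 2| / (s * μ) * ξ))) ∧
        (∀ ξ, ξ ≤ 0 →
          V ξ - a ≤ C * exp (a * |(-(γ * a ^ (-γ - 1))) + s ^ 2| / (s * μ) * ξ) ∧
          |deriv V ξ| ≤ C * exp (a * |(-(γ * a ^ (-γ - 1))) + s ^ 2| / (s * μ) * ξ) ∧
          |deriv (deriv V) ξ| ≤
            C * exp (a * |(-(γ * a ^ (-γ - 1))) + s ^ 2| / (s * μ) * ξ)) := by
  obtain ⟨κ, hκ, K, hK, hA, hB, H⟩ := vsw_bounds hγ ha hab hRH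
  have hb : 0 < b := ha.trans hab
  have hd : 0 < b - a := sub_pos.2 hab
  have eA : |(-(γ * a ^ (-γ - 1))) + s ^ 2| = γ * a ^ (-γ - 1) - s ^ 2 := by
    rw [abs_of_neg (by linarith)]; ring
  have eB : |(-(γ * b ^ (-γ - 1))) + s ^ 2| = s ^ 2 - γ * b ^ (-γ - 1) := by
    rw [abs_of_pos (by linarith)]; ring
  rw [eA, eB]
  set A := γ * a ^ (-γ - 1) - s ^ 2 with hAdef
  set B := s ^ 2 - γ * b ^ (-γ - 1) with hBdef
  have hcb : 0 < b * B / (s * μ) := by positivity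
  have hca : 0 < a * A / (s * μ) := by positivity
  refine ⟨hcb, hca, ?_⟩
  set cb := b * B / (s * μ) with hcbdef
  set ca := a * A / (s * μ) with hcadef
  set f := vswF γ μ a s with hfdef
  have hsμ : 0 < s * μ := by positivity
  have hfC := vsw_contDiffOn γ μ a s
  have hHpos : ∀ v ∈ Set.Ioo a b, 0 < vswH γ a s v := fun v hv => by
    have h := (H v (Set.Ioo_subset_Icc_self hv)).1
    have h2 : 0 < κ * ((v - a) * (b - v)) :=
      mul_pos hκ (mul_pos (sub_pos.2 hv.1) (sub_pos.2 hv.2))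
    linarith
  have f1 : ∀ v ∈ Set.Ioo a b, a * κ / (s * μ) * ((v - a) * (b - v)) ≤ f v := fun v hv => by
    obtain ⟨h1, -⟩ := H v (Set.Ioo_subset_Icc_self hv)
    have h0 := hHpos v hv
    rw [hfdef, vswF, div_mul_eq_mul_div]
    refine div_le_div_of_nonneg_right ?_ hsμ.le
    nlinarith [mul_le_mul_of_nonneg_left h1 ha.le, mul_nonneg (sub_nonneg.2 hv.1.le) h0.le]
  have f2 : ∀ v ∈ Set.Ioo a b, f v ≤ b * (A + B) / (b - a) / (s * μ) * ((v - a) * (b - v)) :=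
      fun v hv => by
    obtain ⟨-, h2, h3, -⟩ := H v (Set.Ioo_subset_Icc_self hv)
    have h0 := hHpos v hv
    rw [hfdef, vswF, div_mul_eq_mul_div]
    refine div_le_div_of_nonneg_right ?_ hsμ.le
    have h4 : vswH γ a s v ≤ (A + B) * ((v - a) * (b - v)) / (b - a) := by
      rw [le_div_iff₀ hd]
      nlinarith [mul_le_mul_of_nonneg_left h2 (sub_nonneg.2 hv.2.le),
        mul_le_mul_of_nonneg_left h3 (sub_nonneg.2 hv.1.le)]
    calc v * vswH γ a s v ≤ b * vswH γ a s v := mul_le_mul_of_nonneg_right hv.2.le h0.le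
      _ ≤ b * ((A + B) * ((v - a) * (b - v)) / (b - a)) := mul_le_mul_of_nonneg_left h4 hb.le
      _ = _ := by ring
  have f3 : ∀ v ∈ Set.Ioo a b, ca * (v - a) - a * K / (s * μ) * (v - a) ^ 2 ≤ f v :=
      fun v hv => by
    obtain ⟨-, -, -, h4, -⟩ := H v (Set.Ioo_subset_Icc_self hv)
    have h0 := hHpos v hv
    have : ca * (v - a) - a * K / (s * μ) * (v - a) ^ 2
        = (a * (A * (v - a) - K * (v - a) ^ 2)) / (s * μ) := by rw [hcadef]; ring
    rw [this, hfdef, vswF]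
    refine div_le_div_of_nonneg_right ?_ hsμ.le
    nlinarith [mul_le_mul_of_nonneg_left h4 ha.le, mul_nonneg (sub_nonneg.2 hv.1.le) h0.le]
  have f4 : ∀ v ∈ Set.Ioo a b, cb * (b - v) - (b * K + B) / (s * μ) * (b - v) ^ 2 ≤ f v :=
      fun v hv => by
    obtain ⟨-, -, h3, -, h5⟩ := H v (Set.Ioo_subset_Icc_self hv)
    have h0 := hHpos v hv
    have : cb * (b - v) - (b * K + B) / (s * μ) * (b - v) ^ 2
        = (b * (B * (b - v) - K * (b - v) ^ 2) - B * (b - v) ^ 2) / (s * μ) := by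
      rw [hcbdef]; ring
    rw [this, hfdef, vswF]
    refine div_le_div_of_nonneg_right ?_ hsμ.le
    nlinarith [mul_le_mul_of_nonneg_left h5 hb.le,
      mul_le_mul_of_nonneg_left h3 (sub_nonneg.2 hv.2.le)]
  have hfc : ContinuousOn f (Set.Ioo a b) :=
    hfC.continuousOn.mono fun v hv => ha.trans hv.1
  obtain ⟨V, hV⟩ := vsw_exists_sol hab hfc (by positivity) f1 f2
  have hVm := fun ξ => (hV ξ).1
  have hVd := fun ξ => (hV ξ).2
  have hVpos : ∀ ξ, 0 < V ξ := fun ξ => ha.trans (hVm ξ).1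
  obtain ⟨A1, hA1, R⟩ := vsw_decay (a := a) (b := b) (m := a * κ / (s * μ))
    (K := (b * K + B) / (s * μ)) (c := cb) (by positivity) (by positivity) hVm hVd
    (fun ξ => f1 _ (hVm ξ)) (fun ξ => f4 _ (hVm ξ))
  obtain ⟨A2, hA2, L⟩ := vsw_decay (a := -b) (b := -a) (m := a * κ / (s * μ))
    (K := a * K / (s * μ)) (c := ca) (V := fun ξ => -V (-ξ)) (V' := fun ξ => f (V (-ξ)))
    (by positivity) (by positivity)
    (fun ξ => ⟨neg_lt_neg (hVm _).2, neg_lt_neg (hVm _).1⟩)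
    (fun ξ => by
      have h := ((hVd (-ξ)).comp ξ (hasDerivAt_neg ξ)).neg
      exact h.congr_deriv (by simp))
    (fun ξ => by
      have := f1 _ (hVm (-ξ))
      convert this using 1
      ring)
    (fun ξ => by
      have := f3 _ (hVm (-ξ))
      convert this using 1
      ring)
  have L' : ∀ ξ, ξ ≤ 0 → V ξ - a ≤ A2 * exp (ca * ξ) := fun ξ hξ => by
    have := L (-ξ) (by linarith)
    simp only [neg_neg, mul_neg] at this
    linarith
  have hdV : deriv V = fun ξ => f (V ξ) := funext fun ξ => (hVd ξ).deriv
  have hVdiff : Differentiable ℝ V := fun ξ => (hVd ξ).differentiableAt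
  have hC1 : ContDiff ℝ 1 V := by
    rw [contDiff_one_iff_deriv]
    refine ⟨hVdiff, ?_⟩
    rw [hdV]
    exact hfc.comp_continuous hVdiff.continuous hVm
  have hC2 : ContDiff ℝ 2 V := by
    have : (2 : WithTop ℕ∞) = 1 + 1 := by norm_num
    rw [this, contDiff_succ_iff_deriv]
    refine ⟨hVdiff, by simp, ?_⟩
    rw [hdV]
    exact hfC.comp_contDiff hC1 hVpos
  have hddV : ∀ ξ, deriv (deriv V) ξ = deriv f (V ξ) * f (V ξ) := fun ξ => by
    rw [hdV]
    have h1 : HasDerivAt f (deriv f (V ξ)) (V ξ) :=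
      ((hfC.contDiffAt (Ioi_mem_nhds (hVpos ξ))).differentiableAt (by norm_num)).hasDerivAt
    exact (h1.comp ξ (hVd ξ)).deriv
  obtain ⟨D, hD⟩ := (isCompact_Icc (a := a) (b := b)).exists_bound_of_continuousOn
    (f := deriv f) ((hfC.continuousOn_deriv_of_isOpen isOpen_Ioi le_rfl).mono
      fun v hv => ha.trans_le hv.1)
  have hD0 : 0 ≤ D := (norm_nonneg _).trans (hD a ⟨le_rfl, hab.le⟩)
  set M := b * (A + B) / (b - a) / (s * μ) with hM
  have hM0 : 0 < M := by positivity
  have hfpos : ∀ ξ, 0 < f (V ξ) := fun ξ =>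
    div_pos (mul_pos (hVpos ξ) (hHpos _ (hVm ξ))) hsμ
  set P := M * (b - a) with hP
  have hP0 : 0 < P := by positivity
  have fR : ∀ ξ, f (V ξ) ≤ P * (b - V ξ) := fun ξ => by
    refine (f2 _ (hVm ξ)).trans ?_
    have h1 := (hVm ξ).1
    have h2 := (hVm ξ).2
    rw [hP, mul_assoc]
    have : 0 ≤ b - V ξ := by linarith
    gcongr
  have fL : ∀ ξ, f (V ξ) ≤ P * (V ξ - a) := fun ξ => by
    refine (f2 _ (hVm ξ)).trans ?_
    have h1 := (hVm ξ).1
    have h2 := (hVm ξ).2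
    rw [hP, mul_assoc, mul_comm (V ξ - a)]
    have : 0 ≤ V ξ - a := by linarith
    gcongr
  set C := (A1 + A2) * (1 + P + D * P) with hC
  have key : ∀ ξ z E A' : ℝ, 0 < A' → A' ≤ A1 + A2 → 0 < E → z ≤ A' * E → f (V ξ) ≤ P * z →
      z ≤ C * E ∧ |deriv V ξ| ≤ C * E ∧ |deriv (deriv V) ξ| ≤ C * E := by
    intro ξ z E A' h1 h2 h3 h4 h5
    have h6 : z ≤ (A1 + A2) * E := h4.trans (by gcongr)
    have h7 : f (V ξ) ≤ P * ((A1 + A2) * E) := h5.trans (by gcongr)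
    have hAE : 0 < (A1 + A2) * E := by positivity
    have e1 : C * E = (A1 + A2) * E + P * ((A1 + A2) * E) + D * (P * ((A1 + A2) * E)) := by
      rw [hC]; ring
    have h8 : 0 ≤ P * ((A1 + A2) * E) := by positivity
    have h9 : 0 ≤ D * (P * ((A1 + A2) * E)) := by positivity
    have e2 : |deriv V ξ| = f (V ξ) := by
      rw [(hVd ξ).deriv, abs_of_pos (hfpos ξ)]
    have e3 : |deriv (deriv V) ξ| ≤ D * (P * ((A1 + A2) * E)) := by
      rw [hddV, abs_mul, abs_of_pos (hfpos ξ)]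
      have := hD _ (Set.Ioo_subset_Icc_self (hVm ξ))
      rw [Real.norm_eq_abs] at this
      exact mul_le_mul this h7 (hfpos ξ).le hD0
    rw [e1, e2]
    exact ⟨by linarith, by linarith, by linarith⟩
  refine ⟨V, hC2, fun ξ => ⟨(hVm ξ).1, (hVm ξ).2, hHpos _ (hVm ξ), hVd ξ⟩, ?_, ?_, C,
    by positivity, fun ξ hξ => key ξ _ _ A1 hA1 (by linarith) (exp_pos _) (R ξ hξ) (fR ξ),
    fun ξ hξ => key ξ _ _ A2 hA2 (by linarith) (exp_pos _) (L' ξ hξ) (fL ξ)⟩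
  · have ht : Tendsto (fun ξ => a + A2 * exp (ca * ξ)) atBot (nhds a) := by
      have h1 : Tendsto (fun ξ => exp (ca * ξ)) atBot (nhds 0) :=
        tendsto_exp_atBot.comp (tendsto_id.const_mul_atBot hca)
      simpa using (h1.const_mul A2).const_add a
    refine tendsto_of_tendsto_of_tendsto_of_le_of_le' tendsto_const_nhds ht
      (Eventually.of_forall fun ξ => (hVm ξ).1.le) ?_
    filter_upwards [eventually_le_atBot 0] with ξ hξ
    linarith [L' ξ hξ]
  · have ht : Tendsto (fun ξ => b - A1 * exp (-(cb * ξ))) atTop (nhds b) := by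
      have h1 : Tendsto (fun ξ => exp (-(cb * ξ))) atTop (nhds 0) :=
        tendsto_exp_atBot.comp
          (tendsto_neg_atTop_atBot.comp (tendsto_id.const_mul_atTop hcb))
      simpa using (h1.const_mul A1).const_sub b
    refine tendsto_of_tendsto_of_tendsto_of_le_of_le' ht tendsto_const_nhds ?_
      (Eventually.of_forall fun ξ => (hVm ξ).2.le)
    filter_upwards [eventually_ge_atTop 0] with ξ hξ
    linarith [R ξ hξ]

/-- Existence, uniqueness up to translation, and exponential decay estimates for the
2-viscous shock wave of the compressible Navier–Stokes equations. -/
theorem viscous_shock_wave_existence_uniqueness_decay (γ μ vm vp : ℝ)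
    (hγ : 1 < γ) (hμ : 0 < μ) (hvm : 0 < vm) (hv : vm < vp) :
    ∃ C > 0, ∃ K > 0, ∀ um up s : ℝ, 0 < s → up < um →
      s * (vp - vm) = um - up → s * (up - um) = vp ^ (-γ) - vm ^ (-γ) →
      ∃ V U : ℝ → ℝ, IsShockProfile γ μ vm vp um up s V U ∧
        -- uniqueness up to a shift
        (∀ V' U' : ℝ → ℝ, IsShockProfile γ μ vm vp um up s V' U' →
          ∃ ξ₀ : ℝ, ∀ ξ, V' ξ = V (ξ + ξ₀) ∧ U' ξ = U (ξ + ξ₀)) ∧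
        -- pointwise bounds and monotonicity
        (∀ ξ : ℝ,
          vm < V ξ ∧ V ξ < vp ∧ up < U ξ ∧ U ξ < um ∧
          0 < -(s ^ 2 * (V ξ - vm)) - (V ξ ^ (-γ) - vm ^ (-γ)) ∧
          deriv V ξ =
            V ξ * (-(s ^ 2 * (V ξ - vm)) - (V ξ ^ (-γ) - vm ^ (-γ))) / (s * μ) ∧
          0 < deriv V ξ) ∧
        -- exponential decay towards the right state
        (∀ ξ : ℝ, 0 ≤ ξ →
          |V ξ - vp| + |U ξ - up| ≤
            C * (vp - vm) *
              Real.exp (-(vp * |(-(γ * vp ^ (-γ - 1))) + s ^ 2| / (s * μ) * ξ)) ∧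
          |deriv V ξ| + |deriv U ξ| + |deriv (deriv V) ξ| + |deriv (deriv U) ξ| ≤
            C * (vp - vm) ^ 2 *
              Real.exp (-(vp * |(-(γ * vp ^ (-γ - 1))) + s ^ 2| / (s * μ) * ξ))) ∧
        -- exponential decay towards the left state
        (∀ ξ : ℝ, ξ ≤ 0 →
          |V ξ - vm| + |U ξ - um| ≤
            C * (vp - vm) *
              Real.exp (vm * |(-(γ * vm ^ (-γ - 1))) + s ^ 2| / (s * μ) * ξ) ∧
          |deriv V ξ| + |deriv U ξ| + |deriv (deriv V) ξ| + |deriv (deriv U) ξ| ≤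
            C * (vp - vm) ^ 2 *
              Real.exp (vm * |(-(γ * vm ^ (-γ - 1))) + s ^ 2| / (s * μ) * ξ)) ∧
        -- positivity of the decay rates and comparability with δ = vp − vm
        (0 < vp * |(-(γ * vp ^ (-γ - 1))) + s ^ 2| / (s * μ) ∧
         0 < vm * |(-(γ * vm ^ (-γ - 1))) + s ^ 2| / (s * μ) ∧
         vp * |(-(γ * vp ^ (-γ - 1))) + s ^ 2| / (s * μ) ≤ K * (vp - vm) ∧
         vp - vm ≤ K * (vp * |(-(γ * vp ^ (-γ - 1))) + s ^ 2| / (s * μ)) ∧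
         vm * |(-(γ * vm ^ (-γ - 1))) + s ^ 2| / (s * μ) ≤ K * (vp - vm) ∧
         vp - vm ≤ K * (vm * |(-(γ * vm ^ (-γ - 1))) + s ^ 2| / (s * μ))) := by
  set s₀ := √((vm ^ (-γ) - vp ^ (-γ)) / (vp - vm)) with hs₀
  have hd : 0 < vp - vm := sub_pos.2 hv
  have hp : 0 < vm ^ (-γ) - vp ^ (-γ) :=
    sub_pos.2 (rpow_lt_rpow_of_neg hvm hv (by linarith))
  have hs₀p : 0 < s₀ := sqrt_pos.2 (div_pos hp hd)
  have hs₀2 : s₀ ^ 2 * (vp - vm) = vm ^ (-γ) - vp ^ (-γ) := by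
    rw [hs₀, sq_sqrt (div_pos hp hd).le, div_mul_cancel₀ _ hd.ne']
  obtain ⟨hcb, hca, V, hC2, hV, hbot, htop, C, hC, R, L⟩ :=
    vsw_core hγ hμ hvm hv hs₀p hs₀2
  set δ := vp - vm with hδ
  set D := 2 * (1 + s₀) * C / δ + 2 * (1 + s₀) * C / δ ^ 2 with hD
  have hDp : 0 < D := by positivity
  have D1 : 2 * (1 + s₀) * C ≤ D * δ := by
    have : D * δ = 2 * (1 + s₀) * C + 2 * (1 + s₀) * C / δ := by rw [hD]; field_simp
    have : 0 < 2 * (1 + s₀) * C / δ := by positivity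
    linarith
  have D2 : 2 * (1 + s₀) * C ≤ D * δ ^ 2 := by
    have : D * δ ^ 2 = 2 * (1 + s₀) * C * δ + 2 * (1 + s₀) * C := by rw [hD]; field_simp
    have : 0 < 2 * (1 + s₀) * C * δ := by positivity
    linarith
  set cb := vp * |(-(γ * vp ^ (-γ - 1))) + s₀ ^ 2| / (s₀ * μ) with hcbd
  set ca := vm * |(-(γ * vm ^ (-γ - 1))) + s₀ ^ 2| / (s₀ * μ) with hcad
  have q1 : 0 < cb / δ := by positivity
  have q2 : 0 < δ / cb := by positivity
  have q3 : 0 < ca / δ := by positivity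
  have q4 : 0 < δ / ca := by positivity
  refine ⟨D, hDp, cb / δ + δ / cb + ca / δ + δ / ca, by positivity, ?_⟩
  intro um up s hs hu h1 h2
  have hss : s = s₀ := by
    have h3 : s ^ 2 * (vp - vm) = vm ^ (-γ) - vp ^ (-γ) := by
      have : s ^ 2 * (vp - vm) = s * (s * (vp - vm)) := by ring
      rw [this, h1]; linarith
    have h4 : s ^ 2 = s₀ ^ 2 := mul_right_cancel₀ hd.ne' (h3.trans hs₀2.symm)
    exact (pow_left_inj₀ hs.le hs₀p.le two_ne_zero).1 h4
  rw [hss] at h1 h2 hs ⊢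
  have hsμ : 0 < s₀ * μ := by positivity
  clear_value s₀
  have hU : ∀ ξ, HasDerivAt (fun ξ => um - s₀ * (V ξ - vm)) (-(s₀ * deriv V ξ)) ξ := fun ξ => by
    have h := (((hC2.differentiable two_ne_zero ξ).hasDerivAt.sub_const vm).const_mul
      s₀).const_sub um
    exact h
  have hdU : deriv (fun ξ => um - s₀ * (V ξ - vm)) = fun ξ => -(s₀ * deriv V ξ) :=
    funext fun ξ => (hU ξ).deriv
  have hddU : ∀ ξ, deriv (deriv (fun ξ => um - s₀ * (V ξ - vm))) ξ
      = -(s₀ * deriv (deriv V) ξ) := fun ξ => by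
    rw [hdU]
    simp
  have key : ∀ x y z E : ℝ, |x| ≤ C * E → |y| ≤ C * E → |z| ≤ C * E → 0 < E →
      |x| + |-(s₀ * x)| ≤ D * δ * E ∧
      |y| + |-(s₀ * y)| + |z| + |-(s₀ * z)| ≤ D * δ ^ 2 * E := by
    intro x y z E hx hy hz hE
    simp only [abs_neg, abs_mul, abs_of_pos hs₀p]
    have a1 := mul_le_mul_of_nonneg_right D1 hE.le
    have a2 := mul_le_mul_of_nonneg_right D2 hE.le
    have a3 := mul_le_mul_of_nonneg_left hx hs₀p.le
    have a4 := mul_le_mul_of_nonneg_left hy hs₀p.le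
    have a5 := mul_le_mul_of_nonneg_left hz hs₀p.le
    have a6 : 0 < C * E := by positivity
    have a7 : 0 < s₀ * (C * E) := by positivity
    constructor
    · linarith
    · linarith
  refine ⟨V, fun ξ => um - s₀ * (V ξ - vm), ⟨hC2, by fun_prop, fun ξ => hvm.trans (hV ξ).1,
    fun ξ => by linarith, fun ξ => by ring, fun ξ => ?_, hbot, htop⟩, ?_, ?_, ?_, ?_,
    hcb, hca, ?_, ?_, ?_, ?_⟩
  · rw [(hV ξ).2.2.2.deriv, vswF, vswH]
    have h3 : V ξ ≠ 0 := (hvm.trans (hV ξ).1).ne'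
    field_simp
  · intro V' U' ⟨c1, c2, c3, c4, c5, c6, c7, c8⟩
    have hVc : Continuous V := hC2.continuous
    obtain ⟨x, hx⟩ := mem_range_of_exists_le_of_exists_ge (c := (vm + vp) / 2) hVc
      ((hbot.eventually (Iio_mem_nhds (by linarith : vm < (vm + vp) / 2))).exists.imp
        fun _ h => le_of_lt h)
      ((htop.eventually (Ioi_mem_nhds (by linarith : (vm + vp) / 2 < vp))).exists.imp
        fun _ h => le_of_lt h)
    obtain ⟨y, hy⟩ := mem_range_of_exists_le_of_exists_ge (c := (vm + vp) / 2) c1.continuous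
      ((c7.eventually (Iio_mem_nhds (by linarith : vm < (vm + vp) / 2))).exists.imp
        fun _ h => le_of_lt h)
      ((c8.eventually (Ioi_mem_nhds (by linarith : (vm + vp) / 2 < vp))).exists.imp
        fun _ h => le_of_lt h)
    have hd' : ∀ t, HasDerivAt V' (vswF γ μ vm s₀ (V' t)) t := fun t => by
      refine ((c1.differentiable two_ne_zero t).hasDerivAt).congr_deriv ?_
      have h3 := c6 t
      rw [vswF, vswH, ← h3]
      have h4 := (c3 t).ne'
      field_simp
    have huniq := vsw_unique (X := V') (Y := fun ξ => V (ξ + (x - y))) (t₀ := y)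
      (vsw_contDiffOn γ μ vm s₀) hd' (fun t => (hV (t + (x - y))).2.2.2.comp_add_const t (x - y))
      c3 (fun t => hvm.trans (hV _).1) (by simp [hx, hy])
    refine ⟨x - y, fun ξ => ⟨huniq ξ, ?_⟩⟩
    have h5 := c5 ξ
    have h6 := huniq ξ
    simp only at h6 ⊢
    rw [← h6]; linarith
  · intro ξ
    obtain ⟨e1, e2, e3, e4⟩ := hV ξ
    have e5 : deriv V ξ = _ := e4.deriv
    have e6 : 0 < s₀ * (V ξ - vm) := mul_pos hs₀p (by linarith)
    have e7 : 0 < s₀ * (vp - V ξ) := mul_pos hs₀p (by linarith)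
    refine ⟨e1, e2, ?_, ?_, e3, e5, ?_⟩
    · simp only; linarith
    · simp only; linarith
    · rw [e5]
      exact div_pos (mul_pos (hvm.trans e1) e3) hsμ
  · intro ξ hξ
    obtain ⟨r1, r2, r3⟩ := R ξ hξ
    have r4 : |V ξ - vp| ≤ C * exp (-(cb * ξ)) := by
      rw [abs_sub_comm, abs_of_pos (sub_pos.2 (hV ξ).2.1)]; exact r1
    have r5 : um - s₀ * (V ξ - vm) - up = -(s₀ * (V ξ - vp)) := by linarith
    rw [hddU, hdU, r5]
    exact key _ _ _ _ r4 r2 r3 (exp_pos _)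
  · intro ξ hξ
    obtain ⟨r1, r2, r3⟩ := L ξ hξ
    have r4 : |V ξ - vm| ≤ C * exp (ca * ξ) := by
      rw [abs_of_pos (sub_pos.2 (hV ξ).1)]; exact r1
    have r5 : um - s₀ * (V ξ - vm) - um = -(s₀ * (V ξ - vm)) := by ring
    rw [hddU, hdU, r5]
    exact key _ _ _ _ r4 r2 r3 (exp_pos _)
  · rw [← div_le_iff₀ hd]; linarith
  · rw [← div_le_iff₀ hcb]; linarith
  · rw [← div_le_iff₀ hd]; linarith
  · rw [← div_le_iff₀ hca]; linarith
end

section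
/- For every 0 ≤ t ≤ T the following boundary estimates hold: ∫₀^t |φ(τ, 0)| dτ ≲ δ^{−1}e^{−c_−β}; ∫₀^t |φ_ξ(τ, 0)| dτ ≲ e^{−c_−β}; ∫₀^t |ψ_ξ(τ, 0)| dτ ≲ e^{−c_−β}; ∫₀^t |φ_t(τ, 0)| dτ ≲ e^{−c_−β}; ∫₀^t |φ_{tξ}(τ, 0)| dτ ≲ δe^{−c_−β}; and ∫₀^t |ψ_{tξ}(τ, 0)| dτ ≲ δe^{−c_−β}. -/
open MeasureTheory Real Filter

/-- Partial derivative in the first (time) variable. -/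
noncomputable def pt (f : ℝ → ℝ → ℝ) (t ξ : ℝ) : ℝ := deriv (fun τ => f τ ξ) t

/-- Partial derivative in the second (space) variable. -/
noncomputable def px (f : ℝ → ℝ → ℝ) (t ξ : ℝ) : ℝ := deriv (fun y => f t y) ξ

/-- `Φ(a, b) = p(b)(a − b) − ∫_b^a p(η) dη` with `p(v) = v^(−γ)`. -/
noncomputable def Phi (γ a b : ℝ) : ℝ := b ^ (-γ) * (a - b) - ∫ η in b..a, η ^ (-γ)

/-- Square of the `L²` norm on the half line. -/
noncomputable def nsq (f : ℝ → ℝ) : ℝ := ∫ ξ in Set.Ioi (0:ℝ), (f ξ) ^ 2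

/-- The setting of the inflow problem for the compressible Navier–Stokes equations,
reformulated around the (shifted) 2-viscous shock wave profile `(V, U)`. -/
structure NSSetting (γ μ vm vp C₀ K : ℝ) where
  um : ℝ
  up : ℝ
  s : ℝ
  δ : ℝ
  cp : ℝ
  cm : ℝ
  sm : ℝ
  β : ℝ
  σ : ℝ
  T : ℝ
  m : ℝ
  M : ℝ
  N : ℝ
  V : ℝ → ℝ
  U : ℝ → ℝ
  φ : ℝ → ℝ → ℝ
  ψ : ℝ → ℝ → ℝ
  humpos : 0 < um
  hu : up < um
  hspos : 0 < s
  rh1 : s * (vp - vm) = um - up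
  rh2 : s * (up - um) = vp ^ (-γ) - vm ^ (-γ)
  hδ : δ = vp - vm
  subsonic : um < Real.sqrt γ * vm ^ (-(γ - 1) / 2)
  hsm : sm = -(um / vm)
  hVC2 : ContDiff ℝ 2 V
  hUC2 : ContDiff ℝ 2 U
  hUVp : ∀ ξ, U ξ - up = -(s * (V ξ - vp))
  hUVm : ∀ ξ, U ξ - um = -(s * (V ξ - vm))
  hODE : ∀ ξ, s * μ * deriv V ξ / V ξ = -(s ^ 2 * (V ξ - vm)) - (V ξ ^ (-γ) - vm ^ (-γ))
  hVrange : ∀ ξ, vm < V ξ ∧ V ξ < vp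
  hV'pos : ∀ ξ, 0 < deriv V ξ
  hcp : cp = vp * |(-(γ * vp ^ (-γ - 1))) + s ^ 2| / (s * μ)
  hcm : cm = vm * |(-(γ * vm ^ (-γ - 1))) + s ^ 2| / (s * μ)
  decayp : ∀ ξ : ℝ, 0 ≤ ξ →
    |V ξ - vp| + |U ξ - up| ≤ C₀ * δ * Real.exp (-(cp * ξ)) ∧
    |deriv V ξ| + |deriv U ξ| ≤ C₀ * δ ^ 2 * Real.exp (-(cp * ξ))
  decaym : ∀ ξ : ℝ, ξ ≤ 0 →
    |V ξ - vm| + |U ξ - um| ≤ C₀ * δ * Real.exp (cm * ξ) ∧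
    |deriv V ξ| + |deriv U ξ| ≤ C₀ * δ ^ 2 * Real.exp (cm * ξ)
  hKcp : cp ≤ K * δ ∧ δ ≤ K * cp
  hKcm : cm ≤ K * δ ∧ δ ≤ K * cm
  hβpos : 0 < β
  hβσ : |σ| ≤ β
  hσδ : δ * |σ| ≤ K
  hTpos : 0 < T
  hφsm : ContDiff ℝ (⊤ : ℕ∞) (Function.uncurry φ)
  hψsm : ContDiff ℝ (⊤ : ℕ∞) (Function.uncurry ψ)
  eq1 : ∀ t ξ : ℝ, 0 ≤ t → t ≤ T → 0 ≤ ξ →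
    pt φ t ξ - sm * px φ t ξ - px ψ t ξ = 0
  eq2 : ∀ t ξ : ℝ, 0 ≤ t → t ≤ T → 0 ≤ ξ →
    pt ψ t ξ - sm * px ψ t ξ +
        ((V (ξ - (s - sm) * t + σ - β) + px φ t ξ) ^ (-γ) -
          V (ξ - (s - sm) * t + σ - β) ^ (-γ)) =
      μ * ((deriv U (ξ - (s - sm) * t + σ - β) + px (px ψ) t ξ) /
            (V (ξ - (s - sm) * t + σ - β) + px φ t ξ) -
          deriv U (ξ - (s - sm) * t + σ - β) / V (ξ - (s - sm) * t + σ - β))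
  bdφ : ∀ t : ℝ, 0 ≤ t → t ≤ T →
    φ t 0 = -((s - sm) * ∫ τ in Set.Ioi t, (V (-((s - sm) * τ) + σ - β) - vm))
  bdφx : ∀ t : ℝ, 0 ≤ t → t ≤ T → px φ t 0 = vm - V (-((s - sm) * t) + σ - β)
  bdψx : ∀ t : ℝ, 0 ≤ t → t ≤ T → px ψ t 0 = um - U (-((s - sm) * t) + σ - β)
  hInt : ∀ t : ℝ, 0 ≤ t → t ≤ T →
    Integrable (fun ξ => (φ t ξ) ^ 2 + (ψ t ξ) ^ 2 + (px φ t ξ) ^ 2 + (px ψ t ξ) ^ 2 +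
      (px (px φ) t ξ) ^ 2 + (px (px ψ) t ξ) ^ 2 + (px (px (px ψ)) t ξ) ^ 2)
      (volume.restrict (Set.Ioi 0))
  hVanish : ∀ t : ℝ, 0 ≤ t → t ≤ T →
    Tendsto (fun ξ => |φ t ξ| + |ψ t ξ| + |px φ t ξ| + |px ψ t ξ| +
      |px (px φ) t ξ| + |px (px ψ) t ξ|) atTop (nhds 0)
  hm1 : 1 ≤ m
  hM1 : 1 ≤ M
  hvbounds : ∀ t ξ : ℝ, 0 ≤ t → t ≤ T → 0 ≤ ξ →
    1 / m ≤ V (ξ - (s - sm) * t + σ - β) + px φ t ξ ∧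
      V (ξ - (s - sm) * t + σ - β) + px φ t ξ ≤ M
  hN0 : 0 ≤ N
  hN1 : N ≤ 1
  hNbound : ∀ t ξ : ℝ, 0 ≤ t → t ≤ T → 0 ≤ ξ → |φ t ξ| + |ψ t ξ| ≤ N

namespace NSSetting

variable {γ μ vm vp C₀ K : ℝ}

/-- The shifted argument `ξ − (s − sm)t + σ − β`. -/
noncomputable def sh (S : NSSetting γ μ vm vp C₀ K) (t ξ : ℝ) : ℝ :=
  ξ - (S.s - S.sm) * t + S.σ - S.β

/-- The specific volume `v = V + φ_ξ`. -/
noncomputable def vv (S : NSSetting γ μ vm vp C₀ K) (t ξ : ℝ) : ℝ :=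
  S.V (S.sh t ξ) + px S.φ t ξ

/-- `ṽ = v / V`. -/
noncomputable def tv (S : NSSetting γ μ vm vp C₀ K) (t ξ : ℝ) : ℝ :=
  S.vv t ξ / S.V (S.sh t ξ)

/-- `ṽ_ξ / ṽ`. -/
noncomputable def tvr (S : NSSetting γ μ vm vp C₀ K) (t ξ : ℝ) : ℝ :=
  px S.tv t ξ / S.tv t ξ

/-- `E₀ = ‖φ₀‖² + ‖ψ₀‖² + ‖ψ₀′‖² + ∫ Φ(v(0), V(0))`. -/
noncomputable def E₀ (S : NSSetting γ μ vm vp C₀ K) : ℝ :=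
  nsq (S.φ 0) + nsq (S.ψ 0) + nsq (px S.ψ 0) +
    ∫ ξ in Set.Ioi (0:ℝ), Phi γ (S.vv 0 ξ) (S.V (S.sh 0 ξ))

/-- The boundary smallness quantity `δ⁻¹ e^(−c₋ β)`. -/
noncomputable def Xq (S : NSSetting γ μ vm vp C₀ K) : ℝ :=
  S.δ⁻¹ * Real.exp (-(S.cm * S.β))

end NSSetting


lemma aux_int (f : ℝ → ℝ) (B k t : ℝ) (ht : 0 ≤ t) (hk : 0 < k) (hB : 0 ≤ B)
    (hf : ∀ τ, 0 < τ → τ < t → |f τ| ≤ B * Real.exp (-(k * τ))) :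
    (∫ τ in (0:ℝ)..t, |f τ|) ≤ B / k := by
  have hd : ∀ x : ℝ, HasDerivAt (fun τ => -(B / k) * Real.exp (-(k * τ)))
      (B * Real.exp (-(k * x))) x := by
    intro x
    have h1 : HasDerivAt (fun τ : ℝ => -(k * τ)) (-(k * 1)) x :=
      ((hasDerivAt_id x).const_mul k).neg
    have h2 := (h1.exp).const_mul (-(B / k))
    have h3 : B / k * k = B := div_mul_cancel₀ B hk.ne'
    refine h2.congr_deriv ?_
    linear_combination Real.exp (-(k * x)) * h3
  have hc : Continuous (fun τ : ℝ => B * Real.exp (-(k * τ))) := by fun_prop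
  have h1 : ‖∫ τ in (0:ℝ)..t, |f τ|‖ ≤ ∫ τ in (0:ℝ)..t, B * Real.exp (-(k * τ)) := by
    apply intervalIntegral.norm_integral_le_of_norm_le ht _ (hc.intervalIntegrable _ _)
    have hne : ∀ᵐ τ : ℝ, τ ≠ t := by
      simp [ae_iff]
    filter_upwards [hne] with τ hτ hm
    rw [Real.norm_eq_abs, abs_abs]
    exact hf τ hm.1 (lt_of_le_of_ne hm.2 hτ)
  have h2 : ∫ τ in (0:ℝ)..t, B * Real.exp (-(k * τ)) =
      -(B / k) * Real.exp (-(k * t)) - -(B / k) * Real.exp (-(k * 0)) :=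
    intervalIntegral.integral_eq_sub_of_hasDerivAt (fun x _ => hd x) (hc.intervalIntegrable _ _)
  have h3 := (le_abs_self _).trans (h1.trans_eq h2)
  have h4 : 0 ≤ B / k * Real.exp (-(k * t)) := by positivity
  simp at h3
  linarith

lemma aux_tail (f : ℝ → ℝ) (B k t : ℝ) (hk : 0 < k)
    (hf : ∀ τ, t < τ → |f τ| ≤ B * Real.exp (-(k * τ))) :
    |∫ τ in Set.Ioi t, f τ| ≤ B / k * Real.exp (-(k * t)) := by
  have hi : IntegrableOn (fun τ : ℝ => B * Real.exp (-(k * τ))) (Set.Ioi t) := by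
    have := (integrableOn_exp_mul_Ioi (a := -k) (by linarith) t).const_mul B
    simpa [IntegrableOn] using this
  have h1 : ‖∫ τ in Set.Ioi t, f τ‖ ≤ ∫ τ in Set.Ioi t, B * Real.exp (-(k * τ)) := by
    apply norm_integral_le_of_norm_le hi
    filter_upwards [ae_restrict_mem measurableSet_Ioi] with τ hτ
    exact hf τ hτ
  have h2 : ∫ τ in Set.Ioi t, B * Real.exp (-(k * τ)) = B / k * Real.exp (-(k * t)) := by
    have := integral_exp_mul_Ioi (a := -k) (by linarith) t
    rw [integral_const_mul]
    simp only [neg_mul] at this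
    rw [this]
    field_simp
  rw [← h2]; exact h1

/-- Boundary estimates: the time integrals of the boundary traces of `φ`, `φ_ξ`, `ψ_ξ`,
`φ_t`, `φ_{tξ}`, `ψ_{tξ}` are controlled by `δ⁻¹e^(−c₋β)`, `e^(−c₋β)`, `e^(−c₋β)`,
`e^(−c₋β)`, `δe^(−c₋β)`, `δe^(−c₋β)` respectively. -/
theorem boundary_term_estimates (γ μ vm vp C₀ K : ℝ) (hγ : 1 < γ) (hμ : 0 < μ)
    (hvm : 0 < vm) (hv : vm < vp) (hC₀ : 0 < C₀) (hK : 0 < K) :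
    ∃ C > 0, ∀ S : NSSetting γ μ vm vp C₀ K, ∀ t : ℝ, 0 ≤ t → t ≤ S.T →
      (∫ τ in (0:ℝ)..t, |S.φ τ 0|) ≤ C * S.δ⁻¹ * Real.exp (-(S.cm * S.β)) ∧
      (∫ τ in (0:ℝ)..t, |px S.φ τ 0|) ≤ C * Real.exp (-(S.cm * S.β)) ∧
      (∫ τ in (0:ℝ)..t, |px S.ψ τ 0|) ≤ C * Real.exp (-(S.cm * S.β)) ∧
      (∫ τ in (0:ℝ)..t, |pt S.φ τ 0|) ≤ C * Real.exp (-(S.cm * S.β)) ∧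
      (∫ τ in (0:ℝ)..t, |pt (px S.φ) τ 0|) ≤ C * S.δ * Real.exp (-(S.cm * S.β)) ∧
      (∫ τ in (0:ℝ)..t, |pt (px S.ψ) τ 0|) ≤ C * S.δ * Real.exp (-(S.cm * S.β)) := by
  have hp : vp ^ (-γ) < vm ^ (-γ) := Real.rpow_lt_rpow_of_neg hvm hv (by linarith)
  have hδ0 : 0 < vp - vm := by linarith
  set s0 := Real.sqrt ((vm ^ (-γ) - vp ^ (-γ)) / (vp - vm)) with hs0
  have hs0pos : 0 < s0 := Real.sqrt_pos.2 (div_pos (by linarith) hδ0)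
  refine ⟨C₀ * Real.exp (K ^ 2) * ((K ^ 2 + K) / s0 + K), by positivity, ?_⟩
  intro S t ht htT
  have hs : S.s = s0 := by
    rw [hs0, eq_comm, Real.sqrt_eq_iff_mul_self_eq (by apply div_nonneg <;> linarith) S.hspos.le,
      div_eq_iff hδ0.ne']
    have h1 := S.rh1
    have h2 := S.rh2
    linear_combination -S.s * h1 + h2
  have hδ : 0 < S.δ := by rw [S.hδ]; exact hδ0
  have hcm : 0 < S.cm := by
    have := S.hKcm.2
    by_contra h
    push Not at h
    nlinarith
  have hsm : S.sm < 0 := by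
    rw [S.hsm]
    have := div_pos S.humpos hvm
    linarith
  have hspos := S.hspos
  obtain ⟨a, ha⟩ : ∃ a, a = S.s - S.sm := ⟨_, rfl⟩
  have hapos : 0 < a := by linarith
  have has : s0 ≤ a := by linarith
  have hsma : |S.sm| ≤ a := by rw [abs_of_neg hsm]; linarith
  obtain ⟨X, hX⟩ : ∃ X, X = Real.exp (-(S.cm * S.β)) := ⟨_, rfl⟩
  obtain ⟨E, hE⟩ : ∃ E, E = Real.exp (K ^ 2) := ⟨_, rfl⟩
  have hXpos : 0 < X := hX ▸ Real.exp_pos _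
  have hEpos : 0 < E := hE ▸ Real.exp_pos _
  rw [← hX, ← hE]
  have hk : 0 < a * S.cm := by positivity
  have hx : ∀ τ, 0 ≤ τ → -(a * τ) + S.σ - S.β ≤ 0 := by
    intro τ hτ
    have := (le_abs_self S.σ).trans S.hβσ
    have : 0 ≤ a * τ := by positivity
    linarith
  have hexp : ∀ τ, Real.exp (S.cm * (-(a * τ) + S.σ - S.β)) ≤
      E * X * Real.exp (-(a * S.cm * τ)) := by
    intro τ
    rw [hX, hE, ← Real.exp_add, ← Real.exp_add]
    apply Real.exp_le_exp.2
    have h1 : S.cm * S.σ ≤ K ^ 2 := by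
      calc S.cm * S.σ ≤ S.cm * |S.σ| := by gcongr; exact le_abs_self _
        _ ≤ K * S.δ * |S.σ| := by gcongr; exact S.hKcm.1
        _ = K * (S.δ * |S.σ|) := by ring
        _ ≤ K * K := by gcongr; exact S.hσδ
        _ = K ^ 2 := by ring
    linarith
  have hV : ∀ τ, 0 ≤ τ → |S.V (-(a * τ) + S.σ - S.β) - vm| + |S.U (-(a * τ) + S.σ - S.β) - S.um|
      ≤ C₀ * S.δ * (E * X) * Real.exp (-(a * S.cm * τ)) := by
    intro τ hτ
    refine (S.decaym _ (hx τ hτ)).1.trans ?_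
    rw [mul_assoc (C₀ * S.δ)]
    exact mul_le_mul_of_nonneg_left (hexp τ) (by positivity)
  have hV' : ∀ τ, 0 ≤ τ → |deriv S.V (-(a * τ) + S.σ - S.β)| + |deriv S.U (-(a * τ) + S.σ - S.β)|
      ≤ C₀ * S.δ ^ 2 * (E * X) * Real.exp (-(a * S.cm * τ)) := by
    intro τ hτ
    refine (S.decaym _ (hx τ hτ)).2.trans ?_
    rw [mul_assoc (C₀ * S.δ ^ 2)]
    exact mul_le_mul_of_nonneg_left (hexp τ) (by positivity)
  have bφx : ∀ τ, 0 ≤ τ → τ ≤ S.T →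
      |px S.φ τ 0| ≤ C₀ * S.δ * (E * X) * Real.exp (-(a * S.cm * τ)) := by
    intro τ h0 h1
    rw [S.bdφx τ h0 h1, ← ha, abs_sub_comm]
    have := hV τ h0
    have := abs_nonneg (S.U (-(a * τ) + S.σ - S.β) - S.um)
    linarith
  have bψx : ∀ τ, 0 ≤ τ → τ ≤ S.T →
      |px S.ψ τ 0| ≤ C₀ * S.δ * (E * X) * Real.exp (-(a * S.cm * τ)) := by
    intro τ h0 h1
    rw [S.bdψx τ h0 h1, ← ha, abs_sub_comm]
    have := hV τ h0
    have := abs_nonneg (S.V (-(a * τ) + S.σ - S.β) - vm)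
    linarith
  have hq : S.δ / S.cm ≤ K := by rw [div_le_iff₀ hcm]; exact S.hKcm.2
  have hqi : 1 / S.cm ≤ K * S.δ⁻¹ := by
    rw [div_le_iff₀ hcm, mul_right_comm, ← div_eq_mul_inv, le_div_iff₀ hδ]
    linarith [S.hKcm.2]
  have hai : 1 / a ≤ 1 / s0 := one_div_le_one_div_of_le hs0pos has
  have hinner : ∀ τ, HasDerivAt (fun τ : ℝ => -(a * τ) + S.σ - S.β) (-a) τ := by
    intro τ
    have := ((((hasDerivAt_id τ).const_mul a).neg).add_const S.σ).sub_const S.β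
    simpa using this
  -- basic constants
  have hK1 : C₀ * S.δ * (E * X) / (a * S.cm) ≤ C₀ * E * (K / s0) * X := by
    calc C₀ * S.δ * (E * X) / (a * S.cm) = C₀ * E * ((S.δ / S.cm) * (1 / a)) * X := by
          field_simp
      _ ≤ C₀ * E * (K * (1 / s0)) * X := by gcongr
      _ = _ := by ring
  have hK2 : C₀ * S.δ * (E * X) / S.cm ≤ C₀ * E * K * X := by
    calc C₀ * S.δ * (E * X) / S.cm = C₀ * E * (S.δ / S.cm) * X := by field_simp
      _ ≤ _ := by gcongr
  have hsplit : (K ^ 2 + K) / s0 + K = K ^ 2 / s0 + K / s0 + K := by ring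
  have p1 : 0 ≤ C₀ * E * (K ^ 2 / s0) * X := by positivity
  have p2 : 0 ≤ C₀ * E * (K / s0) * X := by positivity
  have p3 : 0 ≤ C₀ * E * K * X := by positivity
  have hder : ∀ (f : ℝ → ℝ) (W : ℝ → ℝ) (w : ℝ), ContDiff ℝ 2 W →
      (∀ τ, 0 ≤ τ → τ ≤ S.T → f τ = w - W (-(a * τ) + S.σ - S.β)) →
      ∀ τ, 0 < τ → τ < t → |deriv f τ| = a * |deriv W (-(a * τ) + S.σ - S.β)| := by
    intro f W w hW hf τ h0 h1
    have hWd : HasDerivAt W (deriv W (-(a * τ) + S.σ - S.β)) (-(a * τ) + S.σ - S.β) :=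
      ((hW.differentiable (by norm_num)) _).hasDerivAt
    have h2 := (hWd.comp τ (hinner τ)).const_sub w
    have h3 : f =ᶠ[nhds τ] (fun τ => w - (W ∘ fun τ : ℝ => -(a * τ) + S.σ - S.β) τ) := by
      filter_upwards [Ioo_mem_nhds h0 h1] with y hy
      exact hf y hy.1.le (hy.2.le.trans htT)
    rw [h3.deriv_eq, h2.deriv, abs_neg, abs_mul, abs_neg, abs_of_pos hapos, mul_comm]
  have hfin : a * (C₀ * S.δ ^ 2 * (E * X)) / (a * S.cm) ≤
      C₀ * E * ((K ^ 2 + K) / s0 + K) * S.δ * X := by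
    rw [mul_div_mul_left _ _ hapos.ne']
    calc C₀ * S.δ ^ 2 * (E * X) / S.cm = (C₀ * S.δ * (E * X) / S.cm) * S.δ := by ring
      _ ≤ (C₀ * E * K * X) * S.δ := by gcongr
      _ ≤ (C₀ * E * ((K ^ 2 + K) / s0 + K) * X) * S.δ := by
          gcongr
          rw [hsplit]
          have : 0 ≤ K ^ 2 / s0 + K / s0 := by positivity
          linarith
      _ = _ := by ring
  refine ⟨?_, ?_, ?_, ?_, ?_, ?_⟩
  · refine (aux_int _ (C₀ * E * K * X) (a * S.cm) t ht hk p3 ?_).trans ?_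
    · intro τ h0 h1
      rw [S.bdφ τ h0.le (h1.le.trans htT), ← ha, abs_neg, abs_mul, abs_of_pos hapos]
      have h2 := aux_tail (fun τ => S.V (-(a * τ) + S.σ - S.β) - vm)
        (C₀ * S.δ * (E * X)) (a * S.cm) τ hk (by
          intro r hr
          have := hV r (h0.le.trans hr.le)
          have := abs_nonneg (S.U (-(a * r) + S.σ - S.β) - S.um)
          linarith)
      calc _ ≤ a * (C₀ * S.δ * (E * X) / (a * S.cm) * Real.exp (-(a * S.cm * τ))) := by gcongr
        _ = (C₀ * S.δ * (E * X) / S.cm) * Real.exp (-(a * S.cm * τ)) := by field_simp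
        _ ≤ _ := by gcongr
    · calc C₀ * E * K * X / (a * S.cm) = C₀ * E * K * X * ((1 / a) * (1 / S.cm)) := by
            field_simp
        _ ≤ C₀ * E * K * X * ((1 / s0) * (K * S.δ⁻¹)) := by gcongr
        _ = C₀ * E * (K ^ 2 / s0) * S.δ⁻¹ * X := by ring
        _ ≤ _ := by
          gcongr
          rw [hsplit]
          have : 0 ≤ K / s0 := by positivity
          linarith
  · refine (aux_int _ _ (a * S.cm) t ht hk (by positivity)
      (fun τ h0 h1 => bφx τ h0.le (h1.le.trans htT))).trans ?_
    rw [hsplit]; linarith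
  · refine (aux_int _ _ (a * S.cm) t ht hk (by positivity)
      (fun τ h0 h1 => bψx τ h0.le (h1.le.trans htT))).trans ?_
    rw [hsplit]; linarith
  · refine (aux_int _ ((a + 1) * (C₀ * S.δ * (E * X))) (a * S.cm) t ht hk (by positivity)
      (fun τ h0 h1 => ?_)).trans ?_
    · have h2 := S.eq1 τ 0 h0.le (h1.le.trans htT) le_rfl
      have h3 : pt S.φ τ 0 = S.sm * px S.φ τ 0 + px S.ψ τ 0 := by linarith
      rw [h3]
      refine (abs_add_le _ _).trans ?_
      rw [abs_mul]
      have h4 := mul_le_mul hsma (bφx τ h0.le (h1.le.trans htT)) (abs_nonneg _) hapos.le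
      have h5 := bψx τ h0.le (h1.le.trans htT)
      linarith
    · have h6 : (a + 1) * (C₀ * S.δ * (E * X)) / (a * S.cm) =
          C₀ * S.δ * (E * X) / S.cm + C₀ * S.δ * (E * X) / (a * S.cm) := by
        field_simp
      rw [h6, hsplit]; linarith
  · refine (aux_int _ (a * (C₀ * S.δ ^ 2 * (E * X))) (a * S.cm) t ht hk (by positivity)
      (fun τ h0 h1 => ?_)).trans hfin
    have h2 := hder (fun τ => px S.φ τ 0) S.V vm S.hVC2
      (fun τ h0 h1 => by simpa only [← ha] using S.bdφx τ h0 h1) τ h0 h1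
    unfold pt
    rw [h2, mul_assoc]
    have h3 := hV' τ h0.le
    have := abs_nonneg (deriv S.U (-(a * τ) + S.σ - S.β))
    gcongr
    linarith
  · refine (aux_int _ (a * (C₀ * S.δ ^ 2 * (E * X))) (a * S.cm) t ht hk (by positivity)
      (fun τ h0 h1 => ?_)).trans hfin
    have h2 := hder (fun τ => px S.ψ τ 0) S.U S.um S.hUC2
      (fun τ h0 h1 => by simpa only [← ha] using S.bdψx τ h0 h1) τ h0 h1
    unfold pt
    rw [h2, mul_assoc]
    have h3 := hV' τ h0.le
    have := abs_nonneg (deriv S.V (-(a * τ) + S.σ - S.β))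
    gcongr
    linarith
end

section
/- For every 0 ≤ t ≤ T: ∫₀^∞ Φ(v(t, ξ), V(t, ξ)) dξ + ‖ψ_ξ(t)‖² + ∫₀^t ∫₀^∞ (ψ_ξξ²/v) dξ dτ ≲ ∫₀^∞ Φ(v(0, ξ), V(0, ξ)) dξ + ‖ψ₀′‖² + e^{−c_−β} + δ²m^{γ+2} ∫₀^t ∫₀^∞ φ_ξ² dξ dτ. -/
open MeasureTheory Real Filter

section Calculus

lemma px_hasDerivAt {F : ℝ → ℝ → ℝ} (hF : ContDiff ℝ (⊤ : ℕ∞) (Function.uncurry F)) (t ξ : ℝ) :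
    HasDerivAt (fun y => F t y) (px F t ξ) ξ := by
  have h1 : DifferentiableAt ℝ (Function.uncurry F) (t, ξ) :=
    (hF.differentiable (by simp)).differentiableAt
  have h2 : DifferentiableAt ℝ (fun y : ℝ => (t, y)) ξ := by fun_prop
  exact (DifferentiableAt.comp ξ h1 h2).hasDerivAt

lemma pt_hasDerivAt {F : ℝ → ℝ → ℝ} (hF : ContDiff ℝ (⊤ : ℕ∞) (Function.uncurry F)) (t ξ : ℝ) :
    HasDerivAt (fun τ => F τ ξ) (pt F t ξ) t := by
  have h1 : DifferentiableAt ℝ (Function.uncurry F) (t, ξ) :=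
    (hF.differentiable (by simp)).differentiableAt
  have h2 : DifferentiableAt ℝ (fun y : ℝ => (y, ξ)) t := by fun_prop
  exact (DifferentiableAt.comp t h1 h2).hasDerivAt

lemma px_eq_fderiv {F : ℝ → ℝ → ℝ} (hF : ContDiff ℝ (⊤ : ℕ∞) (Function.uncurry F)) (t ξ : ℝ) :
    px F t ξ = fderiv ℝ (Function.uncurry F) (t, ξ) (0, 1) := by
  have h1 : HasFDerivAt (Function.uncurry F) (fderiv ℝ (Function.uncurry F) (t, ξ)) (t, ξ) :=
    (hF.differentiable (by simp)).differentiableAt.hasFDerivAt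
  have h2 : HasDerivAt (fun y : ℝ => (t, y)) ((0 : ℝ), (1 : ℝ)) ξ :=
    (hasDerivAt_const ξ t).prodMk (hasDerivAt_id ξ)
  exact (h1.comp_hasDerivAt ξ h2).deriv

lemma pt_eq_fderiv {F : ℝ → ℝ → ℝ} (hF : ContDiff ℝ (⊤ : ℕ∞) (Function.uncurry F)) (t ξ : ℝ) :
    pt F t ξ = fderiv ℝ (Function.uncurry F) (t, ξ) (1, 0) := by
  have h1 : HasFDerivAt (Function.uncurry F) (fderiv ℝ (Function.uncurry F) (t, ξ)) (t, ξ) :=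
    (hF.differentiable (by simp)).differentiableAt.hasFDerivAt
  have h2 : HasDerivAt (fun y : ℝ => (y, ξ)) ((1 : ℝ), (0 : ℝ)) t :=
    (hasDerivAt_id t).prodMk (hasDerivAt_const t ξ)
  exact (h1.comp_hasDerivAt t h2).deriv

lemma px_contDiff {F : ℝ → ℝ → ℝ} (hF : ContDiff ℝ (⊤ : ℕ∞) (Function.uncurry F)) :
    ContDiff ℝ (⊤ : ℕ∞) (Function.uncurry (px F)) := by
  have : Function.uncurry (px F) = fun z : ℝ × ℝ => fderiv ℝ (Function.uncurry F) z (0, 1) := by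
    ext ⟨t, ξ⟩; exact px_eq_fderiv hF t ξ
  rw [this]
  exact (hF.fderiv_right (by simp)).clm_apply contDiff_const

lemma pt_contDiff {F : ℝ → ℝ → ℝ} (hF : ContDiff ℝ (⊤ : ℕ∞) (Function.uncurry F)) :
    ContDiff ℝ (⊤ : ℕ∞) (Function.uncurry (pt F)) := by
  have : Function.uncurry (pt F) = fun z : ℝ × ℝ => fderiv ℝ (Function.uncurry F) z (1, 0) := by
    ext ⟨t, ξ⟩; exact pt_eq_fderiv hF t ξ
  rw [this]
  exact (hF.fderiv_right (by simp)).clm_apply contDiff_const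

lemma px_pt_comm {F : ℝ → ℝ → ℝ} (hF : ContDiff ℝ (⊤ : ℕ∞) (Function.uncurry F)) (t ξ : ℝ) :
    px (pt F) t ξ = pt (px F) t ξ := by
  rw [px_eq_fderiv (pt_contDiff hF), pt_eq_fderiv (px_contDiff hF)]
  have e1 : Function.uncurry (px F) = fun z : ℝ × ℝ => fderiv ℝ (Function.uncurry F) z (0, 1) := by
    ext ⟨t, ξ⟩; exact px_eq_fderiv hF t ξ
  have e2 : Function.uncurry (pt F) = fun z : ℝ × ℝ => fderiv ℝ (Function.uncurry F) z (1, 0) := by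
    ext ⟨t, ξ⟩; exact pt_eq_fderiv hF t ξ
  have hd : DifferentiableAt ℝ (fderiv ℝ (Function.uncurry F)) (t, ξ) :=
    ((hF.fderiv_right (m := (⊤ : ℕ∞)) (by simp)).differentiable (by simp)).differentiableAt
  have hs : IsSymmSndFDerivAt ℝ (Function.uncurry F) (t, ξ) :=
    hF.contDiffAt.isSymmSndFDerivAt (by
      simp only [minSmoothness_of_isRCLikeNormedField]; exact WithTop.coe_le_coe.2 (le_top : (2 : ℕ∞) ≤ ⊤))
  rw [e1, e2, fderiv_clm_apply hd (by fun_prop), fderiv_clm_apply hd (by fun_prop)]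
  simpa using hs.eq (0, 1) (1, 0)

lemma Phi_eq {γ a b : ℝ} (hγ : 1 < γ) (ha : 0 < a) (hb : 0 < b) :
    Phi γ a b = b ^ (-γ) * (a - b) + (a ^ (1 - γ) - b ^ (1 - γ)) / (γ - 1) := by
  unfold Phi
  rw [integral_rpow]
  · rw [show -γ + 1 = 1 - γ by ring, show γ - 1 = -(1 - γ) by ring, div_neg]; ring
  · right
    refine ⟨by linarith, ?_⟩
    exact Set.notMem_uIcc_of_lt hb ha

lemma rpow_neg_hasDerivAt {r x : ℝ} (hx : 0 < x) :
    HasDerivAt (fun y : ℝ => y ^ (-r)) (-(r * x ^ (-r - 1))) x := by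
  have := Real.hasDerivAt_rpow_const (x := x) (p := -r) (Or.inl hx.ne')
  convert this using 1; ring

lemma Phi_hasDerivAt {γ : ℝ} (hγ : 1 < γ) {a b : ℝ → ℝ} {a' b' x : ℝ} (ha : HasDerivAt a a' x)
    (hb : HasDerivAt b b' x) (ha0 : 0 < a x) (hb0 : 0 < b x) :
    HasDerivAt (fun y => Phi γ (a y) (b y))
      ((b x ^ (-γ) - a x ^ (-γ)) * a' - γ * b x ^ (-γ - 1) * (a x - b x) * b') x := by
  have h1 : (fun y => Phi γ (a y) (b y)) =ᶠ[nhds x] fun y =>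
      b y ^ (-γ) * (a y - b y) + (a y ^ (1 - γ) - b y ^ (1 - γ)) / (γ - 1) := by
    filter_upwards [ha.continuousAt.eventually (lt_mem_nhds ha0),
      hb.continuousAt.eventually (lt_mem_nhds hb0)] with y h1 h2
    exact Phi_eq hγ h1 h2
  refine HasDerivAt.congr_of_eventuallyEq ?_ h1
  have hp := (rpow_neg_hasDerivAt (r := γ) hb0).comp x hb
  have hqa := (Real.hasDerivAt_rpow_const (x := a x) (p := 1 - γ) (Or.inl ha0.ne')).comp x ha
  have hqb := (Real.hasDerivAt_rpow_const (x := b x) (p := 1 - γ) (Or.inl hb0.ne')).comp x hb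
  have := (hp.mul (ha.sub hb)).add ((hqa.sub hqb).div_const (γ - 1))
  refine this.congr_deriv ?_
  have hγ' : γ - 1 ≠ 0 := by linarith
  rw [show 1 - γ - 1 = -γ by ring]
  simp only [Function.comp, Pi.sub_apply]
  field_simp
  ring

/-- tangent line inequality by the mean value theorem -/
lemma tangent_le {r r' : ℝ → ℝ} {lo hi a b : ℝ}
    (hr : ∀ x ∈ Set.Icc lo hi, HasDerivAt r (r' x) x) (hm : MonotoneOn r' (Set.Icc lo hi))
    (ha : a ∈ Set.Icc lo hi) (hb : b ∈ Set.Icc lo hi) : r' b * (a - b) ≤ r a - r b := by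
  rcases lt_trichotomy a b with h | h | h
  · have hsub : Set.Icc a b ⊆ Set.Icc lo hi := Set.Icc_subset_Icc ha.1 hb.2
    obtain ⟨c, hc, he⟩ := exists_hasDerivAt_eq_slope r r' h
      (fun x hx => (hr x (hsub hx)).continuousAt.continuousWithinAt)
      (fun x hx => hr x (hsub (Set.Ioo_subset_Icc_self hx)))
    have h1 : r' c ≤ r' b := hm (hsub (Set.Ioo_subset_Icc_self hc)) hb hc.2.le
    have h2 : r b - r a = r' c * (b - a) := by
      rw [he]; field_simp [sub_ne_zero.2 h.ne']
    nlinarith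
  · simp [h]
  · have hsub : Set.Icc b a ⊆ Set.Icc lo hi := Set.Icc_subset_Icc hb.1 ha.2
    obtain ⟨c, hc, he⟩ := exists_hasDerivAt_eq_slope r r' h
      (fun x hx => (hr x (hsub hx)).continuousAt.continuousWithinAt)
      (fun x hx => hr x (hsub (Set.Ioo_subset_Icc_self hx)))
    have h1 : r' b ≤ r' c := hm hb (hsub (Set.Ioo_subset_Icc_self hc)) hc.1.le
    have h2 : r a - r b = r' c * (a - b) := by
      rw [he]; field_simp [sub_ne_zero.2 h.ne']
    nlinarith

lemma rpow_neg_tangent {r a b : ℝ} (hr : 0 < r) (ha : 0 < a) (hb : 0 < b) :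
    -(r * b ^ (-r - 1)) * (a - b) ≤ a ^ (-r) - b ^ (-r) := by
  refine tangent_le (r := fun y => y ^ (-r)) (r' := fun x => -(r * x ^ (-r - 1)))
    (lo := min a b) (hi := max a b)
    (fun x hx => rpow_neg_hasDerivAt (lt_of_lt_of_le (lt_min ha hb) hx.1)) ?_ (by simp) (by simp)
  intro x hx y hy hxy
  have hx0 : 0 < x := lt_of_lt_of_le (lt_min ha hb) hx.1
  have := Real.rpow_le_rpow_of_nonpos hx0 hxy (by linarith : -r - 1 ≤ 0)
  simp only
  nlinarith

lemma rpow_neg_lip {r a x y : ℝ} (hr : 0 < r) (ha : 0 < a) (hx : a ≤ x) (hy : a ≤ y) :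
    |x ^ (-r) - y ^ (-r)| ≤ r * a ^ (-r - 1) * |x - y| := by
  wlog h : x ≤ y generalizing x y
  · rw [abs_sub_comm, abs_sub_comm x y]; exact this hy hx (le_of_not_ge h)
  have hx0 := ha.trans_le hx
  have h1 := rpow_neg_tangent hr (hx0.trans_le h) hx0
  have h2 := Real.rpow_le_rpow_of_nonpos hx0 h (by linarith : -r ≤ 0)
  have h3 := Real.rpow_le_rpow_of_nonpos ha hx (by linarith : -r - 1 ≤ 0)
  rw [abs_of_nonneg (by linarith), abs_of_nonpos (by linarith)]
  have h4 : r * x ^ (-r - 1) * (y - x) ≤ r * a ^ (-r - 1) * (y - x) := by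
    gcongr
  linarith

lemma Phi_lower {γ a b B : ℝ} (hγ : 1 < γ) (ha : 0 < a) (hb : 0 < b) (haB : a ≤ B) (hbB : b ≤ B) :
    γ * B ^ (-γ - 1) / 2 * (a - b) ^ 2 ≤ Phi γ a b := by
  rw [Phi_eq hγ ha hb]
  set c := γ * B ^ (-γ - 1) / 2 with hc
  have hγ' : γ - 1 ≠ 0 := by linarith
  have hmin := lt_min ha hb
  have := tangent_le (r := fun y => y ^ (1 - γ) / (γ - 1) - c * y ^ 2)
    (r' := fun x => - x ^ (-γ) - 2 * c * x) (lo := min a b) (hi := B) (a := a) (b := b) ?_ ?_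
    (by simp [haB]) (by simp [hbB])
  · have e : (a ^ (1 - γ) - b ^ (1 - γ)) / (γ - 1) = a ^ (1 - γ) / (γ - 1) - b ^ (1 - γ) / (γ - 1) := by
      ring
    rw [e]
    nlinarith
  · intro x hx
    have hx0 : 0 < x := lt_of_lt_of_le hmin hx.1
    have h1 := (Real.hasDerivAt_rpow_const (x := x) (p := 1 - γ) (Or.inl hx0.ne')).div_const (γ - 1)
    have h2 := ((hasDerivAt_id x).pow 2).const_mul c
    refine (h1.sub h2).congr_deriv ?_
    rw [show 1 - γ - 1 = -γ by ring]
    simp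
    field_simp
    ring
  · intro x hx y hy hxy
    have hx0 : 0 < x := lt_of_lt_of_le hmin hx.1
    have hy0 : 0 < y := lt_of_lt_of_le hmin hy.1
    have h1 := rpow_neg_tangent (r := γ) (by linarith) hx0 hy0
    have h3 := Real.rpow_le_rpow_of_nonpos hy0 hy.2 (by linarith : -γ - 1 ≤ 0)
    have h4 : γ * B ^ (-γ - 1) * (y - x) ≤ γ * y ^ (-γ - 1) * (y - x) := by
      gcongr
    simp only
    rw [hc]
    nlinarith

lemma Phi_nonneg {γ a b : ℝ} (hγ : 1 < γ) (ha : 0 < a) (hb : 0 < b) : 0 ≤ Phi γ a b := by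
  refine le_trans ?_ (Phi_lower hγ ha hb (le_max_left a b) (le_max_right a b))
  have : 0 < max a b := lt_max_of_lt_left ha
  positivity

lemma Phi_upper' {γ a b : ℝ} (hγ : 1 < γ) (ha : 0 < a) (hb : 0 < b) :
    Phi γ a b ≤ (b ^ (-γ) - a ^ (-γ)) * (a - b) := by
  have h := Phi_nonneg hγ hb ha
  rw [Phi_eq hγ hb ha] at h
  rw [Phi_eq hγ ha hb]
  have e : (a ^ (1 - γ) - b ^ (1 - γ)) / (γ - 1) = - ((b ^ (1 - γ) - a ^ (1 - γ)) / (γ - 1)) := by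
    ring
  rw [e]; nlinarith

lemma Phi_upper {γ a b l : ℝ} (hγ : 1 < γ) (hl : 0 < l) (ha : l ≤ a) (hb : l ≤ b) :
    Phi γ a b ≤ γ * l ^ (-γ - 1) * (a - b) ^ 2 := by
  have h1 := Phi_upper' hγ (hl.trans_le ha) (hl.trans_le hb)
  have h2 := rpow_neg_lip (r := γ) (by linarith) hl hb ha
  calc _ ≤ _ := h1
    _ ≤ |b ^ (-γ) - a ^ (-γ)| * |a - b| := by rw [← abs_mul]; exact le_abs_self _
    _ ≤ γ * l ^ (-γ - 1) * |b - a| * |a - b| := by gcongr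
    _ = _ := by rw [abs_sub_comm b a, mul_assoc, ← sq, sq_abs]

/-- second order Taylor remainder of the pressure -/
lemma pressure_quad {γ a b l : ℝ} (hγ : 1 < γ) (hl : 0 < l) (ha : l ≤ a) (hb : l ≤ b) :
    a ^ (-γ) - b ^ (-γ) + γ * b ^ (-γ - 1) * (a - b) ≤
      γ * (γ + 1) * l ^ (-γ - 2) * (a - b) ^ 2 := by
  have h1 := rpow_neg_tangent (r := γ) (by linarith) (hl.trans_le hb) (hl.trans_le ha)
  have h2 := rpow_neg_lip (r := γ + 1) (by linarith) hl hb ha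
  rw [show -(γ + 1) - 1 = -γ - 2 by ring, show -(γ + 1) = -γ - 1 by ring] at h2
  calc _ ≤ γ * ((b ^ (-γ - 1) - a ^ (-γ - 1)) * (a - b)) := by nlinarith
    _ ≤ γ * (|b ^ (-γ - 1) - a ^ (-γ - 1)| * |a - b|) := by
      rw [← abs_mul]; gcongr; exact le_abs_self _
    _ ≤ γ * ((γ + 1) * l ^ (-γ - 2) * |b - a| * |a - b|) := by gcongr
    _ = _ := by rw [abs_sub_comm b a]; have := sq_abs (a - b); rw [← this]; ring

lemma pressure_quad_nonneg {γ a b : ℝ} (hγ : 1 < γ) (ha : 0 < a) (hb : 0 < b) :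
    0 ≤ a ^ (-γ) - b ^ (-γ) + γ * b ^ (-γ - 1) * (a - b) := by
  have h1 := rpow_neg_tangent (r := γ) (by linarith) ha hb
  linarith

end Calculus

section Integration

lemma exists_clamp {F : ℝ → ℝ → ℝ} {t R : ℝ} (ht : 0 ≤ t) (hR : 0 ≤ R)
    (hF : ContinuousOn (Function.uncurry F) (Set.Icc 0 t ×ˢ Set.Icc 0 R)) :
    ∃ F' : ℝ → ℝ → ℝ, Continuous (Function.uncurry F') ∧
      ∀ τ ∈ Set.Icc 0 t, ∀ ξ ∈ Set.Icc 0 R, F' τ ξ = F τ ξ := by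
  refine ⟨fun τ ξ => F (max 0 (min τ t)) (max 0 (min ξ R)), ?_, ?_⟩
  · have h1 : Continuous fun z : ℝ × ℝ => (max 0 (min z.1 t), max 0 (min z.2 R)) := by fun_prop
    refine hF.comp_continuous h1 ?_
    intro z
    simp [ht, hR]
  · intro τ hτ ξ hξ
    simp [hτ.1, hτ.2, hξ.1, hξ.2]

lemma continuousOn_param {F : ℝ → ℝ → ℝ} {t R : ℝ} (ht : 0 ≤ t) (hR : 0 ≤ R)
    (hF : ContinuousOn (Function.uncurry F) (Set.Icc 0 t ×ˢ Set.Icc 0 R)) :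
    ContinuousOn (fun τ => ∫ ξ in (0:ℝ)..R, F τ ξ) (Set.Icc 0 t) := by
  obtain ⟨F', hc, he⟩ := exists_clamp ht hR hF
  have h1 := intervalIntegral.continuous_parametric_intervalIntegral_of_continuous' (μ := volume)
    hc 0 R
  refine h1.continuousOn.congr ?_
  intro τ hτ
  refine intervalIntegral.integral_congr ?_
  intro ξ hξ
  rw [Set.uIcc_of_le hR] at hξ
  exact (he τ hτ ξ hξ).symm

lemma interval_swap {F : ℝ → ℝ → ℝ} {t R : ℝ} (ht : 0 ≤ t) (hR : 0 ≤ R)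
    (hF : ContinuousOn (Function.uncurry F) (Set.Icc 0 t ×ˢ Set.Icc 0 R)) :
    ∫ ξ in (0:ℝ)..R, ∫ τ in (0:ℝ)..t, F τ ξ = ∫ τ in (0:ℝ)..t, ∫ ξ in (0:ℝ)..R, F τ ξ := by
  simp only [intervalIntegral.integral_of_le ht, intervalIntegral.integral_of_le hR]
  refine (integral_integral_swap ?_).symm
  rw [Measure.prod_restrict]
  have h1 : IntegrableOn (Function.uncurry F) (Set.Icc 0 t ×ˢ Set.Icc 0 R)
      ((volume : Measure ℝ).prod volume) :=
    hF.integrableOn_compact (isCompact_Icc.prod isCompact_Icc)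
  exact h1.mono_set (Set.prod_mono Set.Ioc_subset_Icc_self Set.Ioc_subset_Icc_self)

lemma slice_snd {F : ℝ → ℝ → ℝ} {t R τ : ℝ} (hτ : τ ∈ Set.Icc 0 t)
    (hF : ContinuousOn (Function.uncurry F) (Set.Icc 0 t ×ˢ Set.Icc 0 R)) :
    ContinuousOn (F τ) (Set.Icc 0 R) := by
  have : ContinuousOn (fun ξ : ℝ => (τ, ξ)) (Set.Icc 0 R) := by fun_prop
  exact hF.comp this (fun ξ hξ => ⟨hτ, hξ⟩)

lemma slice_fst {F : ℝ → ℝ → ℝ} {t R ξ : ℝ} (hξ : ξ ∈ Set.Icc 0 R)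
    (hF : ContinuousOn (Function.uncurry F) (Set.Icc 0 t ×ˢ Set.Icc 0 R)) :
    ContinuousOn (fun τ => F τ ξ) (Set.Icc 0 t) := by
  have : ContinuousOn (fun τ : ℝ => (τ, ξ)) (Set.Icc 0 t) := by fun_prop
  exact hF.comp this (fun τ hτ => ⟨hτ, hξ⟩)

lemma ii_of_contOn {f : ℝ → ℝ} {R : ℝ} (hR : 0 ≤ R) (hf : ContinuousOn f (Set.Icc 0 R)) :
    IntervalIntegrable f volume 0 R := by
  apply ContinuousOn.intervalIntegrable
  rwa [Set.uIcc_of_le hR]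

lemma balance {t R : ℝ} (ht : 0 ≤ t) (hR : 0 ≤ R) {e et J Jx G : ℝ → ℝ → ℝ} {w w' : ℝ → ℝ}
    (hw : ∀ x, HasDerivAt w (w' x) x) (hw'c : Continuous w') (hwR : w R = 0)
    (he : ∀ τ ∈ Set.Icc 0 t, ∀ ξ ∈ Set.Icc 0 R, HasDerivAt (fun τ => e τ ξ) (et τ ξ) τ)
    (hJ : ∀ τ ∈ Set.Icc 0 t, ∀ ξ ∈ Set.Icc 0 R, HasDerivAt (J τ) (Jx τ ξ) ξ)
    (hec : ContinuousOn (Function.uncurry e) (Set.Icc 0 t ×ˢ Set.Icc 0 R))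
    (hetc : ContinuousOn (Function.uncurry et) (Set.Icc 0 t ×ˢ Set.Icc 0 R))
    (hJxc : ContinuousOn (Function.uncurry Jx) (Set.Icc 0 t ×ˢ Set.Icc 0 R))
    (hJc : ContinuousOn (Function.uncurry J) (Set.Icc 0 t ×ˢ Set.Icc 0 R))
    (hGc : ContinuousOn (Function.uncurry G) (Set.Icc 0 t ×ˢ Set.Icc 0 R))
    (heq : ∀ τ ∈ Set.Icc 0 t, ∀ ξ ∈ Set.Ioc 0 R, et τ ξ = Jx τ ξ + G τ ξ) :
    (∫ ξ in (0:ℝ)..R, w ξ * e t ξ) - (∫ ξ in (0:ℝ)..R, w ξ * e 0 ξ) =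
      ∫ τ in (0:ℝ)..t, (-(w 0 * J τ 0) + ∫ ξ in (0:ℝ)..R, (w ξ * G τ ξ - w' ξ * J τ ξ)) := by
  have hwc : Continuous w := continuous_iff_continuousAt.2 fun x => (hw x).continuousAt
  have h0 : (0:ℝ) ∈ Set.Icc 0 t := ⟨le_rfl, ht⟩
  have h1 : t ∈ Set.Icc 0 t := ⟨ht, le_rfl⟩
  have i1 : IntervalIntegrable (fun ξ => w ξ * e t ξ) volume 0 R :=
    ii_of_contOn hR (hwc.continuousOn.mul (slice_snd h1 hec))
  have i2 : IntervalIntegrable (fun ξ => w ξ * e 0 ξ) volume 0 R :=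
    ii_of_contOn hR (hwc.continuousOn.mul (slice_snd h0 hec))
  rw [← intervalIntegral.integral_sub i1 i2]
  have s1 : ∫ ξ in (0:ℝ)..R, (w ξ * e t ξ - w ξ * e 0 ξ) =
      ∫ ξ in (0:ℝ)..R, ∫ τ in (0:ℝ)..t, w ξ * et τ ξ := by
    refine intervalIntegral.integral_congr fun ξ hξ => ?_
    rw [Set.uIcc_of_le hR] at hξ
    rw [intervalIntegral.integral_const_mul,
      intervalIntegral.integral_eq_sub_of_hasDerivAt (f := fun τ => e τ ξ)]
    · ring
    · intro τ hτ
      rw [Set.uIcc_of_le ht] at hτ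
      exact he τ hτ ξ hξ
    · exact ii_of_contOn ht (slice_fst hξ hetc)
  rw [s1, interval_swap (F := fun τ ξ => w ξ * et τ ξ) ht hR]
  · refine intervalIntegral.integral_congr fun τ hτ => ?_
    rw [Set.uIcc_of_le ht] at hτ
    have s2 : ∫ ξ in (0:ℝ)..R, w ξ * et τ ξ =
        ∫ ξ in (0:ℝ)..R, (w ξ * Jx τ ξ + w ξ * G τ ξ) := by
      refine intervalIntegral.integral_congr_ae (Filter.Eventually.of_forall fun ξ hξ => ?_)
      rw [Set.uIoc_of_le hR] at hξ
      rw [heq τ hτ ξ hξ]; ring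
    have j1 : IntervalIntegrable (fun ξ => w ξ * Jx τ ξ) volume 0 R :=
      ii_of_contOn hR (hwc.continuousOn.mul (slice_snd hτ hJxc))
    have j2 : IntervalIntegrable (fun ξ => w ξ * G τ ξ) volume 0 R :=
      ii_of_contOn hR (hwc.continuousOn.mul (slice_snd hτ hGc))
    have j3 : IntervalIntegrable (fun ξ => w' ξ * J τ ξ) volume 0 R :=
      ii_of_contOn hR (hw'c.continuousOn.mul (slice_snd hτ hJc))
    have s3 := intervalIntegral.integral_mul_deriv_eq_deriv_mul (a := 0) (b := R) (u := w) (v := J τ)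
      (u' := w') (v' := Jx τ) (fun x _ => hw x)
      (fun x hx => by rw [Set.uIcc_of_le hR] at hx; exact hJ τ hτ x hx)
      (hw'c.intervalIntegrable _ _) (ii_of_contOn hR (slice_snd hτ hJxc))
    rw [s2, intervalIntegral.integral_add j1 j2, intervalIntegral.integral_sub j2 j3, s3, hwR]
    ring
  · exact (hwc.comp continuous_snd).continuousOn.mul hetc

lemma gronwall_int {F : ℝ → ℝ} {T A B : ℝ} (hT : 0 ≤ T) (hF : ContinuousOn F (Set.Icc 0 T))
    (hA : 0 ≤ A) (hB : 0 ≤ B)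
    (h : ∀ t ∈ Set.Icc 0 T, F t ≤ A + B * ∫ τ in (0:ℝ)..t, F τ) :
    ∀ t ∈ Set.Icc 0 T, F t ≤ A * Real.exp (B * T) := by
  intro t ht
  set F' : ℝ → ℝ := fun τ => F (max 0 (min τ T)) with hF'
  have hc : Continuous F' := by
    have h1 : Continuous fun z : ℝ => max 0 (min z T) := by fun_prop
    exact hF.comp_continuous h1 (fun z => by simp [hT])
  have he : ∀ τ ∈ Set.Icc 0 T, F' τ = F τ := fun τ hτ => by simp [hF', hτ.1, hτ.2]
  have hi : ∀ t ∈ Set.Icc 0 T, ∫ τ in (0:ℝ)..t, F τ = ∫ τ in (0:ℝ)..t, F' τ := by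
    intro t ht
    refine intervalIntegral.integral_congr fun τ hτ => ?_
    rw [Set.uIcc_of_le ht.1] at hτ
    exact (he τ ⟨hτ.1, hτ.2.trans ht.2⟩).symm
  set Z : ℝ → ℝ := fun t => ∫ τ in (0:ℝ)..t, F' τ with hZ
  have hZd : ∀ x, HasDerivAt Z (F' x) x := fun x => hc.integral_hasStrictDerivAt 0 x |>.hasDerivAt
  have hWd : ∀ x, HasDerivAt (fun x => (A + B * Z x) * Real.exp (-(B * x)))
      ((B * F' x) * Real.exp (-(B * x)) + (A + B * Z x) * (Real.exp (-(B * x)) * (-(B * 1)))) x := by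
    intro x
    exact (((hZd x).const_mul B).const_add A).mul (((hasDerivAt_id x).const_mul B).neg.exp)
  have hanti : AntitoneOn (fun x => (A + B * Z x) * Real.exp (-(B * x))) (Set.Icc 0 T) := by
    refine antitoneOn_of_deriv_nonpos (convex_Icc 0 T)
      (fun x _ => (hWd x).continuousAt.continuousWithinAt)
      (fun x _ => (hWd x).differentiableAt.differentiableWithinAt) ?_
    intro x hx
    rw [interior_Icc] at hx
    have hx' := Set.Ioo_subset_Icc_self hx
    rw [(hWd x).deriv]
    have h1 := h x hx'
    rw [hi x hx', ← he x hx'] at h1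
    have h2 : F' x ≤ A + B * Z x := h1
    have h3 := Real.exp_pos (-(B * x))
    have h4 : 0 ≤ B * Real.exp (-(B * x)) := by positivity
    nlinarith
  have h5 := hanti (Set.left_mem_Icc.2 hT) ht ht.1
  simp only [hZ, intervalIntegral.integral_same] at h5
  simp only [mul_zero, add_zero, neg_zero, Real.exp_zero, mul_one] at h5
  have h6 := h t ht
  rw [hi t ht] at h6
  have h7 : Real.exp (-(B * t)) * Real.exp (B * t) = 1 := by rw [← Real.exp_add]; simp
  have h8 : A + B * Z t ≤ A * Real.exp (B * t) := by
    have := mul_le_mul_of_nonneg_right h5 (Real.exp_pos (B * t)).le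
    rwa [mul_assoc, h7, mul_one] at this
  calc F t ≤ _ := h6
    _ ≤ _ := h8
    _ ≤ _ := by gcongr; exact ht.2

lemma interpolation {R θ D : ℝ} (hR : 1 ≤ R) (hθ : 0 < θ) {ψ g gx : ℝ → ℝ}
    (hψ : ∀ x ∈ Set.Icc 0 R, HasDerivAt ψ (g x) x) (hg : ∀ x ∈ Set.Icc 0 R, HasDerivAt g (gx x) x)
    (hgx : ContinuousOn gx (Set.Icc 0 R)) (hb : ∀ x ∈ Set.Icc 0 R, |ψ x| ≤ 1) (h0 : |g 0| ≤ D) :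
    (∫ x in (0:ℝ)..R, (1 - x / R) ^ 2 * g x ^ 2) / R ^ 2 ≤
      θ * (∫ x in (0:ℝ)..R, (1 - x / R) ^ 4 * gx x ^ 2) + (2 * D + 4 + 1 / θ) / R ^ 2 := by
  have hR0 : 0 < R := by linarith
  have hψc : ContinuousOn ψ (Set.Icc 0 R) := fun x hx => (hψ x hx).continuousAt.continuousWithinAt
  have hgc : ContinuousOn g (Set.Icc 0 R) := fun x hx => (hg x hx).continuousAt.continuousWithinAt
  have hd : ∀ x ∈ Set.Icc 0 R, HasDerivAt (fun x => (1 - x / R) ^ 2 * g x * ψ x)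
      ((1 - x / R) ^ 2 * g x ^ 2 - (2 / R * ((1 - x / R) * g x * ψ x)
        - (1 - x / R) ^ 2 * gx x * ψ x)) x := by
    intro x hx
    have h1 : HasDerivAt (fun x : ℝ => 1 - x / R) (-(1 / R)) x :=
      ((hasDerivAt_id x).div_const R).const_sub 1
    refine (((h1.pow 2).mul (hg x hx)).mul (hψ x hx)).congr_deriv ?_
    simp
    ring
  have ηc : ContinuousOn (fun x : ℝ => 1 - x / R) (Set.Icc 0 R) := by fun_prop
  have i1 : IntervalIntegrable (fun x => (1 - x / R) ^ 2 * g x ^ 2) volume 0 R :=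
    ii_of_contOn hR0.le ((ηc.pow 2).mul (hgc.pow 2))
  have i2 : IntervalIntegrable (fun x => 2 / R * ((1 - x / R) * g x * ψ x)
        - (1 - x / R) ^ 2 * gx x * ψ x) volume 0 R := ii_of_contOn hR0.le (((continuousOn_const (c := 2 / R)).mul ((ηc.mul hgc).mul hψc)).sub
    (((ηc.pow 2).mul hgx).mul hψc))
  have i3 : IntervalIntegrable (fun x => (1 - x / R) ^ 4 * gx x ^ 2) volume 0 R :=
    ii_of_contOn hR0.le ((ηc.pow 4).mul (hgx.pow 2))
  have hftc := intervalIntegral.integral_eq_sub_of_hasDerivAt (a := 0) (b := R)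
    (fun x hx => hd x (by rwa [Set.uIcc_of_le hR0.le] at hx)) (i1.sub i2)
  simp only [div_self hR0.ne', sub_self] at hftc
  rw [intervalIntegral.integral_sub i1 i2] at hftc
  set I := ∫ x in (0:ℝ)..R, (1 - x / R) ^ 2 * g x ^ 2 with hI
  set I4 := ∫ x in (0:ℝ)..R, (1 - x / R) ^ 4 * gx x ^ 2 with hI4
  have hle : (∫ x in (0:ℝ)..R, (2 / R * ((1 - x / R) * g x * ψ x)
        - (1 - x / R) ^ 2 * gx x * ψ x)) ≤
      ∫ x in (0:ℝ)..R, (1 / 2 * ((1 - x / R) ^ 2 * g x ^ 2) +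
        (θ * R ^ 2 / 2 * ((1 - x / R) ^ 4 * gx x ^ 2) + (2 / R ^ 2 + 1 / (2 * θ * R ^ 2)))) := by
    refine intervalIntegral.integral_mono_on hR0.le i2
      ((i1.const_mul _).add ((i3.const_mul _).add intervalIntegrable_const)) ?_
    intro x hx
    have hb1 : ψ x ^ 2 ≤ 1 := by
      rw [← sq_abs]; exact pow_le_one₀ (abs_nonneg _) (hb x hx)
    set η := 1 - x / R
    have q1 : 2 / R * (η * g x * ψ x) ≤ 1 / 2 * (η ^ 2 * g x ^ 2) + 2 / R ^ 2 * ψ x ^ 2 := by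
      have : 0 ≤ 1 / 2 * (η * g x - 2 / R * ψ x) ^ 2 := by positivity
      have e : 1 / 2 * (η * g x - 2 / R * ψ x) ^ 2 =
        1 / 2 * (η ^ 2 * g x ^ 2) + 2 / R ^ 2 * ψ x ^ 2 - 2 / R * (η * g x * ψ x) := by
        field_simp; ring
      linarith
    have q2 : -(η ^ 2 * gx x * ψ x) ≤ θ * R ^ 2 / 2 * (η ^ 4 * gx x ^ 2) +
        1 / (2 * θ * R ^ 2) * ψ x ^ 2 := by
      have : 0 ≤ θ * R ^ 2 / 2 * (η ^ 2 * gx x + ψ x / (θ * R ^ 2)) ^ 2 := by positivity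
      have e : θ * R ^ 2 / 2 * (η ^ 2 * gx x + ψ x / (θ * R ^ 2)) ^ 2 =
        θ * R ^ 2 / 2 * (η ^ 4 * gx x ^ 2) +
        1 / (2 * θ * R ^ 2) * ψ x ^ 2 + (η ^ 2 * gx x * ψ x) := by
        field_simp; ring
      linarith
    have q3 : 2 / R ^ 2 * ψ x ^ 2 ≤ 2 / R ^ 2 * 1 := by gcongr
    have q4 : 1 / (2 * θ * R ^ 2) * ψ x ^ 2 ≤ 1 / (2 * θ * R ^ 2) * 1 := by gcongr
    linarith
  rw [intervalIntegral.integral_add (i1.const_mul _) ((i3.const_mul _).add intervalIntegrable_const),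
    intervalIntegral.integral_add (i3.const_mul _) intervalIntegrable_const,
    intervalIntegral.integral_const_mul, intervalIntegral.integral_const_mul,
    intervalIntegral.integral_const] at hle
  simp only [sub_zero, smul_eq_mul, ← hI, ← hI4] at hle
  have hg0 : -(g 0 * ψ 0) ≤ D := by
    have h1 := hb 0 ⟨le_rfl, hR0.le⟩
    calc -(g 0 * ψ 0) ≤ |g 0 * ψ 0| := neg_le_abs _
      _ = |g 0| * |ψ 0| := abs_mul _ _
      _ ≤ D * 1 := by gcongr; exact (abs_nonneg _).trans h0
      _ = D := mul_one D
  have hfin : I ≤ 2 * D + θ * R ^ 2 * I4 + 4 / R + 1 / (θ * R) := by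
    have e1 : R * (2 / R ^ 2 + 1 / (2 * θ * R ^ 2)) = 2 / R + 1 / (2 * θ * R) := by
      field_simp
    have e2 : 2 * (1 / (2 * θ * R)) = 1 / (θ * R) := by field_simp
    have e3 : 2 * (2 / R) = 4 / R := by ring
    rw [e1] at hle
    norm_num at hftc
    linarith
  have hR1 : 4 / R ≤ 4 := by rw [div_le_iff₀ hR0]; linarith
  have hR2 : 1 / (θ * R) ≤ 1 / θ := by
    apply one_div_le_one_div_of_le hθ; nlinarith
  rw [div_le_iff₀ (by positivity), add_mul, div_mul_cancel₀ _ (by positivity)]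
  linarith

lemma cutoff_tendsto {h : ℝ → ℝ} (hi : IntegrableOn h (Set.Ioi 0)) :
    Tendsto (fun n : ℕ => ∫ x in (0:ℝ)..(n + 1 : ℝ), (1 - x / (n + 1)) ^ 4 * h x) atTop
      (nhds (∫ x in Set.Ioi (0:ℝ), h x)) := by
  have key : Tendsto (fun n : ℕ => ∫ x in Set.Ioi (0:ℝ),
      (Set.Ioc (0:ℝ) (n + 1)).indicator (fun x => (1 - x / ((n:ℝ) + 1)) ^ 4 * h x) x) atTop
      (nhds (∫ x in Set.Ioi (0:ℝ), h x)) := by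
    refine tendsto_integral_of_dominated_convergence (fun x => |h x|) ?_ hi.norm ?_ ?_
    · intro n
      refine AEStronglyMeasurable.indicator ?_ measurableSet_Ioc
      refine AEStronglyMeasurable.mul ?_ hi.aestronglyMeasurable
      exact Continuous.aestronglyMeasurable (by fun_prop)
    · intro n
      refine Filter.Eventually.of_forall fun x => ?_
      by_cases hx : x ∈ Set.Ioc (0:ℝ) (n + 1)
      · rw [Set.indicator_of_mem hx, norm_mul, Real.norm_eq_abs, Real.norm_eq_abs, abs_pow]
        have hn : (0:ℝ) < n + 1 := by positivity
        have h1 : 0 ≤ 1 - x / ((n:ℝ) + 1) := by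
          rw [sub_nonneg, div_le_one hn]; exact hx.2
        have h2 : 0 ≤ x / ((n:ℝ) + 1) := div_nonneg hx.1.le hn.le
        rw [abs_of_nonneg h1]
        exact mul_le_of_le_one_left (abs_nonneg _) (pow_le_one₀ h1 (by linarith))
      · rw [Set.indicator_of_notMem hx]; simp
    · refine (ae_restrict_iff' measurableSet_Ioi).2 (Filter.Eventually.of_forall fun x hx => ?_)
      have hx0 : 0 < x := hx
      have hlim : Tendsto (fun n : ℕ => (1 - x / ((n:ℝ) + 1)) ^ 4 * h x) atTop
          (nhds ((1 - 0) ^ 4 * h x)) := by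
        have h1 : Tendsto (fun n : ℕ => x / ((n:ℝ) + 1)) atTop (nhds 0) :=
          tendsto_const_nhds.div_atTop
            (tendsto_atTop_add_const_right _ _ tendsto_natCast_atTop_atTop)
        exact ((h1.const_sub 1).pow 4).mul_const _
      rw [sub_zero, one_pow, one_mul] at hlim
      refine hlim.congr' ?_
      obtain ⟨k, hk⟩ := exists_nat_ge x
      filter_upwards [eventually_ge_atTop k] with n hn
      rw [Set.indicator_of_mem]
      refine ⟨hx0, ?_⟩
      have : (k:ℝ) ≤ n := by exact_mod_cast hn
      linarith
  refine key.congr fun n => ?_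
  rw [setIntegral_indicator measurableSet_Ioc, intervalIntegral.integral_of_le (by positivity)]
  congr 2
  ext x; simp

lemma cutoff_le {h : ℝ → ℝ} (hi : IntegrableOn h (Set.Ioi 0)) (h0 : ∀ x, 0 ≤ x → 0 ≤ h x) (n : ℕ) :
    ∫ x in (0:ℝ)..(n + 1 : ℝ), (1 - x / (n + 1)) ^ 4 * h x ≤ ∫ x in Set.Ioi (0:ℝ), h x := by
  have hn : (0:ℝ) < n + 1 := by positivity
  have hi2 : IntegrableOn h (Set.Ioc (0:ℝ) (n + 1)) := hi.mono_set (fun x hx => hx.1)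
  rw [intervalIntegral.integral_of_le hn.le]
  calc _ ≤ ∫ x in Set.Ioc (0:ℝ) (n + 1), h x := by
        refine setIntegral_mono_on ?_ hi2 measurableSet_Ioc ?_
        · refine Integrable.mono hi2
            ((Continuous.aestronglyMeasurable (by fun_prop)).mul hi2.aestronglyMeasurable) ?_
          refine (ae_restrict_iff' measurableSet_Ioc).2 (Filter.Eventually.of_forall fun x hx => ?_)
          have h1 : 0 ≤ 1 - x / ((n:ℝ) + 1) := by
            rw [sub_nonneg, div_le_one hn]; exact hx.2
          have h2 : 0 ≤ x / ((n:ℝ) + 1) := div_nonneg hx.1.le hn.le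
          rw [norm_mul]
          refine mul_le_of_le_one_left (norm_nonneg _) ?_
          rw [Real.norm_eq_abs, abs_pow, abs_of_nonneg h1]
          exact pow_le_one₀ h1 (by linarith)
        · intro x hx
          have h1 : 0 ≤ 1 - x / ((n:ℝ) + 1) := by
            rw [sub_nonneg, div_le_one hn]; exact hx.2
          have h2 : 0 ≤ x / ((n:ℝ) + 1) := div_nonneg hx.1.le hn.le
          exact mul_le_of_le_one_left (h0 x hx.1.le) (pow_le_one₀ h1 (by linarith))
    _ ≤ _ := by
        refine setIntegral_mono_set hi ?_ (LE.le.eventuallyLE (fun x hx => hx.1))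
        exact (ae_restrict_iff' measurableSet_Ioi).2
          (Filter.Eventually.of_forall fun x hx => h0 x (le_of_lt hx))

end Integration

namespace NSSetting

section Energy

variable {γ μ vm vp C₀ K : ℝ}

/-- profile evaluated at the shifted argument -/
noncomputable def Vs (S : NSSetting γ μ vm vp C₀ K) (t ξ : ℝ) : ℝ := S.V (S.sh t ξ)

/-- derivative of the profile at the shifted argument -/
noncomputable def Vd (S : NSSetting γ μ vm vp C₀ K) (t ξ : ℝ) : ℝ := deriv S.V (S.sh t ξ)

/-- viscous flux perturbation -/
noncomputable def vis (S : NSSetting γ μ vm vp C₀ K) (t ξ : ℝ) : ℝ :=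
  px (px S.ψ) t ξ / S.vv t ξ + S.s * S.Vd t ξ * px S.φ t ξ / (S.vv t ξ * S.Vs t ξ)

/-- energy density -/
noncomputable def en (S : NSSetting γ μ vm vp C₀ K) (t ξ : ℝ) : ℝ :=
  Phi γ (S.vv t ξ) (S.Vs t ξ) + px S.ψ t ξ ^ 2 / 2

/-- time derivative of the energy density -/
noncomputable def ent (S : NSSetting γ μ vm vp C₀ K) (t ξ : ℝ) : ℝ :=
  ((S.Vs t ξ ^ (-γ) - S.vv t ξ ^ (-γ)) * (S.Vd t ξ * (-(S.s - S.sm)) + pt (px S.φ) t ξ)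
    - γ * S.Vs t ξ ^ (-γ - 1) * (S.vv t ξ - S.Vs t ξ) * (S.Vd t ξ * (-(S.s - S.sm))))
    + px S.ψ t ξ * pt (px S.ψ) t ξ

/-- energy flux -/
noncomputable def fl (S : NSSetting γ μ vm vp C₀ K) (t ξ : ℝ) : ℝ :=
  S.sm * Phi γ (S.vv t ξ) (S.Vs t ξ) + px S.ψ t ξ * pt S.ψ t ξ - S.sm * (px S.ψ t ξ ^ 2 / 2)

/-- space derivative of the energy flux -/
noncomputable def flx (S : NSSetting γ μ vm vp C₀ K) (t ξ : ℝ) : ℝ :=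
  S.sm * ((S.Vs t ξ ^ (-γ) - S.vv t ξ ^ (-γ)) * (S.Vd t ξ + px (px S.φ) t ξ)
    - γ * S.Vs t ξ ^ (-γ - 1) * (S.vv t ξ - S.Vs t ξ) * S.Vd t ξ)
    + (px (px S.ψ) t ξ * pt S.ψ t ξ + px S.ψ t ξ * px (pt S.ψ) t ξ)
    - S.sm * (px S.ψ t ξ * px (px S.ψ) t ξ)

/-- energy source -/
noncomputable def src (S : NSSetting γ μ vm vp C₀ K) (t ξ : ℝ) : ℝ :=
  -(μ * px (px S.ψ) t ξ * S.vis t ξ) + S.s * S.Vd t ξ *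
    (S.vv t ξ ^ (-γ) - S.Vs t ξ ^ (-γ) + γ * S.Vs t ξ ^ (-γ - 1) * (S.vv t ξ - S.Vs t ξ))

variable (S : NSSetting γ μ vm vp C₀ K)

lemma vv_eq (t ξ : ℝ) : S.vv t ξ = S.Vs t ξ + px S.φ t ξ := rfl

lemma Vs_gt (t ξ : ℝ) : vm < S.Vs t ξ := (S.hVrange _).1

lemma Vs_lt (t ξ : ℝ) : S.Vs t ξ < vp := (S.hVrange _).2

lemma Vd_pos (t ξ : ℝ) : 0 < S.Vd t ξ := S.hV'pos _

lemma m_pos : 0 < S.m := by have := S.hm1; linarith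

lemma M_pos : 0 < S.M := by have := S.hM1; linarith

lemma vv_ge {t ξ : ℝ} (h0 : 0 ≤ t) (h1 : t ≤ S.T) (h2 : 0 ≤ ξ) : 1 / S.m ≤ S.vv t ξ :=
  (S.hvbounds t ξ h0 h1 h2).1

lemma vv_le {t ξ : ℝ} (h0 : 0 ≤ t) (h1 : t ≤ S.T) (h2 : 0 ≤ ξ) : S.vv t ξ ≤ S.M :=
  (S.hvbounds t ξ h0 h1 h2).2

lemma vv_pos {t ξ : ℝ} (h0 : 0 ≤ t) (h1 : t ≤ S.T) (h2 : 0 ≤ ξ) : 0 < S.vv t ξ :=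
  lt_of_lt_of_le (one_div_pos.2 S.m_pos) (S.vv_ge h0 h1 h2)

lemma V_hasDerivAt (x : ℝ) : HasDerivAt S.V (deriv S.V x) x :=
  (S.hVC2.differentiable (by norm_num)).differentiableAt.hasDerivAt

lemma U_deriv (x : ℝ) : deriv S.U x = -(S.s * deriv S.V x) := by
  have h1 : S.U = fun x => S.um + -(S.s * (S.V x - vm)) := by
    ext x; have := S.hUVm x; linarith
  rw [h1]
  exact ((((S.V_hasDerivAt x).sub_const vm).const_mul S.s).neg.const_add S.um).deriv

lemma Vs_hasDerivAt_x (t ξ : ℝ) : HasDerivAt (fun y => S.Vs t y) (S.Vd t ξ) ξ := by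
  have h1 : HasDerivAt (fun y => S.sh t y) 1 ξ :=
    (((hasDerivAt_id ξ).sub_const _).add_const _).sub_const _
  have := (S.V_hasDerivAt (S.sh t ξ)).comp ξ h1
  rw [mul_one] at this
  exact this

lemma Vs_hasDerivAt_t (t ξ : ℝ) :
    HasDerivAt (fun τ => S.Vs τ ξ) (S.Vd t ξ * (-(S.s - S.sm))) t := by
  have h1 : HasDerivAt (fun τ => S.sh τ ξ) (-(S.s - S.sm)) t := by
    have := ((((hasDerivAt_id t).const_mul (S.s - S.sm)).const_sub ξ).add_const S.σ).sub_const S.β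
    rw [mul_one] at this
    exact this
  exact (S.V_hasDerivAt (S.sh t ξ)).comp t h1

lemma vv_hasDerivAt_x (t ξ : ℝ) :
    HasDerivAt (fun y => S.vv t y) (S.Vd t ξ + px (px S.φ) t ξ) ξ :=
  (S.Vs_hasDerivAt_x t ξ).add (px_hasDerivAt (px_contDiff S.hφsm) t ξ)

lemma vv_hasDerivAt_t (t ξ : ℝ) :
    HasDerivAt (fun τ => S.vv τ ξ) (S.Vd t ξ * (-(S.s - S.sm)) + pt (px S.φ) t ξ) t :=
  (S.Vs_hasDerivAt_t t ξ).add (pt_hasDerivAt (px_contDiff S.hφsm) t ξ)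

lemma psi_t_eq {t ξ : ℝ} (hvm : 0 < vm) (h0 : 0 ≤ t) (h1 : t ≤ S.T) (h2 : 0 ≤ ξ) :
    pt S.ψ t ξ = S.sm * px S.ψ t ξ - (S.vv t ξ ^ (-γ) - S.Vs t ξ ^ (-γ)) + μ * S.vis t ξ := by
  have h := S.eq2 t ξ h0 h1 h2
  rw [S.U_deriv] at h
  have hv := S.vv_pos h0 h1 h2
  have hV : 0 < S.Vs t ξ := hvm.trans (S.Vs_gt t ξ)
  have e : S.vis t ξ = (-(S.s * S.Vd t ξ) + px (px S.ψ) t ξ) / S.vv t ξ -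
      -(S.s * S.Vd t ξ) / S.Vs t ξ := by
    unfold vis
    have : px S.φ t ξ = S.vv t ξ - S.Vs t ξ := by rw [vv_eq]; ring
    rw [this]
    field_simp
    ring
  rw [e]
  simp only [vv, Vs, Vd, sh]
  linarith

lemma phi_xt_eq {t ξ : ℝ} (h0 : 0 ≤ t) (h1 : t ≤ S.T) (h2 : 0 < ξ) :
    pt (px S.φ) t ξ = S.sm * px (px S.φ) t ξ + px (px S.ψ) t ξ := by
  rw [← px_pt_comm S.hφsm]
  have hev : (fun y => pt S.φ t y) =ᶠ[nhds ξ] fun y => S.sm * px S.φ t y + px S.ψ t y := by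
    filter_upwards [lt_mem_nhds h2] with y hy
    have := S.eq1 t y h0 h1 hy.le
    linarith
  have hd : HasDerivAt (fun y => S.sm * px S.φ t y + px S.ψ t y)
      (S.sm * px (px S.φ) t ξ + px (px S.ψ) t ξ) ξ :=
    ((px_hasDerivAt (px_contDiff S.hφsm) t ξ).const_mul _).add
      (px_hasDerivAt (px_contDiff S.hψsm) t ξ)
  exact (hd.congr_of_eventuallyEq hev).deriv

lemma energy_identity {t ξ : ℝ} (hvm : 0 < vm) (h0 : 0 ≤ t) (h1 : t ≤ S.T) (h2 : 0 < ξ) :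
    S.ent t ξ = S.flx t ξ + S.src t ξ := by
  unfold ent flx src
  rw [S.phi_xt_eq h0 h1 h2, px_pt_comm S.hψsm, S.psi_t_eq hvm h0 h1 h2.le]
  ring

lemma en_hasDerivAt {t ξ : ℝ} (hγ : 1 < γ) (hvm : 0 < vm) (h0 : 0 ≤ t) (h1 : t ≤ S.T)
    (h2 : 0 ≤ ξ) : HasDerivAt (fun τ => S.en τ ξ) (S.ent t ξ) t := by
  have hp := Phi_hasDerivAt hγ (S.vv_hasDerivAt_t t ξ) (S.Vs_hasDerivAt_t t ξ)
    (S.vv_pos h0 h1 h2) (hvm.trans (S.Vs_gt t ξ))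
  have hg := ((pt_hasDerivAt (px_contDiff S.hψsm) t ξ).pow 2).div_const 2
  refine (hp.add hg).congr_deriv ?_
  unfold ent
  simp
  ring

lemma fl_hasDerivAt {t ξ : ℝ} (hγ : 1 < γ) (hvm : 0 < vm) (h0 : 0 ≤ t) (h1 : t ≤ S.T)
    (h2 : 0 ≤ ξ) : HasDerivAt (S.fl t) (S.flx t ξ) ξ := by
  have hp := (Phi_hasDerivAt hγ (S.vv_hasDerivAt_x t ξ) (S.Vs_hasDerivAt_x t ξ)
    (S.vv_pos h0 h1 h2) (hvm.trans (S.Vs_gt t ξ))).const_mul S.sm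
  have hg := px_hasDerivAt (px_contDiff S.hψsm) t ξ
  have hq := px_hasDerivAt (pt_contDiff S.hψsm) t ξ
  refine ((hp.add (hg.mul hq)).sub (((hg.pow 2).div_const 2).const_mul S.sm)).congr_deriv ?_
  unfold flx
  simp
  left; ring

/-! continuity -/

lemma c_sh : Continuous fun z : ℝ × ℝ => S.sh z.1 z.2 := by
  unfold sh; fun_prop

lemma c_Vs : Continuous (Function.uncurry S.Vs) := S.hVC2.continuous.comp S.c_sh

lemma c_Vd : Continuous (Function.uncurry S.Vd) :=
  (S.hVC2.continuous_deriv (by norm_num)).comp S.c_sh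

lemma c_f : Continuous (Function.uncurry (px S.φ)) := (px_contDiff S.hφsm).continuous

lemma c_fx : Continuous (Function.uncurry (px (px S.φ))) :=
  (px_contDiff (px_contDiff S.hφsm)).continuous

lemma c_ft : Continuous (Function.uncurry (pt (px S.φ))) :=
  (pt_contDiff (px_contDiff S.hφsm)).continuous

lemma c_g : Continuous (Function.uncurry (px S.ψ)) := (px_contDiff S.hψsm).continuous

lemma c_gx : Continuous (Function.uncurry (px (px S.ψ))) :=
  (px_contDiff (px_contDiff S.hψsm)).continuous

lemma c_gt : Continuous (Function.uncurry (pt (px S.ψ))) :=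
  (pt_contDiff (px_contDiff S.hψsm)).continuous

lemma c_q : Continuous (Function.uncurry (pt S.ψ)) := (pt_contDiff S.hψsm).continuous

lemma c_qx : Continuous (Function.uncurry (px (pt S.ψ))) :=
  (px_contDiff (pt_contDiff S.hψsm)).continuous

lemma c_vv : Continuous (Function.uncurry S.vv) := S.c_Vs.add S.c_f

variable {t R : ℝ}

lemma vv_ne (htT : t ≤ S.T) : ∀ z ∈ Set.Icc 0 t ×ˢ Set.Icc 0 R, Function.uncurry S.vv z ≠ 0 :=
  fun _ hz => (S.vv_pos hz.1.1 (hz.1.2.trans htT) hz.2.1).ne'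

lemma Vs_ne (hvm : 0 < vm) : ∀ z, Function.uncurry S.Vs z ≠ 0 :=
  fun z => (hvm.trans (S.Vs_gt z.1 z.2)).ne'

lemma c_vvp (htT : t ≤ S.T) (r : ℝ) :
    ContinuousOn (Function.uncurry fun τ ξ => S.vv τ ξ ^ r) (Set.Icc 0 t ×ˢ Set.Icc 0 R) :=
  S.c_vv.continuousOn.rpow_const fun z hz => Or.inl (S.vv_ne htT z hz)

lemma c_Vsp (hvm : 0 < vm) (r : ℝ) : Continuous (Function.uncurry fun τ ξ => S.Vs τ ξ ^ r) :=
  S.c_Vs.rpow_const fun z => Or.inl (S.Vs_ne hvm z)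

lemma c_Phi (hγ : 1 < γ) (hvm : 0 < vm) (htT : t ≤ S.T) :
    ContinuousOn (Function.uncurry fun τ ξ => Phi γ (S.vv τ ξ) (S.Vs τ ξ))
      (Set.Icc 0 t ×ˢ Set.Icc 0 R) := by
  have h : ContinuousOn (Function.uncurry fun τ ξ => S.Vs τ ξ ^ (-γ) * (S.vv τ ξ - S.Vs τ ξ)
      + (S.vv τ ξ ^ (1 - γ) - S.Vs τ ξ ^ (1 - γ)) / (γ - 1)) (Set.Icc 0 t ×ˢ Set.Icc 0 R) :=
    ((S.c_Vsp hvm (-γ)).continuousOn.mul (S.c_vv.sub S.c_Vs).continuousOn).add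
      (((S.c_vvp htT (1 - γ)).sub (S.c_Vsp hvm (1 - γ)).continuousOn).div_const _)
  refine h.congr fun z hz => ?_
  exact Phi_eq hγ (S.vv_pos hz.1.1 (hz.1.2.trans htT) hz.2.1) (hvm.trans (S.Vs_gt z.1 z.2))

lemma c_en (hγ : 1 < γ) (hvm : 0 < vm) (htT : t ≤ S.T) :
    ContinuousOn (Function.uncurry S.en) (Set.Icc 0 t ×ˢ Set.Icc 0 R) :=
  (S.c_Phi hγ hvm htT).add ((S.c_g.pow 2).div_const 2).continuousOn

lemma c_fl (hγ : 1 < γ) (hvm : 0 < vm) (htT : t ≤ S.T) :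
    ContinuousOn (Function.uncurry S.fl) (Set.Icc 0 t ×ˢ Set.Icc 0 R) :=
  (((S.c_Phi hγ hvm htT).const_smul S.sm).add (S.c_g.mul S.c_q).continuousOn).sub
    (((S.c_g.pow 2).div_const 2).const_smul S.sm).continuousOn

lemma c_pd (hvm : 0 < vm) (htT : t ≤ S.T) :
    ContinuousOn (Function.uncurry fun τ ξ => S.Vs τ ξ ^ (-γ) - S.vv τ ξ ^ (-γ))
      (Set.Icc 0 t ×ˢ Set.Icc 0 R) :=
  (S.c_Vsp hvm (-γ)).continuousOn.sub (S.c_vvp htT (-γ))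

lemma c_pl (hvm : 0 < vm) :
    Continuous (Function.uncurry fun τ ξ => γ * S.Vs τ ξ ^ (-γ - 1) * (S.vv τ ξ - S.Vs τ ξ)) :=
  (continuous_const.mul (S.c_Vsp hvm (-γ - 1))).mul (S.c_vv.sub S.c_Vs)

lemma c_ent (hvm : 0 < vm) (htT : t ≤ S.T) :
    ContinuousOn (Function.uncurry S.ent) (Set.Icc 0 t ×ˢ Set.Icc 0 R) :=
  (((S.c_pd hvm htT).mul ((S.c_Vd.mul continuous_const).add S.c_ft).continuousOn).sub
    ((S.c_pl hvm).mul (S.c_Vd.mul continuous_const)).continuousOn).add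
    (S.c_g.mul S.c_gt).continuousOn

lemma c_flx (hvm : 0 < vm) (htT : t ≤ S.T) :
    ContinuousOn (Function.uncurry S.flx) (Set.Icc 0 t ×ˢ Set.Icc 0 R) :=
  (((((S.c_pd hvm htT).mul (S.c_Vd.add S.c_fx).continuousOn).sub
    ((S.c_pl hvm).mul S.c_Vd).continuousOn).const_smul S.sm).add
    ((S.c_gx.mul S.c_q).add (S.c_g.mul S.c_qx)).continuousOn).sub
    ((S.c_g.mul S.c_gx).const_smul S.sm).continuousOn

lemma c_vis (hvm : 0 < vm) (htT : t ≤ S.T) :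
    ContinuousOn (Function.uncurry S.vis) (Set.Icc 0 t ×ˢ Set.Icc 0 R) :=
  (S.c_gx.continuousOn.div S.c_vv.continuousOn (S.vv_ne htT)).add
    (((continuous_const.mul S.c_Vd).mul S.c_f).continuousOn.div
      (S.c_vv.mul S.c_Vs).continuousOn
      (fun z hz => mul_ne_zero (S.vv_ne htT z hz) (S.Vs_ne hvm z)))

lemma c_src (hvm : 0 < vm) (htT : t ≤ S.T) :
    ContinuousOn (Function.uncurry S.src) (Set.Icc 0 t ×ˢ Set.Icc 0 R) :=
  (((continuous_const.mul S.c_gx).continuousOn.mul (S.c_vis hvm htT)).neg).add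
    ((continuous_const.mul S.c_Vd).continuousOn.mul
      (((S.c_vvp htT (-γ)).sub (S.c_Vsp hvm (-γ)).continuousOn).add (S.c_pl hvm).continuousOn))

lemma c_gv (htT : t ≤ S.T) :
    ContinuousOn (Function.uncurry fun τ ξ => px (px S.ψ) τ ξ ^ 2 / S.vv τ ξ)
      (Set.Icc 0 t ×ˢ Set.Icc 0 R) :=
  (S.c_gx.pow 2).continuousOn.div S.c_vv.continuousOn (S.vv_ne htT)

end Energy

end NSSetting

namespace NSSetting

section Estimates

variable {γ μ vm vp C₀ K : ℝ} (S : NSSetting γ μ vm vp C₀ K)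

lemma δ_pos (hv : vm < vp) : 0 < S.δ := by rw [S.hδ]; linarith

lemma cm_pos (hv : vm < vp) (hK : 0 < K) : 0 < S.cm := by
  have h1 := S.hKcm.2; have h2 := S.δ_pos hv
  by_contra h
  have : K * S.cm ≤ 0 := mul_nonpos_of_nonneg_of_nonpos hK.le (not_lt.1 h)
  linarith

lemma cp_pos (hv : vm < vp) (hK : 0 < K) : 0 < S.cp := by
  have h1 := S.hKcp.2; have h2 := S.δ_pos hv
  by_contra h
  have : K * S.cp ≤ 0 := mul_nonpos_of_nonneg_of_nonpos hK.le (not_lt.1 h)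
  linarith

lemma sm_neg (hvm : 0 < vm) : S.sm < 0 := by
  rw [S.hsm]; have := div_pos S.humpos hvm; linarith

lemma Vd_le (hv : vm < vp) (hC₀ : 0 < C₀) (hK : 0 < K) (t ξ : ℝ) : S.Vd t ξ ≤ C₀ * S.δ ^ 2 := by
  have hδ := S.δ_pos hv
  have hcp := S.cp_pos hv hK
  have hcm := S.cm_pos hv hK
  unfold Vd
  set x := S.sh t ξ
  have h0 : deriv S.V x ≤ |deriv S.V x| + |deriv S.U x| := by
    have := le_abs_self (deriv S.V x); have := abs_nonneg (deriv S.U x); linarith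
  have hc : 0 ≤ C₀ * S.δ ^ 2 := by positivity
  rcases le_total 0 x with h | h
  · refine h0.trans ((S.decayp x h).2.trans (mul_le_of_le_one_right hc ?_))
    rw [Real.exp_le_one_iff]; nlinarith
  · refine h0.trans ((S.decaym x h).2.trans (mul_le_of_le_one_right hc ?_))
    rw [Real.exp_le_one_iff]; nlinarith

/-- constant of the source estimate -/
noncomputable def C1 : ℝ := μ * S.s ^ 2 * C₀ ^ 2 * S.δ ^ 2 / vm ^ 2 +
  S.s * C₀ * (γ * (γ + 1) * (max 1 (1 / vm)) ^ (γ + 2))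

lemma low_pos : 0 < 1 / (S.m * max 1 (1 / vm)) := by
  have := S.m_pos
  have : 0 < max 1 (1 / vm) := lt_max_of_lt_left one_pos
  positivity

lemma low_le_v {t ξ : ℝ} (h0 : 0 ≤ t) (h1 : t ≤ S.T) (h2 : 0 ≤ ξ) :
    1 / (S.m * max 1 (1 / vm)) ≤ S.vv t ξ := by
  refine le_trans ?_ (S.vv_ge h0 h1 h2)
  have := S.m_pos
  apply one_div_le_one_div_of_le this
  nlinarith [le_max_left 1 (1 / vm)]

lemma low_le_V (hvm : 0 < vm) (t ξ : ℝ) : 1 / (S.m * max 1 (1 / vm)) ≤ S.Vs t ξ := by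
  refine le_trans ?_ (S.Vs_gt t ξ).le
  have hm := S.hm1
  have h1 : 0 < 1 / vm := by positivity
  have h2 : 1 / vm ≤ S.m * max 1 (1 / vm) := by nlinarith [le_max_right 1 (1 / vm)]
  calc _ ≤ 1 / (1 / vm) := one_div_le_one_div_of_le h1 h2
    _ = vm := by simp

lemma src_le (hγ : 1 < γ) (hμ : 0 < μ) (hvm : 0 < vm) (hv : vm < vp) (hC₀ : 0 < C₀) (hK : 0 < K)
    {t ξ : ℝ} (h0 : 0 ≤ t) (h1 : t ≤ S.T) (h2 : 0 ≤ ξ) :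
    S.src t ξ ≤ -(3 / 4 * μ * (px (px S.ψ) t ξ ^ 2 / S.vv t ξ)) +
      S.C1 * (S.δ ^ 2 * S.m ^ (γ + 2)) * px S.φ t ξ ^ 2 := by
  have hvpos := S.vv_pos h0 h1 h2
  have hV := S.Vs_gt t ξ
  have hVpos : 0 < S.Vs t ξ := hvm.trans hV
  have hd := S.Vd_le hv hC₀ hK t ξ
  have hd0 := S.Vd_pos t ξ
  have hs := S.hspos
  have hm := S.hm1
  have hm0 := S.m_pos
  have hδ := S.δ_pos hv
  have hq := pressure_quad hγ S.low_pos (S.low_le_v h0 h1 h2) (S.low_le_V hvm t ξ)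
  have hf : S.vv t ξ - S.Vs t ξ = px S.φ t ξ := by rw [vv_eq]; ring
  have hk : 0 < max 1 (1 / vm) := lt_max_of_lt_left one_pos
  have hl : (1 / (S.m * max 1 (1 / vm))) ^ (-γ - 2) = S.m ^ (γ + 2) * max 1 (1 / vm) ^ (γ + 2) := by
    rw [one_div, Real.inv_rpow (by positivity), ← Real.rpow_neg (by positivity),
      show -(-γ - 2) = γ + 2 by ring, Real.mul_rpow hm0.le hk.le]
  rw [hl, hf] at hq
  have hmm : S.m ≤ S.m ^ (γ + 2) := by
    conv_lhs => rw [← Real.rpow_one S.m]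
    exact Real.rpow_le_rpow_of_exponent_le hm (by linarith)
  have hvinv : 1 / S.vv t ξ ≤ S.m ^ (γ + 2) := by
    refine le_trans ?_ hmm
    rw [div_le_iff₀ hvpos]
    have := S.vv_ge h0 h1 h2
    rw [div_le_iff₀ hm0] at this
    linarith
  unfold src vis C1
  rw [hf]
  set f := px S.φ t ξ
  set g' := px (px S.ψ) t ξ
  set v := S.vv t ξ
  set V := S.Vs t ξ
  set d := S.Vd t ξ
  set P := v ^ (-γ) - V ^ (-γ) + γ * V ^ (-γ - 1) * f
  set mm := S.m ^ (γ + 2)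
  set k := max 1 (1 / vm) ^ (γ + 2)
  have hk0 : 0 ≤ k := by positivity
  have hmm0 : 0 < mm := by positivity
  -- cross term
  have a1 : -(μ * g' * (g' / v + S.s * d * f / (v * V))) ≤
      -(3 / 4 * μ * (g' ^ 2 / v)) + μ * (1 / v) * (S.s * d * f / V) ^ 2 := by
    have : 0 ≤ μ * (1 / v) * (g' / 2 + S.s * d * f / V) ^ 2 := by positivity
    have e : μ * (1 / v) * (g' / 2 + S.s * d * f / V) ^ 2 =
        -(3 / 4 * μ * (g' ^ 2 / v)) + μ * (1 / v) * (S.s * d * f / V) ^ 2 +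
        (μ * g' * (g' / v + S.s * d * f / (v * V))) := by
      field_simp; ring
    linarith
  have a2 : μ * (1 / v) * (S.s * d * f / V) ^ 2 ≤
      μ * mm * (S.s ^ 2 * (C₀ * S.δ ^ 2) ^ 2 * f ^ 2 / vm ^ 2) := by
    have : (S.s * d * f / V) ^ 2 = S.s ^ 2 * d ^ 2 * f ^ 2 / V ^ 2 := by
      rw [div_pow]; ring
    rw [this]
    gcongr
  have a3 : S.s * d * P ≤ S.s * (C₀ * S.δ ^ 2) * (γ * (γ + 1) * (mm * k) * f ^ 2) := by
    have : 0 ≤ γ * (γ + 1) * (mm * k) * f ^ 2 := by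
      have : 0 < γ := by linarith
      positivity
    calc S.s * d * P ≤ S.s * d * (γ * (γ + 1) * (mm * k) * f ^ 2) := by gcongr
      _ ≤ _ := by gcongr
  have e2 : (μ * S.s ^ 2 * C₀ ^ 2 * S.δ ^ 2 / vm ^ 2 + S.s * C₀ * (γ * (γ + 1) * k)) *
      (S.δ ^ 2 * mm) * f ^ 2 = μ * mm * (S.s ^ 2 * (C₀ * S.δ ^ 2) ^ 2 * f ^ 2 / vm ^ 2) +
        S.s * (C₀ * S.δ ^ 2) * (γ * (γ + 1) * (mm * k) * f ^ 2) := by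
    field_simp
  rw [e2]
  linarith

lemma en_nonneg (hγ : 1 < γ) (hvm : 0 < vm) {t ξ : ℝ} (h0 : 0 ≤ t) (h1 : t ≤ S.T) (h2 : 0 ≤ ξ) :
    0 ≤ S.en t ξ := by
  have := Phi_nonneg hγ (S.vv_pos h0 h1 h2) (hvm.trans (S.Vs_gt t ξ))
  unfold en; positivity

/-- flux bound constant -/
noncomputable def AF : ℝ := γ * (1 / (S.m * max 1 (1 / vm))) ^ (-γ - 1) +
  μ * (S.m + S.s * (C₀ * S.δ ^ 2) * S.m / vm)

lemma AF_nonneg (hγ : 1 < γ) (hμ : 0 < μ) (hvm : 0 < vm) (hC₀ : 0 < C₀) : 0 ≤ S.AF := by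
  have := S.low_pos; have := S.m_pos; have := S.hspos
  have : 0 < γ := by linarith
  unfold AF; positivity

lemma fl_le (hγ : 1 < γ) (hμ : 0 < μ) (hvm : 0 < vm) (hv : vm < vp) (hC₀ : 0 < C₀) (hK : 0 < K)
    {t ξ : ℝ} (h0 : 0 ≤ t) (h1 : t ≤ S.T) (h2 : 0 ≤ ξ) :
    S.fl t ξ ≤ S.AF * |px S.ψ t ξ| * (|px S.φ t ξ| + |px (px S.ψ) t ξ|) := by
  have hvpos := S.vv_pos h0 h1 h2
  have hV := S.Vs_gt t ξ
  have hVpos : 0 < S.Vs t ξ := hvm.trans hV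
  have hd := S.Vd_le hv hC₀ hK t ξ
  have hd0 := S.Vd_pos t ξ
  have hs := S.hspos
  have hm0 := S.m_pos
  have hen := S.en_nonneg hγ hvm h0 h1 h2
  have hsm := S.sm_neg hvm
  have hγ0 : 0 < γ := by linarith
  have hlip := rpow_neg_lip (r := γ) (by linarith) S.low_pos (S.low_le_v h0 h1 h2)
    (S.low_le_V hvm t ξ)
  have hf : S.vv t ξ - S.Vs t ξ = px S.φ t ξ := by rw [vv_eq]; ring
  rw [hf] at hlip
  have hvinv : 1 / S.vv t ξ ≤ S.m := by
    rw [div_le_iff₀ hvpos]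
    have := S.vv_ge h0 h1 h2
    rw [div_le_iff₀ hm0] at this
    linarith
  have hfl : S.fl t ξ = S.sm * S.en t ξ +
      px S.ψ t ξ * (-(S.vv t ξ ^ (-γ) - S.Vs t ξ ^ (-γ)) + μ * S.vis t ξ) := by
    unfold fl en
    rw [S.psi_t_eq hvm h0 h1 h2]; ring
  have hvis : |S.vis t ξ| ≤ S.m * |px (px S.ψ) t ξ| +
      S.s * (C₀ * S.δ ^ 2) * S.m / vm * |px S.φ t ξ| := by
    unfold vis
    refine (abs_add_le _ _).trans (add_le_add ?_ ?_)
    · rw [abs_div, abs_of_pos hvpos, div_eq_mul_one_div, mul_comm]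
      gcongr
    · rw [abs_div, abs_mul, abs_of_pos (mul_pos hvpos hVpos), abs_of_pos (mul_pos hs hd0)]
      have e : S.s * S.Vd t ξ * |px S.φ t ξ| / (S.vv t ξ * S.Vs t ξ) =
        S.s * S.Vd t ξ * (1 / S.vv t ξ) / S.Vs t ξ * |px S.φ t ξ| := by field_simp
      rw [e]
      gcongr
  rw [hfl]
  have b1 : S.sm * S.en t ξ ≤ 0 := mul_nonpos_of_nonpos_of_nonneg hsm.le hen
  set f := px S.φ t ξ
  set g' := px (px S.ψ) t ξ
  set l1 := γ * (1 / (S.m * max 1 (1 / vm))) ^ (-γ - 1) with hl1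
  have hl10 : 0 ≤ l1 := by have := S.low_pos; positivity
  set c2 := S.s * (C₀ * S.δ ^ 2) * S.m / vm with hc2
  have hc20 : 0 ≤ c2 := by positivity
  have b2 : |-(S.vv t ξ ^ (-γ) - S.Vs t ξ ^ (-γ)) + μ * S.vis t ξ| ≤ S.AF * (|f| + |g'|) := by
    refine (abs_add_le _ _).trans ?_
    rw [abs_neg, abs_mul, abs_of_pos hμ]
    have hA : S.AF = l1 + μ * (S.m + c2) := rfl
    rw [hA]
    have b3 : μ * |S.vis t ξ| ≤ μ * (S.m * |g'| + c2 * |f|) := by gcongr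
    have p1 : 0 ≤ l1 * |g'| := by positivity
    have p2 : 0 ≤ μ * S.m * |f| := by positivity
    have p3 : 0 ≤ μ * c2 * |g'| := by positivity
    nlinarith
  calc _ ≤ px S.ψ t ξ * (-(S.vv t ξ ^ (-γ) - S.Vs t ξ ^ (-γ)) + μ * S.vis t ξ) := by linarith
    _ ≤ |px S.ψ t ξ| * |-(S.vv t ξ ^ (-γ) - S.Vs t ξ ^ (-γ)) + μ * S.vis t ξ| := by
      rw [← abs_mul]; exact le_abs_self _
    _ ≤ |px S.ψ t ξ| * (S.AF * (|f| + |g'|)) := by gcongr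
    _ = _ := by ring

/-- constant in front of the cut-off error -/
noncomputable def A2 : ℝ := 4 * S.AF ^ 2 / (S.δ ^ 2 * S.m ^ (γ + 2)) + 4 * S.AF ^ 2 / (μ / (8 * S.M))

lemma young_aux {A κ η R g f : ℝ} (hκ : 0 < κ) (hR : 0 < R) :
    4 * η ^ 3 / R * (A * |g| * |f|) ≤ κ * (η ^ 4 * f ^ 2) + 4 * A ^ 2 / κ * (η ^ 2 * g ^ 2 / R ^ 2) := by
  have h : 0 ≤ κ * (η ^ 2 * |f| - 2 * A * η * |g| / (κ * R)) ^ 2 := by positivity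
  have e : κ * (η ^ 2 * |f| - 2 * A * η * |g| / (κ * R)) ^ 2 =
      κ * (η ^ 4 * |f| ^ 2) + 4 * A ^ 2 / κ * (η ^ 2 * |g| ^ 2 / R ^ 2) -
      4 * η ^ 3 / R * (A * |g| * |f|) := by
    field_simp; ring
  rw [sq_abs, sq_abs] at e
  linarith

lemma pointwise_est (hγ : 1 < γ) (hμ : 0 < μ) (hvm : 0 < vm) (hv : vm < vp) (hC₀ : 0 < C₀)
    (hK : 0 < K) {t ξ R : ℝ} (h0 : 0 ≤ t) (h1 : t ≤ S.T) (h2 : 0 ≤ ξ) (hR : 0 < R) (h3 : ξ ≤ R) :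
    (1 - ξ / R) ^ 4 * S.src t ξ - (-(4 * (1 - ξ / R) ^ 3 / R)) * S.fl t ξ ≤
      -(5 / 8 * μ) * ((1 - ξ / R) ^ 4 * (px (px S.ψ) t ξ ^ 2 / S.vv t ξ)) +
      ((S.C1 + 1) * (S.δ ^ 2 * S.m ^ (γ + 2)) * ((1 - ξ / R) ^ 4 * px S.φ t ξ ^ 2) +
      S.A2 / R ^ 2 * ((1 - ξ / R) ^ 2 * px S.ψ t ξ ^ 2)) := by
  have hη : 0 ≤ 1 - ξ / R := by rw [sub_nonneg, div_le_one hR]; exact h3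
  have hs := S.src_le hγ hμ hvm hv hC₀ hK h0 h1 h2
  have hfl := S.fl_le hγ hμ hvm hv hC₀ hK h0 h1 h2
  have hκ : 0 < S.δ ^ 2 * S.m ^ (γ + 2) := by
    have := S.δ_pos hv; have := S.m_pos; positivity
  have hM := S.M_pos
  have hκ2 : 0 < μ / (8 * S.M) := by positivity
  have hvpos := S.vv_pos h0 h1 h2
  have hvM := S.vv_le h0 h1 h2
  set η := 1 - ξ / R
  have c1 := mul_le_mul_of_nonneg_left hs (show 0 ≤ η ^ 4 by positivity)
  have c2 := mul_le_mul_of_nonneg_left hfl (show 0 ≤ 4 * η ^ 3 / R by positivity)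
  have c3 := young_aux (A := S.AF) (η := η) (g := px S.ψ t ξ) (f := px S.φ t ξ) hκ hR
  have c4 := young_aux (A := S.AF) (η := η) (g := px S.ψ t ξ) (f := px (px S.ψ) t ξ) hκ2 hR
  have c5 : μ / (8 * S.M) * (η ^ 4 * px (px S.ψ) t ξ ^ 2) ≤
      1 / 8 * μ * (η ^ 4 * (px (px S.ψ) t ξ ^ 2 / S.vv t ξ)) := by
    have : 1 / S.M ≤ 1 / S.vv t ξ := one_div_le_one_div_of_le hvpos hvM
    calc _ = μ / 8 * η ^ 4 * px (px S.ψ) t ξ ^ 2 * (1 / S.M) := by field_simp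
      _ ≤ μ / 8 * η ^ 4 * px (px S.ψ) t ξ ^ 2 * (1 / S.vv t ξ) := by gcongr
      _ = _ := by field_simp
  have e : S.A2 / R ^ 2 * (η ^ 2 * px S.ψ t ξ ^ 2) =
      4 * S.AF ^ 2 / (S.δ ^ 2 * S.m ^ (γ + 2)) * (η ^ 2 * px S.ψ t ξ ^ 2 / R ^ 2) +
      4 * S.AF ^ 2 / (μ / (8 * S.M)) * (η ^ 2 * px S.ψ t ξ ^ 2 / R ^ 2) := by
    unfold A2; ring
  rw [e]
  linarith

lemma A2_nonneg (hγ : 1 < γ) (hμ : 0 < μ) : 0 ≤ S.A2 := by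
  have := S.m_pos; have := S.M_pos
  have : 0 < γ := by linarith
  unfold A2; positivity

lemma bd_arg_nonpos (hvm : 0 < vm) {t : ℝ} (h0 : 0 ≤ t) : -((S.s - S.sm) * t) + S.σ - S.β ≤ 0 := by
  have h1 := S.sm_neg hvm; have h2 := S.hspos; have h3 := S.hβσ
  have h4 := le_abs_self S.σ
  have : 0 ≤ (S.s - S.sm) * t := mul_nonneg (by linarith) h0
  linarith

lemma bd_exp (hv : vm < vp) (hK : 0 < K) (t : ℝ) :
    Real.exp (S.cm * (-((S.s - S.sm) * t) + S.σ - S.β)) ≤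
      Real.exp (K ^ 2) * Real.exp (-(S.cm * S.β)) * Real.exp (-(S.cm * (S.s - S.sm) * t)) := by
  rw [← Real.exp_add, ← Real.exp_add]
  apply Real.exp_le_exp.2
  have h1 := S.cm_pos hv hK
  have h2 := S.hKcm.1
  have h3 := S.hσδ
  have h4 : S.cm * S.σ ≤ K ^ 2 := by
    calc S.cm * S.σ ≤ S.cm * |S.σ| := by gcongr; exact le_abs_self _
      _ ≤ K * S.δ * |S.σ| := by gcongr
      _ = K * (S.δ * |S.σ|) := by ring
      _ ≤ K * K := by gcongr
      _ = K ^ 2 := by ring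
  linarith

/-- boundary value of the profile perturbation -/
noncomputable def Bd (t : ℝ) : ℝ := S.V (-((S.s - S.sm) * t) + S.σ - S.β) - vm

lemma Bd_pos (t : ℝ) : 0 < S.Bd t := by have := (S.hVrange (-((S.s - S.sm) * t) + S.σ - S.β)).1; unfold Bd; linarith

lemma Bd_le (hvm : 0 < vm) (hv : vm < vp) (hC₀ : 0 < C₀) (hK : 0 < K) {t : ℝ} (h0 : 0 ≤ t) :
    S.Bd t ≤ C₀ * S.δ * (Real.exp (K ^ 2) * Real.exp (-(S.cm * S.β)) *
      Real.exp (-(S.cm * (S.s - S.sm) * t))) := by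
  have h1 := (S.decaym _ (S.bd_arg_nonpos hvm h0)).1
  have h2 := S.bd_exp hv hK t
  have hδ := S.δ_pos hv
  unfold Bd
  set x := -((S.s - S.sm) * t) + S.σ - S.β
  calc _ ≤ |S.V x - vm| + |S.U x - S.um| := by
        have := le_abs_self (S.V x - vm); have := abs_nonneg (S.U x - S.um); linarith
    _ ≤ _ := h1
    _ ≤ _ := by gcongr

lemma sh_zero (t : ℝ) : S.sh t 0 = -((S.s - S.sm) * t) + S.σ - S.β := by unfold sh; ring

lemma Vs_zero (t : ℝ) : S.Vs t 0 = vm + S.Bd t := by unfold Vs Bd; rw [sh_zero]; ring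

lemma g_zero {t : ℝ} (h0 : 0 ≤ t) (h1 : t ≤ S.T) : px S.ψ t 0 = S.s * S.Bd t := by
  rw [S.bdψx t h0 h1]
  have := S.hUVm (-((S.s - S.sm) * t) + S.σ - S.β)
  unfold Bd; linarith

lemma vv_zero {t : ℝ} (h0 : 0 ≤ t) (h1 : t ≤ S.T) : S.vv t 0 = vm := by
  unfold vv; rw [S.bdφx t h0 h1, sh_zero]; ring

/-- boundary constant -/
noncomputable def C2 : ℝ := vm ^ (-γ) * C₀ * Real.exp (K ^ 2) * K +
  3 * S.s * C₀ * S.δ * Real.exp (K ^ 2)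

lemma Bd_hasDerivAt (t : ℝ) : HasDerivAt S.Bd (S.Vd t 0 * (-(S.s - S.sm))) t := by
  have h := (S.Vs_hasDerivAt_t t 0).sub_const vm
  have e : S.Bd = fun τ => S.Vs τ 0 - vm := by ext τ; rw [Vs_zero]; ring
  rw [e]; exact h

lemma neg_fl_zero_le (hγ : 1 < γ) (hvm : 0 < vm) {t : ℝ} (h0 : 0 ≤ t) (h1 : t ≤ S.T) :
    -S.fl t 0 ≤ vm ^ (-γ) * ((S.s - S.sm) * S.Bd t) - S.s * (S.Bd t * pt S.ψ t 0) := by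
  have hB := S.Bd_pos t
  have hsm := S.sm_neg hvm
  have hs := S.hspos
  have hPhi : Phi γ (S.vv t 0) (S.Vs t 0) ≤ vm ^ (-γ) * S.Bd t := by
    have hV : 0 < S.Vs t 0 := hvm.trans (S.Vs_gt t 0)
    have h := Phi_upper' hγ (S.vv_pos h0 h1 le_rfl) hV
    refine h.trans ?_
    rw [S.vv_zero h0 h1]
    have e : vm - S.Vs t 0 = - S.Bd t := by rw [Vs_zero]; ring
    rw [e]
    have : 0 ≤ S.Vs t 0 ^ (-γ) := by positivity
    nlinarith
  have hvmp : 0 ≤ vm ^ (-γ) := by positivity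
  have hg := S.g_zero h0 h1
  unfold fl
  rw [hg]
  have p1 : S.sm * (S.s * S.Bd t) ^ 2 ≤ 0 :=
    mul_nonpos_of_nonpos_of_nonneg hsm.le (sq_nonneg _)
  have p2 : -S.sm * Phi γ (S.vv t 0) (S.Vs t 0) ≤ -S.sm * (vm ^ (-γ) * S.Bd t) := by
    gcongr; linarith
  have p3 : 0 ≤ S.s * (vm ^ (-γ) * S.Bd t) := by positivity
  nlinarith

end Estimates

end NSSetting

namespace NSSetting

section Core

variable {γ μ vm vp C₀ K : ℝ} (S : NSSetting γ μ vm vp C₀ K)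

lemma psi_abs_le {t ξ : ℝ} (h0 : 0 ≤ t) (h1 : t ≤ S.T) (h2 : 0 ≤ ξ) : |S.ψ t ξ| ≤ 1 := by
  have := S.hNbound t ξ h0 h1 h2
  have h3 := S.hN1
  have := abs_nonneg (S.φ t ξ)
  linarith

lemma c_Bd : Continuous S.Bd := continuous_iff_continuousAt.2 fun x => (S.Bd_hasDerivAt x).continuousAt

lemma c_q0 : Continuous fun τ => pt S.ψ τ 0 :=
  S.c_q.comp (by fun_prop : Continuous fun τ : ℝ => (τ, (0:ℝ)))

lemma c_psi0 : Continuous fun τ => S.ψ τ 0 :=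
  S.hψsm.continuous.comp (by fun_prop : Continuous fun τ : ℝ => (τ, (0:ℝ)))

lemma c_Vd0 : Continuous fun τ => S.Vd τ 0 * (-(S.s - S.sm)) :=
  (S.c_Vd.comp (by fun_prop : Continuous fun τ : ℝ => (τ, (0:ℝ)))).mul continuous_const

lemma boundary_parts (hvm : 0 < vm) {t : ℝ} (ht : 0 ≤ t) (htT : t ≤ S.T) :
    -(∫ τ in (0:ℝ)..t, S.Bd τ * pt S.ψ τ 0) ≤ 3 * S.Bd 0 := by
  have hsm := S.sm_neg hvm
  have hs := S.hspos
  have hibp := intervalIntegral.integral_mul_deriv_eq_deriv_mul (a := 0) (b := t) (u := S.Bd)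
    (v := fun τ => S.ψ τ 0) (u' := fun τ => S.Vd τ 0 * (-(S.s - S.sm))) (v' := fun τ => pt S.ψ τ 0)
    (fun x _ => S.Bd_hasDerivAt x) (fun x _ => pt_hasDerivAt S.hψsm x 0)
    (S.c_Vd0.intervalIntegrable _ _) (S.c_q0.intervalIntegrable _ _)
  have hftc := intervalIntegral.integral_eq_sub_of_hasDerivAt (a := 0) (b := t)
    (fun x _ => S.Bd_hasDerivAt x) (S.c_Vd0.intervalIntegrable _ _)
  have hle : (∫ τ in (0:ℝ)..t, S.Vd τ 0 * (-(S.s - S.sm)) * S.ψ τ 0) ≤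
      ∫ τ in (0:ℝ)..t, -(S.Vd τ 0 * (-(S.s - S.sm))) := by
    refine intervalIntegral.integral_mono_on ht
      ((S.c_Vd0.mul S.c_psi0).intervalIntegrable _ _) (S.c_Vd0.neg.intervalIntegrable _ _) ?_
    intro τ hτ
    have h1 := S.psi_abs_le hτ.1 (hτ.2.trans htT) (le_refl 0)
    have h2 := S.Vd_pos τ 0
    have h3 := (abs_le.1 h1).1
    have h4 : 0 ≤ S.Vd τ 0 * (S.s - S.sm) := mul_nonneg h2.le (by linarith)
    nlinarith
  rw [intervalIntegral.integral_neg, hftc] at hle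
  rw [hibp]
  have b0 := S.Bd_pos 0
  have bt := S.Bd_pos t
  have p0 := abs_le.1 (S.psi_abs_le (le_refl 0) (ht.trans htT) (le_refl 0))
  have pt' := abs_le.1 (S.psi_abs_le ht htT (le_refl 0))
  nlinarith

lemma boundary_decay (hvm : 0 < vm) (hv : vm < vp) (hC₀ : 0 < C₀) (hK : 0 < K) {t : ℝ}
    (ht : 0 ≤ t) :
    (∫ τ in (0:ℝ)..t, (S.s - S.sm) * S.Bd τ) ≤
      C₀ * Real.exp (K ^ 2) * K * Real.exp (-(S.cm * S.β)) := by
  have hsm := S.sm_neg hvm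
  have hs := S.hspos
  have hcm := S.cm_pos hv hK
  have hδ := S.δ_pos hv
  set E := Real.exp (K ^ 2) * Real.exp (-(S.cm * S.β)) with hE
  have hE0 : 0 < E := by positivity
  set a := S.cm * (S.s - S.sm) with ha
  have hss : 0 < S.s - S.sm := by linarith
  have ha0 : 0 < a := by positivity
  have hd : ∀ x, HasDerivAt (fun τ => -(C₀ * S.δ * E / S.cm * Real.exp (-(a * τ))))
      ((S.s - S.sm) * (C₀ * S.δ * (E * Real.exp (-(a * x))))) x := by
    intro x
    have h1 := (((hasDerivAt_id x).const_mul a).neg.exp.const_mul (C₀ * S.δ * E / S.cm)).neg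
    refine h1.congr_deriv ?_
    simp only [id]
    rw [ha]
    field_simp
    rfl
  have hcont : Continuous fun x => (S.s - S.sm) * (C₀ * S.δ * (E * Real.exp (-(a * x)))) := by
    fun_prop
  have hftc := intervalIntegral.integral_eq_sub_of_hasDerivAt (a := 0) (b := t)
    (fun x _ => hd x) (hcont.intervalIntegrable _ _)
  have hle : (∫ τ in (0:ℝ)..t, (S.s - S.sm) * S.Bd τ) ≤
      ∫ τ in (0:ℝ)..t, (S.s - S.sm) * (C₀ * S.δ * (E * Real.exp (-(a * τ)))) := by
    refine intervalIntegral.integral_mono_on ht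
      ((continuous_const.mul S.c_Bd).intervalIntegrable _ _) (hcont.intervalIntegrable _ _) ?_
    intro τ hτ
    have := S.Bd_le hvm hv hC₀ hK hτ.1
    gcongr
  rw [hftc] at hle
  have h1 : 0 ≤ C₀ * S.δ * E / S.cm * Real.exp (-(a * t)) := by positivity
  simp only [mul_zero, neg_zero, Real.exp_zero, mul_one] at hle
  have h2 : C₀ * S.δ * E / S.cm ≤ C₀ * E * K := by
    rw [div_le_iff₀ hcm]
    have := S.hKcm.2
    calc C₀ * S.δ * E ≤ C₀ * (K * S.cm) * E := by gcongr
      _ = _ := by ring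
  calc _ ≤ C₀ * E * K := by linarith
    _ = _ := by rw [hE]; ring

lemma slice0 {F : ℝ → ℝ → ℝ} {t : ℝ}
    (hF : ContinuousOn (Function.uncurry F) (Set.Icc 0 t ×ˢ Set.Icc 0 1)) :
    ContinuousOn (fun τ => F τ 0) (Set.Icc 0 t) := slice_fst (by simp) hF

lemma boundary_est (hγ : 1 < γ) (hvm : 0 < vm) (hv : vm < vp) (hC₀ : 0 < C₀) (hK : 0 < K) {t : ℝ}
    (ht : 0 ≤ t) (htT : t ≤ S.T) :
    (∫ τ in (0:ℝ)..t, -S.fl τ 0) ≤ S.C2 * Real.exp (-(S.cm * S.β)) := by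
  have hvmp : 0 ≤ vm ^ (-γ) := by positivity
  have hs := S.hspos
  have c1 : Continuous fun τ => vm ^ (-γ) * ((S.s - S.sm) * S.Bd τ) :=
    continuous_const.mul (continuous_const.mul S.c_Bd)
  have c2 : Continuous fun τ => S.s * (S.Bd τ * pt S.ψ τ 0) :=
    continuous_const.mul (S.c_Bd.mul S.c_q0)
  have hle : (∫ τ in (0:ℝ)..t, -S.fl τ 0) ≤
      ∫ τ in (0:ℝ)..t, (vm ^ (-γ) * ((S.s - S.sm) * S.Bd τ) - S.s * (S.Bd τ * pt S.ψ τ 0)) := by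
    refine intervalIntegral.integral_mono_on ht
      (ii_of_contOn ht (slice0 (S.c_fl hγ hvm htT)).neg) ((c1.sub c2).intervalIntegrable _ _) ?_
    intro τ hτ
    exact S.neg_fl_zero_le hγ hvm hτ.1 (hτ.2.trans htT)
  have e1 : (∫ τ in (0:ℝ)..t, vm ^ (-γ) * ((S.s - S.sm) * S.Bd τ)) =
      vm ^ (-γ) * ∫ τ in (0:ℝ)..t, (S.s - S.sm) * S.Bd τ := intervalIntegral.integral_const_mul _ _
  have e2 : (∫ τ in (0:ℝ)..t, S.s * (S.Bd τ * pt S.ψ τ 0)) =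
      S.s * ∫ τ in (0:ℝ)..t, S.Bd τ * pt S.ψ τ 0 := intervalIntegral.integral_const_mul _ _
  rw [intervalIntegral.integral_sub (c1.intervalIntegrable _ _) (c2.intervalIntegrable _ _),
    e1, e2] at hle
  have h1 := mul_le_mul_of_nonneg_left (S.boundary_decay hvm hv hC₀ hK ht) hvmp
  have h2 := mul_le_mul_of_nonneg_left (S.boundary_parts hvm ht htT) hs.le
  have h3 := S.Bd_le hvm hv hC₀ hK (le_refl 0)
  simp only [mul_zero, neg_zero, Real.exp_zero, mul_one] at h3
  have h4 := mul_le_mul_of_nonneg_left h3 (show 0 ≤ 3 * S.s by positivity)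
  unfold C2
  nlinarith

lemma sliceR {F : ℝ → ℝ → ℝ} {T R τ : ℝ} (h0 : 0 ≤ τ) (h1 : τ ≤ T)
    (hF : ∀ {t R : ℝ}, t ≤ T → ContinuousOn (Function.uncurry F) (Set.Icc 0 t ×ˢ Set.Icc 0 R)) :
    ContinuousOn (F τ) (Set.Icc 0 R) := slice_snd ⟨h0, h1⟩ (hF (t := T) le_rfl)

/-- the interpolation parameter -/
noncomputable def th : ℝ := μ / (8 * S.M * (S.A2 + 1))

/-- the remainder constant -/
noncomputable def A3 : ℝ := S.A2 * (2 * (S.s * S.δ) + 4 + 1 / S.th)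

lemma inner_est (hγ : 1 < γ) (hμ : 0 < μ) (hvm : 0 < vm) (hv : vm < vp) (hC₀ : 0 < C₀)
    (hK : 0 < K) {t R : ℝ} (h0 : 0 ≤ t) (h1 : t ≤ S.T) (hR1 : 1 ≤ R) :
    (∫ ξ in (0:ℝ)..R, ((1 - ξ / R) ^ 4 * S.src t ξ - (-(4 * (1 - ξ / R) ^ 3 / R)) * S.fl t ξ)) ≤
      -(μ / 2) * (∫ ξ in (0:ℝ)..R, (1 - ξ / R) ^ 4 * (px (px S.ψ) t ξ ^ 2 / S.vv t ξ)) +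
      (S.C1 + 1) * (S.δ ^ 2 * S.m ^ (γ + 2)) * (∫ ξ in (0:ℝ)..R, (1 - ξ / R) ^ 4 * px S.φ t ξ ^ 2) +
      S.A3 / R ^ 2 := by
  have hR : 0 < R := by linarith
  have hA2 := S.A2_nonneg hγ hμ
  have hM := S.M_pos
  have hth : 0 < S.th := by unfold th; positivity
  have ηc : Continuous (fun x : ℝ => 1 - x / R) := by fun_prop
  have csrc : ContinuousOn (S.src t) (Set.Icc 0 R) := sliceR h0 h1 (S.c_src hvm)
  have cfl : ContinuousOn (S.fl t) (Set.Icc 0 R) := sliceR h0 h1 (S.c_fl hγ hvm)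
  have cgv : ContinuousOn (fun ξ => px (px S.ψ) t ξ ^ 2 / S.vv t ξ) (Set.Icc 0 R) :=
    sliceR (F := fun τ ξ => px (px S.ψ) τ ξ ^ 2 / S.vv τ ξ) h0 h1 S.c_gv
  have cpair : Continuous fun ξ : ℝ => (t, ξ) := by fun_prop
  have cf : Continuous (px S.φ t) := S.c_f.comp cpair
  have cg : Continuous (px S.ψ t) := S.c_g.comp cpair
  have cgx : Continuous (px (px S.ψ) t) := S.c_gx.comp cpair
  have i0 : IntervalIntegrable (fun ξ => (1 - ξ / R) ^ 4 * S.src t ξ -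
      (-(4 * (1 - ξ / R) ^ 3 / R)) * S.fl t ξ) volume 0 R :=
    ii_of_contOn hR.le (((ηc.pow 4).continuousOn.mul csrc).sub
      (((continuous_const.mul (ηc.pow 3)).div_const R).neg.continuousOn.mul cfl))
  have i1 : IntervalIntegrable (fun ξ => (1 - ξ / R) ^ 4 * (px (px S.ψ) t ξ ^ 2 / S.vv t ξ))
      volume 0 R := ii_of_contOn hR.le ((ηc.pow 4).continuousOn.mul cgv)
  have i2 : IntervalIntegrable (fun ξ => (1 - ξ / R) ^ 4 * px S.φ t ξ ^ 2) volume 0 R :=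
    ((ηc.pow 4).mul (cf.pow 2)).intervalIntegrable _ _
  have i3 : IntervalIntegrable (fun ξ => (1 - ξ / R) ^ 2 * px S.ψ t ξ ^ 2) volume 0 R :=
    ((ηc.pow 2).mul (cg.pow 2)).intervalIntegrable _ _
  have i4 : IntervalIntegrable (fun ξ => (1 - ξ / R) ^ 4 * px (px S.ψ) t ξ ^ 2) volume 0 R :=
    ((ηc.pow 4).mul (cgx.pow 2)).intervalIntegrable _ _
  have hmono := intervalIntegral.integral_mono_on hR.le i0
    ((i1.const_mul (-(5 / 8 * μ))).add
      ((i2.const_mul ((S.C1 + 1) * (S.δ ^ 2 * S.m ^ (γ + 2)))).add (i3.const_mul (S.A2 / R ^ 2))))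
    (fun ξ hξ => S.pointwise_est hγ hμ hvm hv hC₀ hK h0 h1 hξ.1 hR hξ.2)
  rw [intervalIntegral.integral_add (i1.const_mul _) ((i2.const_mul _).add (i3.const_mul _)),
    intervalIntegral.integral_add (i2.const_mul _) (i3.const_mul _),
    intervalIntegral.integral_const_mul, intervalIntegral.integral_const_mul,
    intervalIntegral.integral_const_mul] at hmono
  have hg0 : |px S.ψ t 0| ≤ S.s * S.δ := by
    have hB := S.Bd_pos t
    have hs := S.hspos
    rw [S.g_zero h0 h1, abs_of_pos (mul_pos hs hB)]
    gcongr
    have := S.Vs_lt t 0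
    rw [Vs_zero] at this
    rw [S.hδ]; linarith
  have hint := interpolation hR1 hth (ψ := S.ψ t) (g := px S.ψ t) (gx := px (px S.ψ) t)
    (fun x _ => px_hasDerivAt S.hψsm t x) (fun x _ => px_hasDerivAt (px_contDiff S.hψsm) t x)
    cgx.continuousOn (fun x hx => S.psi_abs_le h0 h1 hx.1) hg0
  have hint2 := mul_le_mul_of_nonneg_left hint hA2
  have habs : S.A2 * (S.th * ∫ ξ in (0:ℝ)..R, (1 - ξ / R) ^ 4 * px (px S.ψ) t ξ ^ 2) ≤
      μ / 8 * ∫ ξ in (0:ℝ)..R, (1 - ξ / R) ^ 4 * (px (px S.ψ) t ξ ^ 2 / S.vv t ξ) := by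
    rw [← mul_assoc, ← intervalIntegral.integral_const_mul, ← intervalIntegral.integral_const_mul]
    refine intervalIntegral.integral_mono_on hR.le (i4.const_mul _) (i1.const_mul _) ?_
    intro ξ hξ
    have hvpos := S.vv_pos h0 h1 hξ.1
    have hvM := S.vv_le h0 h1 hξ.1
    have e1 : S.A2 * S.th ≤ μ / 8 * (1 / S.M) := by
      unfold th
      rw [mul_div_assoc', div_le_iff₀ (by positivity)]
      have : μ / 8 * (1 / S.M) * (8 * S.M * (S.A2 + 1)) = μ * (S.A2 + 1) := by field_simp
      rw [this]; nlinarith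
    have e2 : 1 / S.M ≤ 1 / S.vv t ξ := one_div_le_one_div_of_le hvpos hvM
    have hη4 : 0 ≤ (1 - ξ / R) ^ 4 := by
      have : 0 ≤ ((1 - ξ / R) ^ 2) ^ 2 := sq_nonneg _
      nlinarith
    calc _ ≤ (μ / 8 * (1 / S.vv t ξ)) * ((1 - ξ / R) ^ 4 * px (px S.ψ) t ξ ^ 2) := by
          refine mul_le_mul_of_nonneg_right (e1.trans ?_) (mul_nonneg hη4 (sq_nonneg _))
          exact mul_le_mul_of_nonneg_left e2 (by positivity)
      _ = _ := by ring
  have e3 : S.A3 / R ^ 2 = S.A2 * ((2 * (S.s * S.δ) + 4 + 1 / S.th) / R ^ 2) := by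
    unfold A3; ring
  rw [e3]
  have e4 : S.A2 / R ^ 2 * (∫ ξ in (0:ℝ)..R, (1 - ξ / R) ^ 2 * px S.ψ t ξ ^ 2) =
    S.A2 * ((∫ ξ in (0:ℝ)..R, (1 - ξ / R) ^ 2 * px S.ψ t ξ ^ 2) / R ^ 2) := by ring
  rw [e4] at hmono
  linarith

lemma A3_nonneg (hγ : 1 < γ) (hμ : 0 < μ) (hv : vm < vp) : 0 ≤ S.A3 := by
  have hA2 := S.A2_nonneg hγ hμ
  have hM := S.M_pos
  have := S.hspos
  have := S.δ_pos hv
  have hth : 0 < S.th := by unfold th; positivity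
  unfold A3; positivity

lemma core_est (hγ : 1 < γ) (hμ : 0 < μ) (hvm : 0 < vm) (hv : vm < vp) (hC₀ : 0 < C₀)
    (hK : 0 < K) {t R : ℝ} (ht : 0 ≤ t) (htT : t ≤ S.T) (hR1 : 1 ≤ R) :
    (∫ ξ in (0:ℝ)..R, (1 - ξ / R) ^ 4 * S.en t ξ) + μ / 2 * (∫ τ in (0:ℝ)..t,
        ∫ ξ in (0:ℝ)..R, (1 - ξ / R) ^ 4 * (px (px S.ψ) τ ξ ^ 2 / S.vv τ ξ)) ≤
      (∫ ξ in (0:ℝ)..R, (1 - ξ / R) ^ 4 * S.en 0 ξ) + S.C2 * Real.exp (-(S.cm * S.β)) +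
      (S.C1 + 1) * (S.δ ^ 2 * S.m ^ (γ + 2)) *
        (∫ τ in (0:ℝ)..t, ∫ ξ in (0:ℝ)..R, (1 - ξ / R) ^ 4 * px S.φ τ ξ ^ 2) +
      t * (S.A3 / R ^ 2) := by
  have hR : 0 < R := by linarith
  have hw : ∀ x, HasDerivAt (fun x : ℝ => (1 - x / R) ^ 4) (-(4 * (1 - x / R) ^ 3 / R)) x := by
    intro x
    have h1 : HasDerivAt (fun x : ℝ => 1 - x / R) (-(1 / R)) x :=
      ((hasDerivAt_id x).div_const R).const_sub 1
    refine (h1.pow 4).congr_deriv ?_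
    norm_num
    ring
  have hbal := balance ht hR.le hw (by fun_prop) (by simp [div_self hR.ne'])
    (fun τ hτ ξ hξ => S.en_hasDerivAt hγ hvm hτ.1 (hτ.2.trans htT) hξ.1)
    (fun τ hτ ξ hξ => S.fl_hasDerivAt hγ hvm hτ.1 (hτ.2.trans htT) hξ.1)
    (S.c_en hγ hvm htT) (S.c_ent hvm htT) (S.c_flx hvm htT) (S.c_fl hγ hvm htT) (S.c_src hvm htT)
    (fun τ hτ ξ hξ => S.energy_identity hvm hτ.1 (hτ.2.trans htT) hξ.1)
  simp only [zero_div, sub_zero, one_pow, one_mul] at hbal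
  have ηc : Continuous (fun z : ℝ × ℝ => 1 - z.2 / R) := by fun_prop
  have k0 : ContinuousOn (fun τ => ∫ ξ in (0:ℝ)..R, ((1 - ξ / R) ^ 4 * S.src τ ξ -
      (-(4 * (1 - ξ / R) ^ 3 / R)) * S.fl τ ξ)) (Set.Icc 0 t) :=
    continuousOn_param (F := fun τ ξ => ((1 - ξ / R) ^ 4 * S.src τ ξ -
      (-(4 * (1 - ξ / R) ^ 3 / R)) * S.fl τ ξ)) ht hR.le
      (((ηc.pow 4).continuousOn.mul (S.c_src hvm htT)).sub
      (((continuous_const.mul (ηc.pow 3)).div_const R).neg.continuousOn.mul (S.c_fl hγ hvm htT)))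
  have k1 : ContinuousOn (fun τ => ∫ ξ in (0:ℝ)..R, (1 - ξ / R) ^ 4 *
      (px (px S.ψ) τ ξ ^ 2 / S.vv τ ξ)) (Set.Icc 0 t) :=
    continuousOn_param (F := fun τ ξ => (1 - ξ / R) ^ 4 * (px (px S.ψ) τ ξ ^ 2 / S.vv τ ξ)) ht hR.le
      ((ηc.pow 4).continuousOn.mul (S.c_gv htT))
  have k2 : ContinuousOn (fun τ => ∫ ξ in (0:ℝ)..R, (1 - ξ / R) ^ 4 * px S.φ τ ξ ^ 2)
      (Set.Icc 0 t) :=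
    continuousOn_param (F := fun τ ξ => (1 - ξ / R) ^ 4 * px S.φ τ ξ ^ 2) ht hR.le
      ((ηc.pow 4).mul (S.c_f.pow 2)).continuousOn
  have j0 := ii_of_contOn ht k0
  have j1 := ii_of_contOn ht k1
  have j2 := ii_of_contOn ht k2
  have jb : IntervalIntegrable (fun τ => -S.fl τ 0) volume 0 t :=
    ii_of_contOn ht (slice0 (S.c_fl hγ hvm htT)).neg
  rw [intervalIntegral.integral_add jb j0] at hbal
  have hb := S.boundary_est hγ hvm hv hC₀ hK ht htT
  have hmono := intervalIntegral.integral_mono_on ht j0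
    (((j1.const_mul (-(μ / 2))).add
      (j2.const_mul ((S.C1 + 1) * (S.δ ^ 2 * S.m ^ (γ + 2))))).add
      (intervalIntegrable_const (c := S.A3 / R ^ 2)))
    (fun τ hτ => S.inner_est hγ hμ hvm hv hC₀ hK hτ.1 (hτ.2.trans htT) hR1)
  rw [intervalIntegral.integral_add ((j1.const_mul _).add (j2.const_mul _)) intervalIntegrable_const,
    intervalIntegral.integral_add (j1.const_mul _) (j2.const_mul _),
    intervalIntegral.integral_const_mul, intervalIntegral.integral_const_mul,
    intervalIntegral.integral_const, sub_zero, smul_eq_mul] at hmono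
  linarith

end Core

end NSSetting

namespace NSSetting

section Final

variable {γ μ vm vp C₀ K : ℝ} (S : NSSetting γ μ vm vp C₀ K)

lemma slice_cont {F : ℝ → ℝ → ℝ} (hF : Continuous (Function.uncurry F)) (t : ℝ) :
    Continuous (F t) := hF.comp (by fun_prop : Continuous fun ξ : ℝ => (t, ξ))

lemma i_f {t : ℝ} (h0 : 0 ≤ t) (h1 : t ≤ S.T) :
    IntegrableOn (fun ξ => px S.φ t ξ ^ 2) (Set.Ioi 0) := by
  refine (S.hInt t h0 h1).mono' ((slice_cont S.c_f t).pow 2).aestronglyMeasurable ?_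
  refine Eventually.of_forall fun ξ => ?_
  rw [Real.norm_of_nonneg (sq_nonneg _)]
  nlinarith [sq_nonneg (S.φ t ξ), sq_nonneg (S.ψ t ξ), sq_nonneg (px S.ψ t ξ),
    sq_nonneg (px (px S.φ) t ξ), sq_nonneg (px (px S.ψ) t ξ), sq_nonneg (px (px (px S.ψ)) t ξ)]

lemma i_g {t : ℝ} (h0 : 0 ≤ t) (h1 : t ≤ S.T) :
    IntegrableOn (fun ξ => px S.ψ t ξ ^ 2) (Set.Ioi 0) := by
  refine (S.hInt t h0 h1).mono' ((slice_cont S.c_g t).pow 2).aestronglyMeasurable ?_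
  refine Eventually.of_forall fun ξ => ?_
  rw [Real.norm_of_nonneg (sq_nonneg _)]
  nlinarith [sq_nonneg (S.φ t ξ), sq_nonneg (S.ψ t ξ), sq_nonneg (px S.φ t ξ),
    sq_nonneg (px (px S.φ) t ξ), sq_nonneg (px (px S.ψ) t ξ), sq_nonneg (px (px (px S.ψ)) t ξ)]

lemma i_gx {t : ℝ} (h0 : 0 ≤ t) (h1 : t ≤ S.T) :
    IntegrableOn (fun ξ => px (px S.ψ) t ξ ^ 2) (Set.Ioi 0) := by
  refine (S.hInt t h0 h1).mono' ((slice_cont S.c_gx t).pow 2).aestronglyMeasurable ?_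
  refine Eventually.of_forall fun ξ => ?_
  rw [Real.norm_of_nonneg (sq_nonneg _)]
  nlinarith [sq_nonneg (S.φ t ξ), sq_nonneg (S.ψ t ξ), sq_nonneg (px S.φ t ξ),
    sq_nonneg (px (px S.φ) t ξ), sq_nonneg (px S.ψ t ξ), sq_nonneg (px (px (px S.ψ)) t ξ)]

lemma i_gv {t : ℝ} (h0 : 0 ≤ t) (h1 : t ≤ S.T) :
    IntegrableOn (fun ξ => px (px S.ψ) t ξ ^ 2 / S.vv t ξ) (Set.Ioi 0) := by
  refine ((S.i_gx h0 h1).const_mul S.m).mono' ?_ ?_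
  · exact (((slice_cont S.c_gx t).pow 2).measurable.div
      (slice_cont S.c_vv t).measurable).aestronglyMeasurable
  · refine (ae_restrict_iff' measurableSet_Ioi).2 (Eventually.of_forall fun ξ hξ => ?_)
    have hξ' : 0 ≤ ξ := le_of_lt hξ
    have hp := S.vv_pos h0 h1 hξ'
    have hge := S.vv_ge h0 h1 hξ'
    have hm := S.m_pos
    rw [Real.norm_of_nonneg (by positivity), div_le_iff₀ hp]
    have h2 : 1 ≤ S.m * S.vv t ξ := by
      rw [div_le_iff₀ hm] at hge; linarith
    nlinarith [sq_nonneg (px (px S.ψ) t ξ)]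

lemma i_Phi (hγ : 1 < γ) (hvm : 0 < vm) {t : ℝ} (h0 : 0 ≤ t) (h1 : t ≤ S.T) :
    IntegrableOn (fun ξ => Phi γ (S.vv t ξ) (S.Vs t ξ)) (Set.Ioi 0) := by
  refine ((S.i_f h0 h1).const_mul (γ * (1 / (S.m * max 1 (1 / vm))) ^ (-γ - 1))).mono' ?_ ?_
  · refine ContinuousOn.aestronglyMeasurable ?_ measurableSet_Ioi
    intro ξ hξ
    exact (Phi_hasDerivAt hγ (S.vv_hasDerivAt_x t ξ) (S.Vs_hasDerivAt_x t ξ)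
      (S.vv_pos h0 h1 (le_of_lt hξ)) (hvm.trans (S.Vs_gt t ξ))).continuousAt.continuousWithinAt
  · refine (ae_restrict_iff' measurableSet_Ioi).2 (Eventually.of_forall fun ξ hξ => ?_)
    have hξ' : 0 ≤ ξ := le_of_lt hξ
    rw [Real.norm_of_nonneg (Phi_nonneg hγ (S.vv_pos h0 h1 hξ') (hvm.trans (S.Vs_gt t ξ)))]
    have h := Phi_upper hγ S.low_pos (S.low_le_v (vm := vm) h0 h1 hξ') (S.low_le_V hvm t ξ)
    have e : S.vv t ξ - S.Vs t ξ = px S.φ t ξ := by rw [vv_eq]; ring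
    rw [e] at h
    exact h

lemma i_en (hγ : 1 < γ) (hvm : 0 < vm) {t : ℝ} (h0 : 0 ≤ t) (h1 : t ≤ S.T) :
    IntegrableOn (S.en t) (Set.Ioi 0) :=
  (S.i_Phi hγ hvm h0 h1).add ((S.i_g h0 h1).div_const 2)

lemma int_en (hγ : 1 < γ) (hvm : 0 < vm) {t : ℝ} (h0 : 0 ≤ t) (h1 : t ≤ S.T) :
    ∫ ξ in Set.Ioi (0:ℝ), S.en t ξ =
      (∫ ξ in Set.Ioi (0:ℝ), Phi γ (S.vv t ξ) (S.Vs t ξ)) + nsq (px S.ψ t) / 2 := by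
  unfold en nsq
  rw [integral_add (S.i_Phi hγ hvm h0 h1) ((S.i_g h0 h1).div_const 2), integral_div]

/-- the weighted norm of the first derivative is continuous in time -/
lemma c_FR {t R : ℝ} (ht : 0 ≤ t) (hR : 0 ≤ R) :
    ContinuousOn (fun τ => ∫ ξ in (0:ℝ)..R, (1 - ξ / R) ^ 4 * px S.φ τ ξ ^ 2) (Set.Icc 0 t) := by
  have ηc : Continuous (fun z : ℝ × ℝ => 1 - z.2 / R) := by fun_prop
  exact continuousOn_param (F := fun τ ξ => (1 - ξ / R) ^ 4 * px S.φ τ ξ ^ 2) ht hR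
      ((ηc.pow 4).mul (S.c_f.pow 2)).continuousOn

lemma c_DR {t R : ℝ} (ht : 0 ≤ t) (htT : t ≤ S.T) (hR : 0 ≤ R) :
    ContinuousOn (fun τ => ∫ ξ in (0:ℝ)..R, (1 - ξ / R) ^ 4 *
      (px (px S.ψ) τ ξ ^ 2 / S.vv τ ξ)) (Set.Icc 0 t) := by
  have ηc : Continuous (fun z : ℝ × ℝ => 1 - z.2 / R) := by fun_prop
  exact continuousOn_param (F := fun τ ξ => (1 - ξ / R) ^ 4 *
    (px (px S.ψ) τ ξ ^ 2 / S.vv τ ξ)) ht hR ((ηc.pow 4).continuousOn.mul (S.c_gv htT))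

lemma pow4_nonneg (x : ℝ) : 0 ≤ x ^ 4 := by positivity

lemma DR_nonneg {t R : ℝ} (h0 : 0 ≤ t) (h1 : t ≤ S.T) (hR : 0 ≤ R) :
    0 ≤ ∫ ξ in (0:ℝ)..R, (1 - ξ / R) ^ 4 * (px (px S.ψ) t ξ ^ 2 / S.vv t ξ) := by
  refine intervalIntegral.integral_nonneg hR fun ξ hξ => ?_
  have := S.vv_pos h0 h1 hξ.1
  have := pow4_nonneg (1 - ξ / R)
  positivity

lemma C1_nonneg (hγ : 1 < γ) (hμ : 0 < μ) (hC₀ : 0 < C₀) : 0 ≤ S.C1 := by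
  have := S.hspos
  unfold C1; positivity

lemma C2_nonneg (hvm : 0 < vm) (hv : vm < vp) (hC₀ : 0 < C₀) (hK : 0 < K) : 0 ≤ S.C2 := by
  have := S.hspos
  have := S.δ_pos hv
  unfold C2; positivity

/-- uniform bound of the L2 norm of the first derivative on the time interval -/
lemma f_bound (hγ : 1 < γ) (hμ : 0 < μ) (hvm : 0 < vm) (hv : vm < vp) (hC₀ : 0 < C₀)
    (hK : 0 < K) : ∃ B : ℝ, ∀ t, 0 ≤ t → t ≤ S.T →
      ∫ ξ in Set.Ioi (0:ℝ), px S.φ t ξ ^ 2 ≤ B := by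
  have hT := S.hTpos
  have hC1 := S.C1_nonneg hγ hμ hC₀
  have hC2 := S.C2_nonneg hvm hv hC₀ hK
  have hA3 := S.A3_nonneg hγ hμ hv
  have hm := S.m_pos
  set B := max S.M vp with hB
  have hB0 : 0 < B := lt_max_of_lt_left S.M_pos
  set c := γ * B ^ (-γ - 1) / 2 with hc
  have hc0 : 0 < c := by positivity
  set A := (∫ ξ in Set.Ioi (0:ℝ), S.en 0 ξ) + S.C2 * Real.exp (-(S.cm * S.β)) + S.T * S.A3 with hA
  have hen0 : 0 ≤ ∫ ξ in Set.Ioi (0:ℝ), S.en 0 ξ :=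
    setIntegral_nonneg measurableSet_Ioi
      fun ξ hξ => S.en_nonneg hγ hvm le_rfl hT.le (le_of_lt hξ)
  have hA0 : 0 ≤ A := by positivity
  set D := (S.C1 + 1) * (S.δ ^ 2 * S.m ^ (γ + 2)) with hD
  have hD0 : 0 ≤ D := by positivity
  refine ⟨A / c * Real.exp (D / c * S.T), fun t h0 h1 => ?_⟩
  refine le_of_tendsto (cutoff_tendsto (S.i_f h0 h1)) (Eventually.of_forall fun n => ?_)
  have hn1 : (1:ℝ) ≤ n + 1 := by
    have : (0:ℝ) ≤ n := Nat.cast_nonneg n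
    linarith
  have hn0 : (0:ℝ) ≤ n + 1 := by linarith
  refine gronwall_int hT.le (S.c_FR hT.le hn0) (by positivity) (by positivity) ?_ t ⟨h0, h1⟩
  intro τ hτ
  have hcore := S.core_est hγ hμ hvm hv hC₀ hK hτ.1 hτ.2 hn1
  have hdiss : 0 ≤ ∫ r in (0:ℝ)..τ, ∫ ξ in (0:ℝ)..(n + 1 : ℝ), (1 - ξ / (n + 1)) ^ 4 *
      (px (px S.ψ) r ξ ^ 2 / S.vv r ξ) :=
    intervalIntegral.integral_nonneg hτ.1 fun r hr => S.DR_nonneg hr.1 (hr.2.trans hτ.2) hn0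
  have hini := cutoff_le (S.i_en hγ hvm le_rfl hT.le)
    (fun ξ hξ => S.en_nonneg hγ hvm le_rfl hT.le hξ) n
  have hrem : τ * (S.A3 / ((n:ℝ) + 1) ^ 2) ≤ S.T * S.A3 := by
    have : S.A3 / ((n:ℝ) + 1) ^ 2 ≤ S.A3 := div_le_self hA3 (by nlinarith)
    have h3 : 0 ≤ S.A3 / ((n:ℝ) + 1) ^ 2 := by positivity
    exact mul_le_mul hτ.2 this h3 hT.le
  have ηc : Continuous (fun x : ℝ => 1 - x / ((n:ℝ) + 1)) := by fun_prop
  have hlow : c * (∫ ξ in (0:ℝ)..(n + 1 : ℝ), (1 - ξ / (n + 1)) ^ 4 * px S.φ τ ξ ^ 2) ≤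
      ∫ ξ in (0:ℝ)..(n + 1 : ℝ), (1 - ξ / (n + 1)) ^ 4 * S.en τ ξ := by
    rw [← intervalIntegral.integral_const_mul]
    refine intervalIntegral.integral_mono_on hn0
      ((continuous_const.mul ((ηc.pow 4).mul ((slice_cont S.c_f τ).pow 2))).intervalIntegrable _ _)
      (ii_of_contOn hn0 ((ηc.pow 4).continuousOn.mul (sliceR hτ.1 hτ.2 (S.c_en hγ hvm)))) ?_
    intro ξ hξ
    have hP := Phi_lower hγ (S.vv_pos hτ.1 hτ.2 hξ.1) (hvm.trans (S.Vs_gt τ ξ))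
      ((S.vv_le hτ.1 hτ.2 hξ.1).trans (le_max_left S.M vp))
      ((S.Vs_lt τ ξ).le.trans (le_max_right S.M vp))
    have e : S.vv τ ξ - S.Vs τ ξ = px S.φ τ ξ := by rw [vv_eq]; ring
    rw [e, ← hB, ← hc] at hP
    have hle : c * px S.φ τ ξ ^ 2 ≤ S.en τ ξ := by
      unfold en
      have := sq_nonneg (px S.ψ τ ξ)
      linarith
    calc _ = (1 - ξ / ((n:ℝ) + 1)) ^ 4 * (c * px S.φ τ ξ ^ 2) := by ring
      _ ≤ _ := mul_le_mul_of_nonneg_left hle (pow4_nonneg _)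
  have hfin : c * (∫ ξ in (0:ℝ)..(n + 1 : ℝ), (1 - ξ / (n + 1)) ^ 4 * px S.φ τ ξ ^ 2) ≤
      A + D * ∫ r in (0:ℝ)..τ, ∫ ξ in (0:ℝ)..(n + 1 : ℝ), (1 - ξ / (n + 1)) ^ 4 * px S.φ r ξ ^ 2 := by
    have := mul_nonneg (by positivity : 0 ≤ μ / 2) hdiss
    linarith
  calc _ ≤ (A + D * ∫ r in (0:ℝ)..τ, ∫ ξ in (0:ℝ)..(n + 1 : ℝ),
          (1 - ξ / (n + 1)) ^ 4 * px S.φ r ξ ^ 2) / c := by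
        rw [le_div_iff₀ hc0]; linarith
    _ = _ := by ring

lemma ii_f (hγ : 1 < γ) (hμ : 0 < μ) (hvm : 0 < vm) (hv : vm < vp) (hC₀ : 0 < C₀)
    (hK : 0 < K) {t : ℝ} (h0 : 0 ≤ t) (h1 : t ≤ S.T) :
    IntervalIntegrable (fun τ => ∫ ξ in Set.Ioi (0:ℝ), px S.φ τ ξ ^ 2) volume 0 t := by
  obtain ⟨B, hB⟩ := S.f_bound hγ hμ hvm hv hC₀ hK
  rw [intervalIntegrable_iff_integrableOn_Ioc_of_le h0]
  have hmeas : StronglyMeasurable (fun τ => ∫ ξ in Set.Ioi (0:ℝ), px S.φ τ ξ ^ 2) :=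
    StronglyMeasurable.integral_prod_right (f := fun τ ξ => px S.φ τ ξ ^ 2)
      (S.c_f.pow 2).stronglyMeasurable
  refine Measure.integrableOn_of_bounded (M := B) (by simp) hmeas.aestronglyMeasurable ?_
  refine (ae_restrict_iff' measurableSet_Ioc).2 (Eventually.of_forall fun τ hτ => ?_)
  rw [Real.norm_of_nonneg (integral_nonneg fun ξ => sq_nonneg _)]
  exact hB τ hτ.1.le (hτ.2.trans h1)

/-- the estimate with explicit constants -/
lemma final_est (hγ : 1 < γ) (hμ : 0 < μ) (hvm : 0 < vm) (hv : vm < vp) (hC₀ : 0 < C₀)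
    (hK : 0 < K) {t : ℝ} (h0 : 0 ≤ t) (h1 : t ≤ S.T) :
    (∫ ξ in Set.Ioi (0:ℝ), S.en t ξ) + μ / 2 * (∫ τ in (0:ℝ)..t,
        ∫ ξ in Set.Ioi (0:ℝ), px (px S.ψ) τ ξ ^ 2 / S.vv τ ξ) ≤
      (∫ ξ in Set.Ioi (0:ℝ), S.en 0 ξ) + S.C2 * Real.exp (-(S.cm * S.β)) +
      (S.C1 + 1) * (S.δ ^ 2 * S.m ^ (γ + 2)) *
        (∫ τ in (0:ℝ)..t, ∫ ξ in Set.Ioi (0:ℝ), px S.φ τ ξ ^ 2) := by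
  have hT := S.hTpos
  have hC1 := S.C1_nonneg hγ hμ hC₀
  have hm := S.m_pos
  have hn1 : ∀ n : ℕ, (1:ℝ) ≤ n + 1 := fun n => by
    have : (0:ℝ) ≤ n := Nat.cast_nonneg n
    linarith
  have hn0 : ∀ n : ℕ, (0:ℝ) ≤ n + 1 := fun n => by linarith [hn1 n]
  set Y := (∫ ξ in Set.Ioi (0:ℝ), S.en 0 ξ) + S.C2 * Real.exp (-(S.cm * S.β)) +
      (S.C1 + 1) * (S.δ ^ 2 * S.m ^ (γ + 2)) *
        (∫ τ in (0:ℝ)..t, ∫ ξ in Set.Ioi (0:ℝ), px S.φ τ ξ ^ 2) with hY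
  have hcore : ∀ n : ℕ, (∫ ξ in (0:ℝ)..(n + 1 : ℝ), (1 - ξ / (n + 1)) ^ 4 * S.en t ξ) +
      μ / 2 * (∫ τ in (0:ℝ)..t, ∫ ξ in (0:ℝ)..(n + 1 : ℝ),
        (1 - ξ / (n + 1)) ^ 4 * (px (px S.ψ) τ ξ ^ 2 / S.vv τ ξ)) ≤
      Y + t * (S.A3 / ((n:ℝ) + 1) ^ 2) := by
    intro n
    have h := S.core_est hγ hμ hvm hv hC₀ hK h0 h1 (hn1 n)
    have hini := cutoff_le (S.i_en hγ hvm le_rfl hT.le)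
      (fun ξ hξ => S.en_nonneg hγ hvm le_rfl hT.le hξ) n
    have hf : (∫ τ in (0:ℝ)..t, ∫ ξ in (0:ℝ)..(n + 1 : ℝ), (1 - ξ / (n + 1)) ^ 4 * px S.φ τ ξ ^ 2) ≤
        ∫ τ in (0:ℝ)..t, ∫ ξ in Set.Ioi (0:ℝ), px S.φ τ ξ ^ 2 :=
      intervalIntegral.integral_mono_on h0 (ii_of_contOn h0 (S.c_FR h0 (hn0 n)))
        (S.ii_f hγ hμ hvm hv hC₀ hK h0 h1)
        (fun τ hτ => cutoff_le (S.i_f hτ.1 (hτ.2.trans h1)) (fun ξ _ => sq_nonneg _) n)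
    have hf2 := mul_le_mul_of_nonneg_left hf
      (by positivity : 0 ≤ (S.C1 + 1) * (S.δ ^ 2 * S.m ^ (γ + 2)))
    linarith
  have hx := cutoff_tendsto (S.i_en hγ hvm h0 h1)
  have hy : Tendsto (fun n : ℕ => Y + t * (S.A3 / ((n:ℝ) + 1) ^ 2)) atTop (nhds Y) := by
    have h2 : Tendsto (fun n : ℕ => t * S.A3 * ((1 / ((n:ℝ) + 1)) ^ 2)) atTop
        (nhds (t * S.A3 * 0 ^ 2)) :=
      (tendsto_one_div_add_atTop_nhds_zero_nat.pow 2).const_mul _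
    have h3 := h2.const_add Y
    simp only [ne_eq, OfNat.ofNat_ne_zero, not_false_eq_true, zero_pow, mul_zero, add_zero] at h3
    refine h3.congr fun n => ?_
    rw [div_pow, one_pow]
    ring
  by_cases hii : IntervalIntegrable
      (fun τ => ∫ ξ in Set.Ioi (0:ℝ), px (px S.ψ) τ ξ ^ 2 / S.vv τ ξ) volume 0 t
  · have hd : Tendsto (fun n : ℕ => ∫ τ in (0:ℝ)..t, ∫ ξ in (0:ℝ)..(n + 1 : ℝ),
        (1 - ξ / (n + 1)) ^ 4 * (px (px S.ψ) τ ξ ^ 2 / S.vv τ ξ)) atTop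
        (nhds (∫ τ in (0:ℝ)..t, ∫ ξ in Set.Ioi (0:ℝ), px (px S.ψ) τ ξ ^ 2 / S.vv τ ξ)) := by
      refine intervalIntegral.tendsto_integral_filter_of_dominated_convergence
        (fun τ => ∫ ξ in Set.Ioi (0:ℝ), px (px S.ψ) τ ξ ^ 2 / S.vv τ ξ) ?_ ?_ hii ?_
      · refine Eventually.of_forall fun n => ?_
        rw [Set.uIoc_of_le h0]
        exact ((S.c_DR h0 h1 (hn0 n)).mono Set.Ioc_subset_Icc_self).aestronglyMeasurable
          measurableSet_Ioc
      · refine Eventually.of_forall fun n => Eventually.of_forall fun τ hτ => ?_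
        rw [Set.uIoc_of_le h0] at hτ
        have hτT := hτ.2.trans h1
        rw [Real.norm_of_nonneg (S.DR_nonneg hτ.1.le hτT (hn0 n))]
        refine cutoff_le (S.i_gv hτ.1.le hτT) (fun ξ hξ => ?_) n
        have := S.vv_pos hτ.1.le hτT hξ
        positivity
      · refine Eventually.of_forall fun τ hτ => ?_
        rw [Set.uIoc_of_le h0] at hτ
        exact cutoff_tendsto (S.i_gv hτ.1.le (hτ.2.trans h1))
    exact le_of_tendsto_of_tendsto' (hx.add (hd.const_mul (μ / 2))) hy hcore
  · rw [intervalIntegral.integral_undef hii, mul_zero, add_zero]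
    refine le_of_tendsto_of_tendsto' hx hy fun n => ?_
    have hdiss : 0 ≤ ∫ r in (0:ℝ)..t, ∫ ξ in (0:ℝ)..(n + 1 : ℝ), (1 - ξ / (n + 1)) ^ 4 *
        (px (px S.ψ) r ξ ^ 2 / S.vv r ξ) :=
      intervalIntegral.integral_nonneg h0 fun r hr => S.DR_nonneg hr.1 (hr.2.trans h1) (hn0 n)
    have := mul_nonneg (by positivity : 0 ≤ μ / 2) hdiss
    have := hcore n
    linarith

lemma s_eq (hv : vm < vp) : S.s = Real.sqrt ((vm ^ (-γ) - vp ^ (-γ)) / (vp - vm)) := by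
  have h1 := S.rh1
  have h2 := S.rh2
  have hd : 0 < vp - vm := by linarith
  have e : (vm ^ (-γ) - vp ^ (-γ)) / (vp - vm) = S.s ^ 2 := by
    rw [div_eq_iff hd.ne']
    have : S.s * (S.s * (vp - vm)) = S.s * (S.um - S.up) := by rw [h1]
    linarith
  rw [e, Real.sqrt_sq S.hspos.le]

end Final

end NSSetting

/-- First-order energy estimate: `∫Φ(v,V)(t) + ‖ψ_ξ(t)‖² + ∫₀ᵗ∫ ψ_ξξ²/v` is controlled
by its initial value, `e^(−c₋β)` and `δ²m^(γ+2)∫₀ᵗ∫ φ_ξ²`. -/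
theorem first_order_energy_estimate (γ μ vm vp C₀ K : ℝ) (hγ : 1 < γ) (hμ : 0 < μ)
    (hvm : 0 < vm) (hv : vm < vp) (hC₀ : 0 < C₀) (hK : 0 < K) :
    ∃ C > 0, ∀ S : NSSetting γ μ vm vp C₀ K,
      ∀ t : ℝ, 0 ≤ t → t ≤ S.T →
        (∫ ξ in Set.Ioi (0:ℝ), Phi γ (S.vv t ξ) (S.V (S.sh t ξ))) + nsq (px S.ψ t) +
            (∫ τ in (0:ℝ)..t, ∫ ξ in Set.Ioi (0:ℝ), (px (px S.ψ) τ ξ) ^ 2 / S.vv τ ξ) ≤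
          C * ((∫ ξ in Set.Ioi (0:ℝ), Phi γ (S.vv 0 ξ) (S.V (S.sh 0 ξ))) + nsq (px S.ψ 0) +
            Real.exp (-(S.cm * S.β)) +
            S.δ ^ 2 * S.m ^ (γ + 2) *
              ∫ τ in (0:ℝ)..t, ∫ ξ in Set.Ioi (0:ℝ), (px S.φ τ ξ) ^ 2) := by
  set s0 := Real.sqrt ((vm ^ (-γ) - vp ^ (-γ)) / (vp - vm)) with hs0
  set δ0 := vp - vm with hδ0
  have hδp : 0 < δ0 := by rw [hδ0]; linarith
  have hs0n : 0 ≤ s0 := Real.sqrt_nonneg _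
  set K1 := μ * s0 ^ 2 * C₀ ^ 2 * δ0 ^ 2 / vm ^ 2 +
    s0 * C₀ * (γ * (γ + 1) * (max 1 (1 / vm)) ^ (γ + 2)) with hK1
  set K2 := vm ^ (-γ) * C₀ * Real.exp (K ^ 2) * K + 3 * s0 * C₀ * δ0 * Real.exp (K ^ 2) with hK2
  have hK1n : 0 ≤ K1 := by positivity
  have hK2n : 0 ≤ K2 := by positivity
  refine ⟨(2 + 2 / μ) * (1 + K2 + (K1 + 1)), by positivity, fun S t h0 h1 => ?_⟩
  have hT := S.hTpos
  have eC1 : S.C1 = K1 := by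
    unfold NSSetting.C1; rw [S.s_eq hv, S.hδ]
  have eC2 : S.C2 = K2 := by
    unfold NSSetting.C2; rw [S.s_eq hv, S.hδ]
  have hfin := S.final_est hγ hμ hvm hv hC₀ hK h0 h1
  rw [S.int_en hγ hvm h0 h1, S.int_en hγ hvm le_rfl hT.le, eC1, eC2] at hfin
  change (∫ ξ in Set.Ioi (0:ℝ), Phi γ (S.vv t ξ) (S.Vs t ξ)) + nsq (px S.ψ t) +
            (∫ τ in (0:ℝ)..t, ∫ ξ in Set.Ioi (0:ℝ), (px (px S.ψ) τ ξ) ^ 2 / S.vv τ ξ) ≤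
          _ * ((∫ ξ in Set.Ioi (0:ℝ), Phi γ (S.vv 0 ξ) (S.Vs 0 ξ)) + nsq (px S.ψ 0) +
            Real.exp (-(S.cm * S.β)) +
            S.δ ^ 2 * S.m ^ (γ + 2) *
              ∫ τ in (0:ℝ)..t, ∫ ξ in Set.Ioi (0:ℝ), (px S.φ τ ξ) ^ 2)
  have hPhi : ∀ r, 0 ≤ r → r ≤ S.T →
      0 ≤ ∫ ξ in Set.Ioi (0:ℝ), Phi γ (S.vv r ξ) (S.Vs r ξ) := fun r hr0 hr1 =>
    setIntegral_nonneg measurableSet_Ioi fun ξ hξ =>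
      Phi_nonneg hγ (S.vv_pos hr0 hr1 (le_of_lt hξ)) (hvm.trans (S.Vs_gt r ξ))
  have hP0 := hPhi 0 le_rfl hT.le
  have hPt := hPhi t h0 h1
  have hn0 : 0 ≤ nsq (px S.ψ 0) := integral_nonneg fun ξ => sq_nonneg _
  have hnt : 0 ≤ nsq (px S.ψ t) := integral_nonneg fun ξ => sq_nonneg _
  have hD : 0 ≤ ∫ τ in (0:ℝ)..t, ∫ ξ in Set.Ioi (0:ℝ), (px (px S.ψ) τ ξ) ^ 2 / S.vv τ ξ :=
    intervalIntegral.integral_nonneg h0 fun τ hτ =>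
      setIntegral_nonneg measurableSet_Ioi fun ξ hξ =>
        div_nonneg (sq_nonneg _) (S.vv_pos hτ.1 (hτ.2.trans h1) (le_of_lt hξ)).le
  have hI : 0 ≤ ∫ τ in (0:ℝ)..t, ∫ ξ in Set.Ioi (0:ℝ), (px S.φ τ ξ) ^ 2 :=
    intervalIntegral.integral_nonneg h0 fun τ _ => integral_nonneg fun ξ => sq_nonneg _
  have hm := S.m_pos
  have hJ : 0 ≤ S.δ ^ 2 * S.m ^ (γ + 2) *
      ∫ τ in (0:ℝ)..t, ∫ ξ in Set.Ioi (0:ℝ), (px S.φ τ ξ) ^ 2 := by positivity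
  have hE := (Real.exp_pos (-(S.cm * S.β))).le
  rw [mul_assoc (K1 + 1)] at hfin
  generalize (S.δ ^ 2 * S.m ^ (γ + 2) *
      ∫ τ in (0:ℝ)..t, ∫ ξ in Set.Ioi (0:ℝ), (px S.φ τ ξ) ^ 2) = J at *
  generalize (∫ τ in (0:ℝ)..t, ∫ ξ in Set.Ioi (0:ℝ), (px (px S.ψ) τ ξ) ^ 2 / S.vv τ ξ) = D at *
  generalize (∫ ξ in Set.Ioi (0:ℝ), Phi γ (S.vv 0 ξ) (S.Vs 0 ξ)) = P0 at *
  generalize (∫ ξ in Set.Ioi (0:ℝ), Phi γ (S.vv t ξ) (S.Vs t ξ)) = Pt at *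
  generalize nsq (px S.ψ 0) = n0 at *
  generalize nsq (px S.ψ t) = nt at *
  generalize Real.exp (-(S.cm * S.β)) = E at *
  have hL : Pt + nt + D ≤ (2 + 2 / μ) * (Pt + nt / 2 + μ / 2 * D) := by
    have e : (2 + 2 / μ) * (Pt + nt / 2 + μ / 2 * D) =
        2 * Pt + nt + μ * D + 2 / μ * (Pt + nt / 2) + D := by field_simp; ring
    rw [e]
    have h3 : 0 ≤ 2 / μ * (Pt + nt / 2) := by positivity
    have h4 : 0 ≤ μ * D := by positivity
    linarith
  have hR : P0 + n0 / 2 + K2 * E + (K1 + 1) * J ≤ (1 + K2 + (K1 + 1)) * (P0 + n0 + E + J) := by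
    have a1 := mul_nonneg hK1n hP0
    have a2 := mul_nonneg hK1n hn0
    have a3 := mul_nonneg hK1n hE
    have a4 := mul_nonneg hK2n hP0
    have a5 := mul_nonneg hK2n hn0
    have a6 := mul_nonneg hK2n hJ
    nlinarith
  calc _ ≤ (2 + 2 / μ) * (Pt + nt / 2 + μ / 2 * D) := hL
    _ ≤ (2 + 2 / μ) * ((1 + K2 + (K1 + 1)) * (P0 + n0 + E + J)) :=
        mul_le_mul_of_nonneg_left (hfin.trans hR) (by positivity)
    _ = _ := by ring
end
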